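/- Let n ≥ 1, let b ≥ 1 be an integer, and let α ∈ (1/2, 1] satisfy 2α − 1 < n and nb > (2α−1)(b+1). Let p(·) ∈ P^log(ℝ^n) with p⁻ > b+1 and (2α−1)·p⁺ < n(b+1), and set r = nb/(2α−1). Then there exists ε > 0 with the following property: for every u₀ ∈ L^{p(·)}(ℝ^n) ∩ L^r(ℝ^n) and every measurable 𝓕 : (0,∞)×ℝ^n → ℝ such that ‖u₀‖_{𝓛^{p(·)}_r} + N_{p(·)/(b+1), nb/((b+1)(2α−1))}(𝓕) < ε, there exist R > 0 and a measurable u : (0,∞)×ℝ^n → ℝ with N_{p(·),r}(u) ≤ R which is a mild solution (with γ = 1) of ∂_t u + (−Δ)^α u = 1⃗·∇(|u|^b u) + 1⃗·∇𝓕 with data u₀, and u is the unique mild solution satisfying N_{p(·),r}(u) ≤ R. -/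

import Mathlib

open MeasureTheory Set
open scoped ENNReal FourierTransform

noncomputable section

/-- Euclidean space `ℝ^n`. -/
abbrev Rn (n : ℕ) := EuclideanSpace ℝ (Fin n)

/-- Luxemburg norm of an `ℝ≥0∞`-valued function for a variable exponent `p`. -/
def luxNorm {Ω : Type*} [MeasurableSpace Ω] (μ : Measure Ω) (p : Ω → ℝ) (f : Ω → ℝ≥0∞) : ℝ≥0∞ :=
  sInf {lam : ℝ≥0∞ | 0 < lam ∧ ∫⁻ x, (f x / lam) ^ (p x) ∂μ ≤ 1}

/-- Luxemburg norm `‖f‖_{L^{p(·)}}` of a real-valued function. -/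
def luxNormR {Ω : Type*} [MeasurableSpace Ω] (μ : Measure Ω) (p : Ω → ℝ) (f : Ω → ℝ) : ℝ≥0∞ :=
  luxNorm μ p (fun x => ENNReal.ofReal |f x|)

/-- `p(·) ∈ P^log(Ω)`: measurable, with values in `[1,∞)` on `Ω`, locally log-Hölder
continuous on `Ω`, and satisfying the log-Hölder decay condition on `Ω`. -/
def IsPLog {E : Type*} [NormedAddCommGroup E] [MeasurableSpace E] (Ω : Set E) (p : E → ℝ) : Prop :=
  Measurable p ∧ (∀ x ∈ Ω, 1 ≤ p x) ∧
  ∃ C₁ > (0:ℝ), ∃ C₂ > (0:ℝ), ∃ pinf : ℝ,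
    (∀ x ∈ Ω, ∀ y ∈ Ω, x ≠ y →
      |1 / p x - 1 / p y| ≤ C₁ / Real.log (Real.exp 1 + 1 / ‖x - y‖)) ∧
    (∀ x ∈ Ω, |1 / p x - 1 / pinf| ≤ C₂ / Real.log (Real.exp 1 + ‖x‖))

/-- The fractional heat kernel `𝔤_t^α` on `ℝ^n`: the inverse Fourier transform of
`ξ ↦ exp (-t‖ξ‖^{2α})` (it is real-valued; we take the real part). -/
def gKer (n : ℕ) (α t : ℝ) (x : Rn n) : ℝ :=
  (𝓕⁻ (fun ξ : Rn n => (Real.exp (-t * ‖ξ‖ ^ (2 * α)) : ℂ)) x).re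

/-- Convolution on `ℝ^n`. -/
def conv (n : ℕ) (g f : Rn n → ℝ) (x : Rn n) : ℝ := ∫ y, g (x - y) * f y

/-- The partial derivative `∂_j 𝔤_t^α`. -/
def dKer (n : ℕ) (α t : ℝ) (j : Fin n) (z : Rn n) : ℝ :=
  fderiv ℝ (gKer n α t) z (EuclideanSpace.single j 1)

/-- `x ↦ ess sup_{t>0} |u(t,x)|`, as an `ℝ≥0∞`-valued function. -/
def timeSup (n : ℕ) (u : ℝ → Rn n → ℝ) (x : Rn n) : ℝ≥0∞ :=
  essSup (fun t => ENNReal.ofReal |u t x|) (volume.restrict (Ioi (0:ℝ)))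

/-- Mixed norm `‖f‖_{𝓛^{p(·)}_r} = max {‖f‖_{L^{p(·)}}, ‖f‖_{L^r}}`. -/
def mixedNorm (n : ℕ) (p : Rn n → ℝ) (r : ℝ) (f : Rn n → ℝ) : ℝ≥0∞ :=
  max (luxNormR volume p f) (luxNormR volume (fun _ => r) f)

/-- `N_{p(·),r}(u) = ‖x ↦ ess sup_{t>0}|u(t,x)|‖_{𝓛^{p(·)}_r}`. -/
def mixedN (n : ℕ) (p : Rn n → ℝ) (r : ℝ) (u : ℝ → Rn n → ℝ) : ℝ≥0∞ :=
  max (luxNorm volume p (timeSup n u)) (luxNorm volume (fun _ => r) (timeSup n u))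

/-- Mild solution (γ = 1), on the time set `S`, of
`∂_t u + (-Δ)^α u = 1⃗·∇(|u|^b u) + 1⃗·∇𝓕`, `u(0) = u₀`, the derivatives being
transferred to the kernel: for a.e. `(t,x)` with `t ∈ S`, all integrals converge
absolutely and the Duhamel formula holds. -/
def IsMildSol1 (n : ℕ) (α : ℝ) (b : ℕ) (S : Set ℝ) (F : ℝ → Rn n → ℝ) (u₀ : Rn n → ℝ)
    (u : ℝ → Rn n → ℝ) : Prop :=
  ∀ᵐ tx : ℝ × Rn n ∂((volume.restrict S).prod volume),
    Integrable (fun y => gKer n α tx.1 (tx.2 - y) * u₀ y) volume ∧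
    (∀ j : Fin n, IntegrableOn
      (fun sy : ℝ × Rn n => dKer n α (tx.1 - sy.1) j (tx.2 - sy.2) * F sy.1 sy.2)
      (Ioc 0 tx.1 ×ˢ univ) (volume.prod volume)) ∧
    (∀ j : Fin n, IntegrableOn
      (fun sy : ℝ × Rn n =>
        dKer n α (tx.1 - sy.1) j (tx.2 - sy.2) * (|u sy.1 sy.2| ^ b * u sy.1 sy.2))
      (Ioc 0 tx.1 ×ˢ univ) (volume.prod volume)) ∧
    u tx.1 tx.2 = conv n (gKer n α tx.1) u₀ tx.2
      + (∑ j : Fin n, ∫ s in Ioc (0:ℝ) tx.1, conv n (dKer n α (tx.1 - s) j) (F s) tx.2)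
      - ∑ j : Fin n, ∫ s in Ioc (0:ℝ) tx.1,
          conv n (dKer n α (tx.1 - s) j) (fun y => |u s y| ^ b * u s y) tx.2

/-- Dyadic centred Hardy–Littlewood maximal function. -/
def hlMax {n : ℕ} (f : Rn n → ℝ≥0∞) (x : Rn n) : ℝ≥0∞ :=
  ⨆ k : ℤ, (∫⁻ y in Metric.ball x ((2:ℝ) ^ k), f y) / volume (Metric.ball x ((2:ℝ) ^ k))

section Maximal

variable {n : ℕ}

lemma volume_ball_eq (x : Rn n) {ρ : ℝ} (hρ : 0 < ρ) :
    volume (Metric.ball x ρ) = ENNReal.ofReal (ρ ^ n) * volume (Metric.ball (0 : Rn n) 1) := by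
  rw [Measure.addHaar_ball_of_pos _ _ hρ]; simp

lemma volume_ball_ne_zero (x : Rn n) {ρ : ℝ} (hρ : 0 < ρ) : volume (Metric.ball x ρ) ≠ 0 :=
  (Metric.measure_ball_pos _ _ hρ).ne'

lemma volume_ball_ne_top (x : Rn n) (ρ : ℝ) : volume (Metric.ball x ρ) ≠ ∞ :=
  measure_ball_lt_top.ne

lemma measurable_lintegral_ball {f : Rn n → ℝ≥0∞} (hf : Measurable f) (ρ : ℝ) :
    Measurable fun x => ∫⁻ y in Metric.ball x ρ, f y := by
  have h : (fun x => ∫⁻ y in Metric.ball x ρ, f y)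
      = fun x => ∫⁻ y, {z : Rn n × Rn n | dist z.2 z.1 < ρ}.indicator (fun z => f z.2) (x, y) := by
    funext x
    rw [← lintegral_indicator Metric.isOpen_ball.measurableSet]
    rfl
  rw [h]
  refine Measurable.lintegral_prod_right' (f := fun z =>
    {z : Rn n × Rn n | dist z.2 z.1 < ρ}.indicator (fun z => f z.2) z) ?_
  refine (hf.comp measurable_snd).indicator ?_
  exact measurableSet_lt (measurable_snd.dist measurable_fst) measurable_const

lemma measurable_hlMax {f : Rn n → ℝ≥0∞} (hf : Measurable f) : Measurable (hlMax f) := by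
  refine Measurable.iSup fun k => ?_
  have hk : (0:ℝ) < (2:ℝ) ^ k := by positivity
  simp only [volume_ball_eq _ hk]
  exact (measurable_lintegral_ball hf _).div_const _

lemma lintegral_dyadic_ball_le_hlMax (f : Rn n → ℝ≥0∞) (x : Rn n) (k : ℤ) :
    ∫⁻ y in Metric.ball x ((2:ℝ) ^ k), f y ≤
      volume (Metric.ball x ((2:ℝ) ^ k)) * hlMax f x := by
  have hk : (0:ℝ) < (2:ℝ) ^ k := by positivity
  rw [mul_comm, ← ENNReal.div_le_iff (volume_ball_ne_zero x hk) (volume_ball_ne_top x _)]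
  exact le_iSup (fun k : ℤ =>
    (∫⁻ y in Metric.ball x ((2:ℝ) ^ k), f y) / volume (Metric.ball x ((2:ℝ) ^ k))) k

/-- Averages over balls of arbitrary radius are controlled by the dyadic maximal function. -/
lemma lintegral_ball_le_hlMax (f : Rn n → ℝ≥0∞) (x : Rn n) {ρ : ℝ} (hρ : 0 < ρ) :
    ∫⁻ y in Metric.ball x ρ, f y ≤ 2 ^ n * volume (Metric.ball x ρ) * hlMax f x := by
  obtain ⟨k, hk1, hk2⟩ := exists_mem_Ico_zpow hρ (one_lt_two : (1:ℝ) < 2)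
  calc ∫⁻ y in Metric.ball x ρ, f y
      ≤ ∫⁻ y in Metric.ball x ((2:ℝ) ^ (k + 1)), f y :=
        lintegral_mono_set (Metric.ball_subset_ball hk2.le)
    _ ≤ volume (Metric.ball x ((2:ℝ) ^ (k + 1))) * hlMax f x :=
        lintegral_dyadic_ball_le_hlMax f x _
    _ ≤ 2 ^ n * volume (Metric.ball x ρ) * hlMax f x := by
        gcongr
        calc volume (Metric.ball x ((2:ℝ) ^ (k + 1)))
            ≤ volume (Metric.ball x (2 * ρ)) := by
              refine measure_mono (Metric.ball_subset_ball ?_)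
              rw [zpow_add_one₀ (by norm_num)]; linarith
          _ = 2 ^ n * volume (Metric.ball x ρ) := by
              rw [volume_ball_eq x hρ, volume_ball_eq x (by positivity : 0 < 2 * ρ), mul_pow,
                ENNReal.ofReal_mul (by positivity), mul_assoc]
              congr 1
              rw [ENNReal.ofReal_pow (by norm_num)]; simp

lemma hlMax_mono {f g : Rn n → ℝ≥0∞} (h : f ≤ g) (x : Rn n) : hlMax f x ≤ hlMax g x :=
  iSup_mono fun _ => ENNReal.div_le_div_right (lintegral_mono h) _

lemma hlMax_add_le {f : Rn n → ℝ≥0∞} (hf : Measurable f) (g : Rn n → ℝ≥0∞) (x : Rn n) :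
    hlMax (fun y => f y + g y) x ≤ hlMax f x + hlMax g x := by
  refine iSup_le fun k => ?_
  rw [lintegral_add_left hf, ENNReal.add_div]
  exact add_le_add
    (le_iSup (fun k : ℤ => (∫⁻ y in Metric.ball x ((2:ℝ) ^ k), f y) /
      volume (Metric.ball x ((2:ℝ) ^ k))) k)
    (le_iSup (fun k : ℤ => (∫⁻ y in Metric.ball x ((2:ℝ) ^ k), g y) /
      volume (Metric.ball x ((2:ℝ) ^ k))) k)

lemma hlMax_le_of_le {f : Rn n → ℝ≥0∞} {c : ℝ≥0∞} (h : ∀ y, f y ≤ c) (x : Rn n) :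
    hlMax f x ≤ c := by
  refine iSup_le fun k => ?_
  have hk : (0:ℝ) < (2:ℝ) ^ k := by positivity
  rw [ENNReal.div_le_iff (volume_ball_ne_zero x hk) (volume_ball_ne_top x _)]
  calc _ ≤ ∫⁻ _ in Metric.ball x ((2:ℝ) ^ k), c := lintegral_mono h
    _ = _ := by simp

lemma hlMax_div {f : Rn n → ℝ≥0∞} (hf : Measurable f) (c : ℝ≥0∞) (x : Rn n) :
    hlMax (fun y => f y / c) x = hlMax f x / c := by
  simp only [hlMax, div_eq_mul_inv, ENNReal.iSup_mul]
  congr 1; funext k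
  rw [lintegral_mul_const _ hf]; ring

/-- Weak type `(1,1)` bound. -/
lemma volume_hlMax_gt_le (f : Rn n → ℝ≥0∞) {a : ℝ≥0∞} (ha : a ≠ 0) (ha' : a ≠ ∞) :
    volume {x | a < hlMax f x} ≤ 4 ^ n / a * ∫⁻ y, f y := by
  rcases eq_or_ne (∫⁻ y, f y) ∞ with hI | hI
  · rw [hI, ENNReal.mul_top]
    · exact le_top
    · simp [ha']
  have hex : ∀ x : {x | a < hlMax f x}, ∃ k : ℤ,
      a * volume (Metric.ball x.1 ((2:ℝ) ^ k)) < ∫⁻ y in Metric.ball x.1 ((2:ℝ) ^ k), f y := by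
    rintro ⟨x, hx⟩
    obtain ⟨k, hk⟩ := lt_iSup_iff.1 (show a < hlMax f x from hx)
    have hk0 : (0:ℝ) < (2:ℝ) ^ k := by positivity
    refine ⟨k, ?_⟩
    rwa [ENNReal.lt_div_iff_mul_lt (Or.inl (volume_ball_ne_zero x hk0))
      (Or.inl (volume_ball_ne_top x _))] at hk
  choose k hk using hex
  rcases Nat.eq_zero_or_pos n with hn | hn
  · subst hn
    by_cases hne : {x | a < hlMax f x}.Nonempty
    · obtain ⟨x, hx⟩ := hne
      have h1 := hk ⟨x, hx⟩
      have h2 : ∀ s : Set (Rn 0), s.Nonempty → s = univ := fun s hs =>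
        Subsingleton.eq_univ_of_nonempty hs
      rw [h2 {x | a < hlMax f x} ⟨x, hx⟩]
      rw [h2 (Metric.ball _ _) ⟨x, Metric.mem_ball_self (by positivity)⟩, setLIntegral_univ] at h1
      rw [pow_zero, one_div, mul_comm, ← div_eq_mul_inv, ENNReal.le_div_iff_mul_le (Or.inl ha)
        (Or.inl ha'), mul_comm]
      exact h1.le
    · rw [not_nonempty_iff_eq_empty.1 hne]; simp
  -- the radii are bounded
  obtain ⟨R, hR⟩ : ∃ R : ℝ, ∀ x ∈ (univ : Set {x | a < hlMax f x}), (2:ℝ) ^ (k x) ≤ R := by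
    set V := volume (Metric.ball (0 : Rn n) 1)
    have hV0 : V ≠ 0 := volume_ball_ne_zero _ one_pos
    have hV : V ≠ ∞ := volume_ball_ne_top _ _
    set D := (∫⁻ y, f y) / (a * V)
    have hD : D ≠ ∞ := ENNReal.div_ne_top hI (mul_ne_zero ha hV0)
    refine ⟨max 1 D.toReal, fun x _ => ?_⟩
    by_contra! hlt
    have h1 : (1:ℝ) < 2 ^ (k x) := (le_max_left _ _).trans_lt hlt
    have h2 : D.toReal < 2 ^ (k x) := (le_max_right _ _).trans_lt hlt
    have h3 := (hk x).le.trans (setLIntegral_le_lintegral _ _)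
    rw [volume_ball_eq _ (by positivity), mul_left_comm,
      ← ENNReal.le_div_iff_mul_le (Or.inl (mul_ne_zero ha hV0))
        (Or.inl (ENNReal.mul_ne_top ha' hV))] at h3
    have h4 : ((2:ℝ) ^ (k x)) ^ n ≤ D.toReal := by
      have := ENNReal.toReal_mono hD h3
      rwa [ENNReal.toReal_ofReal (by positivity)] at this
    have h5 : (2:ℝ) ^ (k x) ≤ ((2:ℝ) ^ (k x)) ^ n := le_self_pow₀ h1.le hn.ne'
    linarith
  obtain ⟨u, -, hdisj, hcov⟩ := Vitali.exists_disjoint_subfamily_covering_enlargement_ball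
    univ (fun x : {x | a < hlMax f x} => x.1) (fun x => (2:ℝ) ^ (k x)) R hR 4 (by norm_num)
  have hcount : u.Countable := hdisj.countable_of_isOpen (fun _ _ => Metric.isOpen_ball)
    (fun x _ => ⟨x.1, Metric.mem_ball_self (by positivity)⟩)
  have hsub : {x | a < hlMax f x} ⊆ ⋃ x ∈ u, Metric.ball x.1 (4 * (2:ℝ) ^ (k x)) := by
    intro x hx
    obtain ⟨b, hb, hb'⟩ := hcov ⟨x, hx⟩ (mem_univ _)
    exact mem_biUnion hb (hb' (Metric.mem_ball_self (by positivity)))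
  calc volume {x | a < hlMax f x}
      ≤ volume (⋃ x ∈ u, Metric.ball x.1 (4 * (2:ℝ) ^ (k x))) := measure_mono hsub
    _ ≤ ∑' x : u, volume (Metric.ball x.1.1 (4 * (2:ℝ) ^ (k x.1))) :=
        measure_biUnion_le _ hcount _
    _ ≤ ∑' x : u, 4 ^ n / a * ∫⁻ y in Metric.ball x.1.1 ((2:ℝ) ^ (k x.1)), f y := by
        refine ENNReal.tsum_le_tsum fun x => ?_
        have h := (hk x.1).le
        rw [volume_ball_eq _ (by positivity), mul_pow, ENNReal.ofReal_mul (by positivity),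
          mul_assoc, ← volume_ball_eq x.1.1 (by positivity), ENNReal.ofReal_pow (by norm_num)]
        rw [mul_comm, ← ENNReal.le_div_iff_mul_le (Or.inl ha) (Or.inl ha')] at h
        calc _ ≤ ENNReal.ofReal 4 ^ n *
              ((∫⁻ y in Metric.ball x.1.1 ((2:ℝ) ^ (k x.1)), f y) / a) := by gcongr
          _ = _ := by
            rw [div_eq_mul_inv, div_eq_mul_inv]
            norm_num
            ring
    _ = 4 ^ n / a * ∫⁻ y in ⋃ x ∈ u, Metric.ball x.1 ((2:ℝ) ^ (k x)), f y := by
        rw [ENNReal.tsum_mul_left,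
          lintegral_biUnion hcount (fun _ _ => Metric.isOpen_ball.measurableSet) hdisj]
    _ ≤ 4 ^ n / a * ∫⁻ y, f y := by
        gcongr
        exact Measure.restrict_le_self

end Maximal

section Strong
variable {n : ℕ}

lemma lintegral_rpow_Ioo {q x : ℝ} (hq : 0 < q) (hx : 0 ≤ x) :
    ∫⁻ a in Ioo (0:ℝ) x, ENNReal.ofReal (q * a ^ (q - 1)) = ENNReal.ofReal (x ^ q) := by
  have hint : IntervalIntegrable (fun a : ℝ => q * a ^ (q - 1)) volume 0 x :=
    (intervalIntegral.intervalIntegrable_rpow' (by linarith)).const_mul _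
  rw [Measure.restrict_congr_set Ioo_ae_eq_Ioc, ← ofReal_integral_eq_lintegral_ofReal]
  · rw [← intervalIntegral.integral_of_le hx, intervalIntegral.integral_const_mul,
      integral_rpow (Or.inl (by linarith))]
    simp only [sub_add_cancel]
    rw [Real.zero_rpow hq.ne']
    congr 1; field_simp; ring
  · exact (intervalIntegrable_iff_integrableOn_Ioc_of_le hx).1 hint
  · filter_upwards [ae_restrict_mem measurableSet_Ioc] with a ha
    have := ha.1
    positivity

/-- The layer-cake formula for a power of an extended nonnegative number. -/
lemma lintegral_layer_rpow (X : ℝ≥0∞) {q : ℝ} (hq : 0 < q) :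
    ∫⁻ a in Ioi (0:ℝ), {a : ℝ | ENNReal.ofReal a < X}.indicator
      (fun a => ENNReal.ofReal (q * a ^ (q - 1))) a = X ^ q := by
  have hms : MeasurableSet {a : ℝ | ENNReal.ofReal a < X} :=
    measurableSet_lt ENNReal.measurable_ofReal measurable_const
  rw [lintegral_indicator hms, Measure.restrict_restrict hms]
  induction X with
  | top =>
    rw [ENNReal.top_rpow_of_pos hq, eq_top_iff]
    refine le_of_tendsto' (f := fun N : ℕ => ENNReal.ofReal ((N:ℝ) ^ q)) (x := Filter.atTop) ?_ ?_
    · rw [ENNReal.tendsto_ofReal_nhds_top]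
      exact (tendsto_rpow_atTop hq).comp tendsto_natCast_atTop_atTop
    · intro N
      rw [← lintegral_rpow_Ioo hq (Nat.cast_nonneg N)]
      exact lintegral_mono_set fun a ha => ⟨by simp, ha.1⟩
  | coe x =>
    have : {a : ℝ | ENNReal.ofReal a < (x : ℝ≥0∞)} ∩ Ioi 0 = Ioo 0 (x:ℝ) := by
      ext a
      simp only [mem_inter_iff, mem_ofPred_eq, mem_Ioi, mem_Ioo]
      constructor
      · rintro ⟨h1, h2⟩
        rw [← ENNReal.ofReal_coe_nnreal, ENNReal.ofReal_lt_ofReal_iff_of_nonneg h2.le] at h1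
        exact ⟨h2, h1⟩
      · rintro ⟨h1, h2⟩
        rw [← ENNReal.ofReal_coe_nnreal, ENNReal.ofReal_lt_ofReal_iff_of_nonneg h1.le]
        exact ⟨h2, h1⟩
    rw [this, lintegral_rpow_Ioo hq (NNReal.coe_nonneg x),
      ← ENNReal.ofReal_rpow_of_nonneg (NNReal.coe_nonneg x) hq.le,
      ENNReal.ofReal_coe_nnreal]

/-- Strong type `(q,q)` bound for a constant exponent. -/
lemma lintegral_hlMax_rpow_le (n : ℕ) {q : ℝ} (hq : 1 < q) : ∃ C : ℝ≥0∞, C ≠ ∞ ∧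
    ∀ f : Rn n → ℝ≥0∞, Measurable f →
      ∫⁻ x, hlMax f x ^ q ≤ C * ∫⁻ x, f x ^ q := by
  have hq0 : 0 < q := by linarith
  have hq1 : 0 < q - 1 := by linarith
  refine ⟨4 ^ n * ENNReal.ofReal (2 * (q / (q - 1))) * 2 ^ (q - 1), ?_, fun f hf => ?_⟩
  · exact ENNReal.mul_ne_top (ENNReal.mul_ne_top (by simp) ENNReal.ofReal_ne_top) (by simp)
  have hM := measurable_hlMax hf
  have hmeas1 : Measurable fun z : Rn n × ℝ =>
      {z : Rn n × ℝ | ENNReal.ofReal z.2 < hlMax f z.1}.indicator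
      (fun z => ENNReal.ofReal (q * z.2 ^ (q - 1))) z := by
    refine Measurable.indicator ?_ (measurableSet_lt (ENNReal.measurable_ofReal.comp measurable_snd)
      (hM.comp measurable_fst))
    exact ENNReal.measurable_ofReal.comp ((measurable_snd.pow_const _).const_mul _)
  have hmeas2 : Measurable fun z : ℝ × Rn n => f z.2 *
      {z : ℝ × Rn n | ENNReal.ofReal z.1 < 2 * f z.2}.indicator
      (fun z => ENNReal.ofReal ((q - 1) * z.1 ^ (q - 1 - 1))) z := by
    refine (hf.comp measurable_snd).mul (Measurable.indicator ?_
      (measurableSet_lt (ENNReal.measurable_ofReal.comp measurable_fst)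
      ((hf.comp measurable_snd).const_mul _)))
    exact ENNReal.measurable_ofReal.comp ((measurable_fst.pow_const _).const_mul _)
  have key : ∀ a : ℝ, 0 < a → volume {x | ENNReal.ofReal a < hlMax f x} ≤
      4 ^ n / (ENNReal.ofReal (a / 2)) *
        ∫⁻ y, {y | ENNReal.ofReal a < 2 * f y}.indicator f y := by
    intro a ha
    have hms : MeasurableSet {y | ENNReal.ofReal a < 2 * f y} :=
      measurableSet_lt measurable_const (hf.const_mul _)
    have h2 : ENNReal.ofReal a = ENNReal.ofReal (a / 2) + ENNReal.ofReal (a / 2) := by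
      rw [← ENNReal.ofReal_add (by positivity) (by positivity)]; simp
    refine le_trans (measure_mono ?_) (volume_hlMax_gt_le _ (a := ENNReal.ofReal (a / 2))
      (by simpa using ha) (by simp))
    intro x hx
    simp only [mem_ofPred_eq] at hx ⊢
    have hle : hlMax f x ≤ hlMax ({y | ENNReal.ofReal a < 2 * f y}.indicator f) x
        + ENNReal.ofReal (a / 2) := by
      calc hlMax f x ≤ hlMax (fun y => {y | ENNReal.ofReal a < 2 * f y}.indicator f y +
            {y | ENNReal.ofReal a < 2 * f y}ᶜ.indicator f y) x :=
            hlMax_mono (fun y => (indicator_self_add_compl_apply _ f y).ge) x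
        _ ≤ _ := hlMax_add_le (hf.indicator hms) _ x
        _ ≤ _ := by
          gcongr
          refine hlMax_le_of_le (fun y => ?_) x
          by_cases hy : y ∈ {y | ENNReal.ofReal a < 2 * f y}
          · simp [hy]
          · rw [indicator_of_mem (by simpa using hy)]
            simp only [mem_ofPred_eq, not_lt] at hy
            rw [ENNReal.ofReal_div_of_pos two_pos, ENNReal.le_div_iff_mul_le (by simp) (by simp),
              mul_comm]
            simpa using hy
    by_contra! hcon
    have := hx.trans_le (hle.trans (add_le_add_left hcon _))
    rw [← h2] at this
    exact lt_irrefl _ this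
  calc ∫⁻ x, hlMax f x ^ q
      = ∫⁻ x, ∫⁻ a in Ioi (0:ℝ), {a : ℝ | ENNReal.ofReal a < hlMax f x}.indicator
          (fun a => ENNReal.ofReal (q * a ^ (q - 1))) a := by
        simp only [lintegral_layer_rpow _ hq0]
    _ = ∫⁻ a in Ioi (0:ℝ), ∫⁻ x, {a : ℝ | ENNReal.ofReal a < hlMax f x}.indicator
          (fun a => ENNReal.ofReal (q * a ^ (q - 1))) a := by
        exact lintegral_lintegral_swap hmeas1.aemeasurable
    _ ≤ ∫⁻ a in Ioi (0:ℝ), ∫⁻ y, 4 ^ n * ENNReal.ofReal (2 * (q / (q - 1))) * (f y *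
          {a : ℝ | ENNReal.ofReal a < 2 * f y}.indicator
          (fun a => ENNReal.ofReal ((q - 1) * a ^ (q - 1 - 1))) a) := by
        refine setLIntegral_mono' measurableSet_Ioi fun a ha => ?_
        have ha : 0 < a := ha
        have e1 : ∀ x, {a : ℝ | ENNReal.ofReal a < hlMax f x}.indicator
          (fun a => ENNReal.ofReal (q * a ^ (q - 1))) a =
          {x | ENNReal.ofReal a < hlMax f x}.indicator
            (fun _ => ENNReal.ofReal (q * a ^ (q - 1))) x := fun x => rfl
        have e2 : ∀ y, 4 ^ n * ENNReal.ofReal (2 * (q / (q - 1))) * (f y *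
          {a : ℝ | ENNReal.ofReal a < 2 * f y}.indicator
          (fun a => ENNReal.ofReal ((q - 1) * a ^ (q - 1 - 1))) a) =
          (ENNReal.ofReal (q * a ^ (q - 1)) * (4 ^ n / (ENNReal.ofReal (a / 2)))) *
           {y | ENNReal.ofReal a < 2 * f y}.indicator f y := by
          intro y
          by_cases hy : ENNReal.ofReal a < 2 * f y
          · rw [indicator_of_mem (show a ∈ {a : ℝ | ENNReal.ofReal a < 2 * f y} from hy),
              indicator_of_mem (show y ∈ {y | ENNReal.ofReal a < 2 * f y} from hy)]
            have : ENNReal.ofReal (2 * (q / (q - 1))) * ENNReal.ofReal ((q - 1) * a ^ (q - 1 - 1))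
              = ENNReal.ofReal (q * a ^ (q - 1)) * (ENNReal.ofReal (a / 2))⁻¹ := by
              rw [← ENNReal.ofReal_inv_of_pos (by positivity), ← ENNReal.ofReal_mul (by positivity),
                ← ENNReal.ofReal_mul (by positivity)]
              congr 1
              rw [Real.rpow_sub_one ha.ne' (q - 1)]
              field_simp
            rw [div_eq_mul_inv (4 ^ n : ℝ≥0∞)]
            calc _ = 4 ^ n * f y * (ENNReal.ofReal (2 * (q / (q - 1))) *
                  ENNReal.ofReal ((q - 1) * a ^ (q - 1 - 1))) := by ring
              _ = _ := by rw [this]; ring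
          · rw [indicator_of_notMem (show a ∉ {a : ℝ | ENNReal.ofReal a < 2 * f y} from hy),
              indicator_of_notMem (show y ∉ {y | ENNReal.ofReal a < 2 * f y} from hy)]
            simp
        simp only [e1, e2]
        rw [lintegral_indicator_const (measurableSet_lt measurable_const hM),
          lintegral_const_mul' _ _ (ENNReal.mul_ne_top (by simp)
            (ENNReal.div_ne_top (by simp) (by simpa using ha))), mul_assoc]
        gcongr
        exact key a ha
    _ = ∫⁻ y, ∫⁻ a in Ioi (0:ℝ), 4 ^ n * ENNReal.ofReal (2 * (q / (q - 1))) * (f y *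
          {a : ℝ | ENNReal.ofReal a < 2 * f y}.indicator
          (fun a => ENNReal.ofReal ((q - 1) * a ^ (q - 1 - 1))) a) := by
        exact lintegral_lintegral_swap (hmeas2.const_mul _).aemeasurable
    _ = ∫⁻ y, 4 ^ n * ENNReal.ofReal (2 * (q / (q - 1))) * 2 ^ (q - 1) * f y ^ q := by
        congr 1; funext y
        have hm : Measurable fun a => {a : ℝ | ENNReal.ofReal a < 2 * f y}.indicator
            (fun a => ENNReal.ofReal ((q - 1) * a ^ (q - 1 - 1))) a := by
          refine Measurable.indicator ?_ (measurableSet_lt ENNReal.measurable_ofReal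
            measurable_const)
          exact ENNReal.measurable_ofReal.comp ((measurable_id.pow_const _).const_mul _)
        rw [lintegral_const_mul _ (hm.const_mul _), lintegral_const_mul _ hm,
          lintegral_layer_rpow _ hq1, ENNReal.mul_rpow_of_nonneg _ _ hq1.le]
        have : f y ^ q = f y * f y ^ (q - 1) := by
          conv_lhs => rw [show q = 1 + (q - 1) by ring]
          rw [ENNReal.rpow_add_of_nonneg _ _ zero_le_one hq1.le, ENNReal.rpow_one]
        rw [this]; ring
    _ = _ := by rw [lintegral_const_mul _ (hf.pow_const _)]

end Strong

section VarExp
variable {n : ℕ}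

/-- A globally log-Hölder exponent with values in `[lo, hi]`, `lo > 1`, and limit `κ` at
infinity. -/
structure VarExp (n : ℕ) (s : Rn n → ℝ) (lo hi A κ : ℝ) : Prop where
  meas : Measurable s
  one_lt : 1 < lo
  lo_le : ∀ x, lo ≤ s x
  le_hi : ∀ x, s x ≤ hi
  pos : 0 < A
  loc : ∀ x y, x ≠ y → |1 / s x - 1 / s y| ≤ A / Real.log (Real.exp 1 + 1 / ‖x - y‖)
  dec : ∀ x, |1 / s x - 1 / κ| ≤ A / Real.log (Real.exp 1 + ‖x‖)
  lo_le_lim : lo ≤ κ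
  lim_le_hi : κ ≤ hi

lemma one_le_log_exp_add {a : ℝ} (ha : 0 ≤ a) : 1 ≤ Real.log (Real.exp 1 + a) := by
  rw [Real.le_log_iff_exp_le (by positivity)]; linarith

lemma jensen_rpow_lintegral {X : Type*} [MeasurableSpace X] (m : Measure X)
    [IsProbabilityMeasure m] {f : X → ℝ≥0∞} (hf : Measurable f) {κ : ℝ} (hκ : 1 ≤ κ) :
    (∫⁻ x, f x ∂m) ^ κ ≤ ∫⁻ x, f x ^ κ ∂m := by
  have h := eLpNorm'_le_eLpNorm'_of_exponent_le (f := f) (μ := m) one_pos hκ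
    hf.aestronglyMeasurable
  simp only [eLpNorm', enorm_eq_self, ENNReal.rpow_one, div_one, one_div] at h
  rwa [ENNReal.le_rpow_inv_iff (by linarith)] at h

/-- The local log-Hölder condition makes the oscillation factor on small balls bounded. -/
lemma osc_factor_le {A hi V ρ t : ℝ} (n : ℕ) (hA : 0 < A) (hhi : 0 < hi) (hV : 1 ≤ V) (hρ : 0 < ρ)
    (ht : t ≤ hi * (A / Real.log (Real.exp 1 + 1 / ρ))) :
    (V * (Real.exp 1 + 1 / ρ) ^ n) ^ t ≤ V ^ (hi * A) * Real.exp (n * hi * A) := by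
  set E := Real.exp 1 + 1 / ρ with hE
  have hE0 : 0 < E := by positivity
  have hlog : 1 ≤ Real.log E := one_le_log_exp_add (by positivity)
  have ht1 : t ≤ hi * A := ht.trans (by gcongr; exact div_le_self hA.le hlog)
  rw [Real.mul_rpow (by positivity) (by positivity)]
  have h2 : (E ^ n) ^ t ≤ Real.exp (n * hi * A) := by
    rw [← Real.rpow_natCast, ← Real.rpow_mul hE0.le, Real.rpow_def_of_pos hE0, Real.exp_le_exp]
    have : Real.log E * t ≤ hi * A := by
      calc Real.log E * t ≤ Real.log E * (hi * (A / Real.log E)) := by gcongr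
        _ = hi * A := by field_simp
    calc Real.log E * (n * t) = n * (Real.log E * t) := by ring
      _ ≤ n * (hi * A) := by gcongr
      _ = _ := by ring
  have h1 : V ^ t ≤ V ^ (hi * A) := Real.rpow_le_rpow_of_exponent_le hV ht1
  gcongr

/-- Diening's pointwise estimate on a single ball for functions with values in `{0} ∪ [1, ∞]`. -/
lemma VarExp.avg_rpow_le {s : Rn n → ℝ} {lo hi A κ : ℝ} (h : VarExp n s lo hi A κ) :
    ∃ K : ℝ≥0∞, K ≠ ∞ ∧ ∀ f : Rn n → ℝ≥0∞, Measurable f → (∀ y, f y = 0 ∨ 1 ≤ f y) →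
      ∫⁻ y, f y ^ s y ≤ 1 → ∀ x : Rn n, ∀ ρ : ℝ, 0 < ρ →
        ((∫⁻ y in Metric.ball x ρ, f y) / volume (Metric.ball x ρ)) ^ (s x / lo) ≤
          K * ((∫⁻ y in Metric.ball x ρ, f y ^ (s y / lo)) / volume (Metric.ball x ρ)) := by
  have hlo : 0 < lo := by linarith [h.one_lt]
  have hhi : 0 < hi := hlo.trans_le (h.lo_le_lim.trans h.lim_le_hi)
  set V₁ := volume (Metric.ball (0 : Rn n) 1) with hV₁
  have hV0 : V₁ ≠ 0 := volume_ball_ne_zero _ one_pos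
  have hVt : V₁ ≠ ∞ := volume_ball_ne_top _ _
  set V : ℝ := max 1 (V₁⁻¹).toReal with hV
  refine ⟨ENNReal.ofReal (V ^ (hi * A) * Real.exp (n * hi * A)), by simp,
    fun f hf hf1 hint x ρ hρ => ?_⟩
  have hsx : 0 < s x := hlo.trans_le (h.lo_le x)
  set B := Metric.ball x ρ with hB
  set m : Measure (Rn n) := (volume B)⁻¹ • volume.restrict B with hm
  have hB0 : volume B ≠ 0 := volume_ball_ne_zero x hρ
  have hBt : volume B ≠ ∞ := volume_ball_ne_top x ρ
  have : IsProbabilityMeasure m := ⟨by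
    simp [hm, ENNReal.inv_mul_cancel hB0 hBt]⟩
  have havg : ∀ g : Rn n → ℝ≥0∞, (∫⁻ y in B, g y) / volume B = ∫⁻ y, g y ∂m := by
    intro g
    rw [hm, lintegral_smul_measure, div_eq_mul_inv, mul_comm]; rfl
  rw [havg, havg]
  set ω : ℝ := A / Real.log (Real.exp 1 + 1 / ρ) with hω
  have hω0 : 0 < ω := div_pos h.pos (by linarith [one_le_log_exp_add (a := 1 / ρ) (by positivity)])
  set k : ℝ := max 1 (1 / (lo / s x + lo * ω)) with hk
  have hden : 0 < lo / s x + lo * ω := by positivity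
  have hk1 : 1 ≤ k := le_max_left _ _
  have hk0 : 0 < k := by linarith
  have hkq : ∀ y ∈ B, k ≤ s y / lo := by
    intro y hy
    have hsy : 0 < s y := hlo.trans_le (h.lo_le y)
    refine max_le ?_ ?_
    · rw [le_div_iff₀ hlo]; linarith [h.lo_le y]
    · rw [div_le_div_iff₀ hden hlo, one_mul]
      have : 1 / s y ≤ 1 / s x + ω := by
        rcases eq_or_ne x y with rfl | hxy
        · linarith
        · have h1 := (abs_le.1 (h.loc x y hxy)).1
          have hd : ‖x - y‖ < ρ := by
            rw [← dist_eq_norm, dist_comm]; exact hy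
          have hd0 : 0 < ‖x - y‖ := norm_pos_iff.2 (sub_ne_zero.2 hxy)
          have h2 : A / Real.log (Real.exp 1 + 1 / ‖x - y‖) ≤ ω := by
            have := one_le_log_exp_add (a := 1 / ρ) (by positivity)
            have := h.pos
            rw [hω]; gcongr
          linarith
      calc lo = s y * lo * (1 / s y) := by field_simp
        _ ≤ s y * lo * (1 / s x + ω) := by gcongr
        _ = _ := by ring
  have hkx : k ≤ s x / lo := hkq x (Metric.mem_ball_self hρ)
  set X := ∫⁻ y, f y ^ (s y / lo) ∂m with hX
  have hA : (∫⁻ y, f y ∂m) ^ k ≤ X := by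
    refine (jensen_rpow_lintegral m hf hk1).trans ?_
    rw [hX, hm, lintegral_smul_measure, lintegral_smul_measure]
    gcongr 1
    refine setLIntegral_mono' Metric.isOpen_ball.measurableSet fun y hy => ?_
    rcases hf1 y with h0 | h1
    · rw [h0, ENNReal.zero_rpow_of_pos hk0, ]; simp
    · exact ENNReal.rpow_le_rpow_of_exponent_le h1 (hkq y hy)
  have hX1 : X ≤ ENNReal.ofReal (V * (Real.exp 1 + 1 / ρ) ^ n) := by
    calc X ≤ (volume B)⁻¹ * 1 := by
          rw [hX, hm, lintegral_smul_measure]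
          refine mul_le_mul_right ?_ _
          refine (setLIntegral_le_lintegral _ _).trans ((lintegral_mono fun y => ?_).trans hint)
          rcases hf1 y with h0 | h1
          · rw [h0, ENNReal.zero_rpow_of_pos (div_pos (hlo.trans_le (h.lo_le y)) hlo)]; simp
          · refine ENNReal.rpow_le_rpow_of_exponent_le h1 ?_
            exact div_le_self (hlo.trans_le (h.lo_le y)).le h.one_lt.le
      _ = ENNReal.ofReal ((1 / ρ) ^ n) * V₁⁻¹ := by
          rw [mul_one, hB, volume_ball_eq x hρ, ← hV₁,
            ENNReal.mul_inv (Or.inr hVt) (Or.inr hV0), ← ENNReal.ofReal_inv_of_pos (by positivity)]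
          simp
      _ ≤ ENNReal.ofReal ((Real.exp 1 + 1 / ρ) ^ n) * ENNReal.ofReal V := by
          gcongr
          · linarith [Real.exp_pos 1]
          · rw [← ENNReal.ofReal_toReal (ENNReal.inv_ne_top.2 hV0)]
            exact ENNReal.ofReal_le_ofReal (le_max_right _ _)
      _ = _ := by rw [← ENNReal.ofReal_mul (by positivity), mul_comm]
  have hr1 : 1 ≤ s x / lo / k := by rwa [le_div_iff₀ hk0, one_mul]
  have hr2 : s x / lo / k - 1 ≤ hi * ω := by
    have h3 : s x / lo / k ≤ s x / lo * (lo / s x + lo * ω) := by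
      rw [div_le_iff₀ hk0, mul_assoc]
      refine le_mul_of_one_le_right (by positivity) ?_
      calc (1:ℝ) = (lo / s x + lo * ω) * (1 / (lo / s x + lo * ω)) := by field_simp
        _ ≤ _ := by gcongr; exact le_max_right _ _
    have h4 : s x / lo * (lo / s x + lo * ω) = 1 + s x * ω := by field_simp
    have h5 : s x * ω ≤ hi * ω := by gcongr; exact h.le_hi x
    linarith
  calc (∫⁻ y, f y ∂m) ^ (s x / lo) = ((∫⁻ y, f y ∂m) ^ k) ^ (s x / lo / k) := by
        rw [← ENNReal.rpow_mul]; congr 1; field_simp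
    _ ≤ X ^ (s x / lo / k) := by gcongr
    _ = X ^ (s x / lo / k - 1) * X := by
        conv_lhs => rw [show s x / lo / k = (s x / lo / k - 1) + 1 by ring]
        rw [ENNReal.rpow_add_of_nonneg _ _ (by linarith) zero_le_one, ENNReal.rpow_one]
    _ ≤ ENNReal.ofReal (V * (Real.exp 1 + 1 / ρ) ^ n) ^ (s x / lo / k - 1) * X := by
        gcongr
    _ ≤ _ := by
        gcongr
        rw [ENNReal.ofReal_rpow_of_nonneg (by positivity) (by linarith)]
        exact ENNReal.ofReal_le_ofReal (osc_factor_le n h.pos hhi (le_max_left _ _) hρ hr2)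

lemma rpow_compare {F : ℝ≥0∞} (hF : F ≤ 1) {r σ hi A N m : ℝ} (hr : 1 ≤ r) (hσ : 1 ≤ σ)
    (hr' : r ≤ hi) (hσ' : σ ≤ hi) (hA : 0 < A) (hN : 0 ≤ N) (hm : 0 ≤ m)
    (h : |1 / r - 1 / σ| ≤ A / Real.log (Real.exp 1 + N)) :
    F ^ r ≤ ENNReal.ofReal (Real.exp (m * (hi * hi * A))) * F ^ σ
      + ENNReal.ofReal ((Real.exp 1 + N) ^ (-m)) := by
  lift F to NNReal using (hF.trans_lt ENNReal.one_lt_top).ne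
  have hF1 : (F : ℝ) ≤ 1 := by exact_mod_cast hF
  have hhi : 0 ≤ hi := by linarith
  have hF0 : 0 ≤ (F : ℝ) := F.2
  have hpw : 0 ≤ (Real.exp 1 + N) ^ (-m) := by positivity
  rw [← ENNReal.ofReal_coe_nnreal, ENNReal.ofReal_rpow_of_nonneg hF0 (by linarith),
    ENNReal.ofReal_rpow_of_nonneg hF0 (by linarith), ← ENNReal.ofReal_mul (by positivity),
    ← ENNReal.ofReal_add (by positivity) hpw]
  refine ENNReal.ofReal_le_ofReal ?_
  set x : ℝ := NNReal.toReal F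
  set E := Real.exp 1 + N
  have hE0 : 0 < E := by positivity
  have hlog : 1 ≤ Real.log E := one_le_log_exp_add hN
  have hE1 : 1 ≤ E := by
    have := Real.add_one_le_exp (1:ℝ)
    simp only [E]; linarith
  have hexp : 1 ≤ Real.exp (m * (hi * hi * A)) := Real.one_le_exp (by positivity)
  rcases lt_or_ge x (E ^ (-m)) with hx | hx
  · have h1 : x ^ r ≤ x := by
      rcases hF0.eq_or_lt with h0 | h0
      · rw [show x = 0 from h0.symm, Real.zero_rpow (by linarith)]
      · simpa using Real.rpow_le_rpow_of_exponent_ge h0 hF1 hr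
    have : 0 ≤ Real.exp (m * (hi * hi * A)) * x ^ σ := by positivity
    linarith
  · have hx0 : 0 < x := lt_of_lt_of_le (by positivity) hx
    suffices hs : x ^ r ≤ Real.exp (m * (hi * hi * A)) * x ^ σ by
      have : 0 ≤ E ^ (-m) := by positivity
      linarith
    rcases le_total σ r with hle | hle
    · have h1 := Real.rpow_le_rpow_of_exponent_ge hx0 hF1 hle
      have h2 : 0 ≤ x ^ σ := by positivity
      nlinarith
    · have hdiff : (σ - r) * Real.log E ≤ hi * hi * A := by
        have h1 := (abs_le.1 h).2
        rw [le_div_iff₀ (by linarith)] at h1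
        calc (σ - r) * Real.log E = r * σ * ((1 / r - 1 / σ) * Real.log E) := by
              field_simp
          _ ≤ r * σ * A := by gcongr
          _ ≤ _ := by gcongr
      have e1 : x ^ r = x ^ (r - σ) * x ^ σ := by
        rw [← Real.rpow_add hx0]; congr 1; ring
      rw [e1]
      gcongr
      calc x ^ (r - σ) ≤ (E ^ (-m)) ^ (r - σ) :=
            Real.rpow_le_rpow_of_nonpos (by positivity) hx (by linarith)
        _ = Real.exp (m * ((σ - r) * Real.log E)) := by
            rw [← Real.rpow_mul hE0.le, Real.rpow_def_of_pos hE0]; congr 1; ring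
        _ ≤ _ := by gcongr

lemma lintegral_decay_ne_top (n : ℕ) :
    ∫⁻ x : Rn n, ENNReal.ofReal ((Real.exp 1 + ‖x‖) ^ (-((n:ℝ) + 1))) ≠ ∞ := by
  have h := finite_integral_one_add_norm (E := Rn n) (μ := volume) (r := (n:ℝ) + 1) (by simp)
  refine (lt_of_le_of_lt (lintegral_mono fun x => ?_) h).ne
  refine ENNReal.ofReal_le_ofReal (Real.rpow_le_rpow_of_nonpos (by positivity) ?_ (by linarith))
  have := Real.add_one_le_exp (1:ℝ)
  linarith

/-- Boundedness of the maximal operator on variable Lebesgue spaces, in modular form. -/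
theorem VarExp.lintegral_hlMax_le {s : Rn n → ℝ} {lo hi A κ : ℝ} (h : VarExp n s lo hi A κ) :
    ∃ C : ℝ≥0∞, C ≠ ∞ ∧ ∀ f : Rn n → ℝ≥0∞, Measurable f → ∫⁻ y, f y ^ s y ≤ 1 →
      ∫⁻ x, hlMax f x ^ s x ≤ C := by
  have hlo : 0 < lo := by linarith [h.one_lt]
  have hs0 : ∀ y, 0 < s y := fun y => hlo.trans_le (h.lo_le y)
  have hs1 : ∀ y, 1 ≤ s y := fun y => h.one_lt.le.trans (h.lo_le y)
  have hκ1 : 1 < κ := h.one_lt.trans_le h.lo_le_lim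
  obtain ⟨K, hK, hKf⟩ := h.avg_rpow_le
  obtain ⟨C₁, hC₁, hC₁f⟩ := lintegral_hlMax_rpow_le n h.one_lt
  obtain ⟨C₂, hC₂, hC₂f⟩ := lintegral_hlMax_rpow_le n hκ1
  set D := ∫⁻ x : Rn n, ENNReal.ofReal ((Real.exp 1 + ‖x‖) ^ (-((n:ℝ) + 1)))
  have hD : D ≠ ∞ := lintegral_decay_ne_top n
  set G := ENNReal.ofReal (Real.exp (((n:ℝ) + 1) * (hi * hi * A)))
  have hG : G ≠ ∞ := ENNReal.ofReal_ne_top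
  refine ⟨2 ^ (hi - 1) * (K ^ lo * C₁ + (G * (C₂ * (G + D)) + D)), ?_, fun f hf hint => ?_⟩
  · have : K ^ lo ≠ ∞ := ENNReal.rpow_ne_top_of_nonneg hlo.le hK
    have : (2:ℝ≥0∞) ^ (hi - 1) ≠ ∞ := ENNReal.rpow_ne_top_of_nonneg
      (by linarith [h.lo_le_lim, h.lim_le_hi]) (by simp)
    finiteness
  have hms : MeasurableSet {y | 1 ≤ f y} := measurableSet_le measurable_const hf
  set f₁ := {y | 1 ≤ f y}.indicator f with hf₁
  set f₂ := {y | 1 ≤ f y}ᶜ.indicator f with hf₂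
  have hf₁m : Measurable f₁ := hf.indicator hms
  have hf₂m : Measurable f₂ := hf.indicator hms.compl
  have hf₁i : ∫⁻ y, f₁ y ^ s y ≤ 1 :=
    (lintegral_mono fun y => ENNReal.rpow_le_rpow (indicator_le_self _ _ _) (hs0 y).le).trans hint
  have hf₂i : ∫⁻ y, f₂ y ^ s y ≤ 1 :=
    (lintegral_mono fun y => ENNReal.rpow_le_rpow (indicator_le_self _ _ _) (hs0 y).le).trans hint
  have hf₁1 : ∀ y, f₁ y = 0 ∨ 1 ≤ f₁ y := by
    intro y
    by_cases hy : 1 ≤ f y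
    · right; rwa [hf₁, indicator_of_mem (show y ∈ {y | 1 ≤ f y} from hy)]
    · left; rw [hf₁, indicator_of_notMem (show y ∉ {y | 1 ≤ f y} from hy)]
  have hf₂1 : ∀ y, f₂ y ≤ 1 := by
    intro y
    by_cases hy : 1 ≤ f y
    · rw [hf₂, indicator_of_notMem (by simpa using hy)]; exact zero_le_one
    · rw [hf₂, indicator_of_mem (show y ∈ {y | 1 ≤ f y}ᶜ from hy)]; exact (not_le.1 hy).le
  have hbig : ∫⁻ x, hlMax f₁ x ^ s x ≤ K ^ lo * C₁ := by
    have hpt : ∀ x, hlMax f₁ x ^ s x ≤ K ^ lo * hlMax (fun y => f₁ y ^ (s y / lo)) x ^ lo := by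
      intro x
      rw [← ENNReal.mul_rpow_of_nonneg _ _ hlo.le]
      have hq : 0 < s x / lo := div_pos (hs0 x) hlo
      have : hlMax f₁ x ^ (s x / lo) ≤ K * hlMax (fun y => f₁ y ^ (s y / lo)) x := by
        rw [← ENNReal.le_rpow_inv_iff hq]
        refine iSup_le fun k => ?_
        rw [ENNReal.le_rpow_inv_iff hq]
        refine (hKf f₁ hf₁m hf₁1 hf₁i x _ (by positivity)).trans ?_
        gcongr
        exact le_iSup (fun k : ℤ => (∫⁻ y in Metric.ball x ((2:ℝ) ^ k), f₁ y ^ (s y / lo)) /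
          volume (Metric.ball x ((2:ℝ) ^ k))) k
      calc hlMax f₁ x ^ s x = (hlMax f₁ x ^ (s x / lo)) ^ lo := by
            rw [← ENNReal.rpow_mul, div_mul_cancel₀ _ hlo.ne']
        _ ≤ _ := by gcongr
    have hmq : Measurable fun y => f₁ y ^ (s y / lo) := hf₁m.pow (h.meas.div_const _)
    calc ∫⁻ x, hlMax f₁ x ^ s x
        ≤ ∫⁻ x, K ^ lo * hlMax (fun y => f₁ y ^ (s y / lo)) x ^ lo := lintegral_mono hpt
      _ = K ^ lo * ∫⁻ x, hlMax (fun y => f₁ y ^ (s y / lo)) x ^ lo :=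
          lintegral_const_mul _ ((measurable_hlMax hmq).pow_const _)
      _ ≤ K ^ lo * (C₁ * ∫⁻ x, (f₁ x ^ (s x / lo)) ^ lo) := by
          gcongr; exact hC₁f _ hmq
      _ ≤ K ^ lo * (C₁ * 1) := by
          gcongr
          simpa only [← ENNReal.rpow_mul, div_mul_cancel₀ _ hlo.ne'] using hf₁i
      _ = _ := by rw [mul_one]
  have hcmp : ∀ (g : Rn n → ℝ≥0∞) (_ : ∀ x, g x ≤ 1) (x : Rn n),
      g x ^ s x ≤ G * g x ^ κ + ENNReal.ofReal ((Real.exp 1 + ‖x‖) ^ (-((n:ℝ) + 1))) ∧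
      g x ^ κ ≤ G * g x ^ s x + ENNReal.ofReal ((Real.exp 1 + ‖x‖) ^ (-((n:ℝ) + 1))) := by
    intro g hg x
    constructor
    · exact rpow_compare (hg x) (hs1 x) hκ1.le (h.le_hi x) h.lim_le_hi h.pos (norm_nonneg _)
        (by positivity) (h.dec x)
    · refine rpow_compare (hg x) hκ1.le (hs1 x) h.lim_le_hi (h.le_hi x) h.pos (norm_nonneg _)
        (by positivity) ?_
      rw [abs_sub_comm]; exact h.dec x
  have hDm : Measurable fun x : Rn n =>
      ENNReal.ofReal ((Real.exp 1 + ‖x‖) ^ (-((n:ℝ) + 1))) :=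
    ENNReal.measurable_ofReal.comp ((measurable_norm.const_add _).pow_const _)
  have hf₂κ : ∫⁻ y, f₂ y ^ κ ≤ G + D := by
    calc ∫⁻ y, f₂ y ^ κ ≤ ∫⁻ y, (G * f₂ y ^ s y +
          ENNReal.ofReal ((Real.exp 1 + ‖y‖) ^ (-((n:ℝ) + 1)))) :=
          lintegral_mono fun y => (hcmp f₂ hf₂1 y).2
      _ = G * (∫⁻ y, f₂ y ^ s y) + D := by
          rw [lintegral_add_right _ hDm, lintegral_const_mul _ (hf₂m.pow h.meas)]
      _ ≤ G * 1 + D := by gcongr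
      _ = _ := by rw [mul_one]
  have hsmall : ∫⁻ x, hlMax f₂ x ^ s x ≤ G * (C₂ * (G + D)) + D := by
    calc ∫⁻ x, hlMax f₂ x ^ s x ≤ ∫⁻ x, (G * hlMax f₂ x ^ κ +
          ENNReal.ofReal ((Real.exp 1 + ‖x‖) ^ (-((n:ℝ) + 1)))) :=
          lintegral_mono fun x => (hcmp (hlMax f₂) (fun y => hlMax_le_of_le hf₂1 y) x).1
      _ = G * (∫⁻ x, hlMax f₂ x ^ κ) + D := by
          rw [lintegral_add_right _ hDm,
            lintegral_const_mul _ ((measurable_hlMax hf₂m).pow_const _)]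
      _ ≤ _ := by
          gcongr
          exact (hC₂f f₂ hf₂m).trans (by gcongr)
  calc ∫⁻ x, hlMax f x ^ s x
      ≤ ∫⁻ x, 2 ^ (hi - 1) * (hlMax f₁ x ^ s x + hlMax f₂ x ^ s x) := by
        refine lintegral_mono fun x => ?_
        have h1 : hlMax f x ≤ hlMax f₁ x + hlMax f₂ x := by
          refine le_trans (hlMax_mono (fun y => ?_) x) (hlMax_add_le hf₁m f₂ x)
          exact (indicator_self_add_compl_apply _ f y).ge
        calc hlMax f x ^ s x ≤ (hlMax f₁ x + hlMax f₂ x) ^ s x :=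
              ENNReal.rpow_le_rpow h1 (hs0 x).le
          _ ≤ 2 ^ (s x - 1) * (hlMax f₁ x ^ s x + hlMax f₂ x ^ s x) :=
              ENNReal.rpow_add_le_mul_rpow_add_rpow _ _ (hs1 x)
          _ ≤ _ := by
              gcongr
              · norm_num
              · exact h.le_hi x
    _ = 2 ^ (hi - 1) * ((∫⁻ x, hlMax f₁ x ^ s x) + ∫⁻ x, hlMax f₂ x ^ s x) := by
        have hm1 := (measurable_hlMax hf₁m).pow h.meas
        have hm2 := (measurable_hlMax hf₂m).pow h.meas
        have hm12 : Measurable fun x => hlMax f₁ x ^ s x + hlMax f₂ x ^ s x := hm1.add hm2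
        rw [lintegral_const_mul _ hm12, lintegral_add_left hm1]
    _ ≤ _ := by gcongr

end VarExp

section Exponents
open Filter Topology
variable {n : ℕ}

lemma IsPLog.continuous {p : Rn n → ℝ} (hp : IsPLog univ p) : Continuous p := by
  obtain ⟨-, h1, C₁, hC₁, -, -, -, hloc, -⟩ := hp
  have hinv : Continuous fun x => 1 / p x := by
    rw [continuous_iff_continuousAt]
    intro x
    rw [continuousAt_iff_punctured_nhds, tendsto_iff_dist_tendsto_zero]
    have hlog : Tendsto (fun y => C₁ / Real.log (Real.exp 1 + 1 / ‖x - y‖)) (𝓝[≠] x) (𝓝 0) := by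
      refine Tendsto.const_div_atTop (Real.tendsto_log_atTop.comp
        (tendsto_atTop_add_const_left _ _ ?_)) _
      have : Tendsto (fun y => ‖x - y‖) (𝓝[≠] x) (𝓝[>] 0) := by
        simp_rw [norm_sub_rev x]
        exact tendsto_norm_sub_self_nhdsNE x
      simp only [one_div]
      exact tendsto_inv_nhdsGT_zero.comp this
    refine squeeze_zero' (Eventually.of_forall fun _ => dist_nonneg) ?_ hlog
    filter_upwards [self_mem_nhdsWithin] with y hy
    rw [dist_comm, Real.dist_eq]
    exact hloc x trivial y trivial (Ne.symm hy)
  have := hinv.inv₀ fun x => by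
    have := h1 x trivial
    positivity
  refine this.congr fun x => ?_
  simp

lemma IsPLog.exists_varExp (hn : 1 ≤ n) {p : Rn n → ℝ} (hp : IsPLog univ p) {pm P c : ℝ}
    (hc : 0 < c) (hcm : c < pm) (hpm : ∀ᵐ x ∂(volume : Measure (Rn n)), pm ≤ p x)
    (hP : ∀ᵐ x ∂(volume : Measure (Rn n)), p x ≤ P) :
    ∃ A κ, VarExp n (fun x => p x / c) (pm / c) (P / c) A κ := by
  have hcont := hp.continuous
  have hpm' : ∀ x, pm ≤ p x := by
    have hd := Measure.dense_of_ae hpm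
    have hcl : IsClosed {x | pm ≤ p x} := isClosed_le continuous_const hcont
    exact fun x => hcl.closure_subset (hd x)
  have hP' : ∀ x, p x ≤ P := by
    have hd := Measure.dense_of_ae hP
    have hcl : IsClosed {x | p x ≤ P} := isClosed_le hcont continuous_const
    exact fun x => hcl.closure_subset (hd x)
  obtain ⟨hmeas, -, C₁, hC₁, C₂, hC₂, pinf, hloc, hdec⟩ := hp
  have hpm0 : 0 < pm := hc.trans hcm
  have hP0 : 0 < P := hpm0.trans_le ((hpm' 0).trans (hP' 0))
  have hp0 : ∀ x, 0 < p x := fun x => hpm0.trans_le (hpm' x)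
  have : Nonempty (Fin n) := ⟨⟨0, hn⟩⟩
  have hlim : Tendsto (fun x => 1 / p x) (Bornology.cobounded (Rn n)) (𝓝 (1 / pinf)) := by
    rw [tendsto_iff_dist_tendsto_zero]
    refine squeeze_zero (fun _ => dist_nonneg) (fun x => hdec x trivial) ?_
    exact Tendsto.const_div_atTop (Real.tendsto_log_atTop.comp
        (tendsto_atTop_add_const_left _ _ tendsto_norm_cobounded_atTop)) _
  have hne : (Bornology.cobounded (Rn n)).NeBot := inferInstance
  have hl1 : 1 / pinf ≤ 1 / pm := le_of_tendsto' hlim fun x =>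
    one_div_le_one_div_of_le hpm0 (hpm' x)
  have hl2 : 1 / P ≤ 1 / pinf := ge_of_tendsto' hlim fun x =>
    one_div_le_one_div_of_le (hp0 x) (hP' x)
  have hpinf : 0 < pinf := one_div_pos.1 (lt_of_lt_of_le (by positivity) hl2)
  have hkey : ∀ a b L D : ℝ, D ∈ ({C₁, C₂} : Set ℝ) → 0 ≤ L → |1 / a - 1 / b| ≤ D / L →
      |1 / (a / c) - 1 / (b / c)| ≤ c * max C₁ C₂ / L := by
    intro a b L D hD hL h
    have h1 : 1 / (a / c) - 1 / (b / c) = c * (1 / a - 1 / b) := by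
      rw [one_div_div, one_div_div]; ring
    rw [h1, abs_mul, abs_of_pos hc, mul_div_assoc]
    have hDm : D ≤ max C₁ C₂ := by
      rcases hD with rfl | rfl
      · exact le_max_left _ _
      · exact le_max_right _ _
    gcongr
    exact h.trans (by gcongr)
  refine ⟨c * max C₁ C₂, pinf / c, ?_⟩
  constructor
  · exact hmeas.div_const c
  · rwa [one_lt_div hc]
  · exact fun x => by have := hpm' x; gcongr
  · exact fun x => by have := hP' x; gcongr
  · positivity
  · intro x y hxy
    exact hkey _ _ _ C₁ (by simp)
      (zero_le_one.trans (one_le_log_exp_add (by positivity))) (hloc x trivial y trivial hxy)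
  · intro x
    exact hkey _ _ _ C₂ (by simp)
      (zero_le_one.trans (one_le_log_exp_add (by positivity))) (hdec x trivial)
  · gcongr
    exact (one_div_le_one_div hpinf hpm0).1 hl1
  · gcongr
    exact (one_div_le_one_div hP0 hpinf).1 hl2

end Exponents

section Modular
variable {n : ℕ}

/-- Scaling inside a modular with exponents at least one absorbs a multiplicative constant. -/
lemma lintegral_div_rpow_le_one {X : Type*} [MeasurableSpace X] {μ : Measure X} {s : X → ℝ}
    {C : ℝ≥0∞} (hC1 : 1 ≤ C) (hC : C ≠ ∞) (hs : ∀ x, 1 ≤ s x) {g : X → ℝ≥0∞}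
    (h : ∫⁻ x, g x ^ s x ∂μ ≤ C) : ∫⁻ x, (g x / C) ^ s x ∂μ ≤ 1 := by
  have hC0 : C ≠ 0 := (zero_lt_one.trans_le hC1).ne'
  calc ∫⁻ x, (g x / C) ^ s x ∂μ ≤ ∫⁻ x, C⁻¹ * g x ^ s x ∂μ := by
        refine lintegral_mono fun x => ?_
        rw [div_eq_mul_inv, ENNReal.mul_rpow_of_nonneg _ _ (by linarith [hs x]), mul_comm]
        gcongr
        exact ENNReal.rpow_le_self_of_le_one (ENNReal.inv_le_one.2 hC1) (hs x)
    _ = C⁻¹ * ∫⁻ x, g x ^ s x ∂μ := lintegral_const_mul' _ _ (ENNReal.inv_ne_top.2 hC0)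
    _ ≤ C⁻¹ * C := by gcongr
    _ = 1 := ENNReal.inv_mul_cancel hC0 hC

lemma VarExp.lintegral_hlMax_div_le {s : Rn n → ℝ} {lo hi A κ : ℝ} (h : VarExp n s lo hi A κ) :
    ∃ C : ℝ≥0∞, 1 ≤ C ∧ C ≠ ∞ ∧ ∀ (lam : ℝ≥0∞) (f : Rn n → ℝ≥0∞), Measurable f →
      ∫⁻ y, (f y / lam) ^ s y ≤ 1 → ∫⁻ x, (hlMax f x / (C * lam)) ^ s x ≤ 1 := by
  obtain ⟨C, hC, hCf⟩ := h.lintegral_hlMax_le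
  have hs : ∀ x, 1 ≤ s x := fun x => h.one_lt.le.trans (h.lo_le x)
  refine ⟨max 1 C, le_max_left _ _, by simp [hC], fun lam f hf hint => ?_⟩
  have h1 := hCf _ (hf.div_const lam) hint
  have h2 := lintegral_div_rpow_le_one (le_max_left 1 C) (by simp [hC]) hs
    (h1.trans (le_max_right 1 C))
  refine le_trans (lintegral_mono fun x => ?_) h2
  rw [hlMax_div hf]
  refine ENNReal.rpow_le_rpow (le_of_eq ?_) (by linarith [hs x])
  rw [div_eq_mul_inv, div_eq_mul_inv, div_eq_mul_inv, mul_assoc,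
    ENNReal.mul_inv (Or.inl (zero_lt_one.trans_le (le_max_left _ _)).ne') (Or.inl (by simp [hC]))]
  ring

lemma varExp_const (n : ℕ) {q : ℝ} (hq : 1 < q) : VarExp n (fun _ => q) q q 1 q where
  meas := measurable_const
  one_lt := hq
  lo_le _ := le_rfl
  le_hi _ := le_rfl
  pos := one_pos
  loc x y _ := by
    have := one_le_log_exp_add (a := 1 / ‖x - y‖) (by positivity)
    rw [sub_self, abs_zero]; positivity
  dec x := by
    have := one_le_log_exp_add (norm_nonneg x)
    rw [sub_self, abs_zero]; positivity
  lo_le_lim := le_rfl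
  lim_le_hi := le_rfl

/-- For finite positive radii the Luxemburg ball is the sublevel set of the modular. -/
lemma lintegral_div_rpow_le_one_of_luxNorm_le {X : Type*} [MeasurableSpace X] {μ : Measure X}
    {s : X → ℝ} (hs : Measurable s) (hs0 : ∀ x, 0 < s x) {f : X → ℝ≥0∞} (hf : Measurable f)
    {R : ℝ≥0∞} (hR : R ≠ ∞) (h : luxNorm μ s f ≤ R) :
    ∫⁻ x, (f x / R) ^ s x ∂μ ≤ 1 := by
  have hk : ∀ k : ℕ, ∫⁻ x, (f x / (R + ((k:ℝ≥0∞) + 1)⁻¹)) ^ s x ∂μ ≤ 1 := by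
    intro k
    have hlt : luxNorm μ s f < R + ((k:ℝ≥0∞) + 1)⁻¹ :=
      h.trans_lt (ENNReal.lt_add_right hR (ENNReal.inv_ne_zero.2 (by finiteness)))
    obtain ⟨lam, ⟨-, hl⟩, hlt'⟩ := sInf_lt_iff.1 hlt
    refine le_trans (lintegral_mono fun x => ?_) hl
    exact ENNReal.rpow_le_rpow (ENNReal.div_le_div_left hlt'.le _) (hs0 x).le
  have hlim : ∀ x, Filter.Tendsto (fun k : ℕ => (f x / (R + ((k:ℝ≥0∞) + 1)⁻¹)) ^ s x)
      Filter.atTop (nhds ((f x / R) ^ s x)) := by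
    intro x
    refine (ENNReal.continuous_rpow_const.tendsto _).comp ?_
    simp only [div_eq_mul_inv]
    refine ENNReal.Tendsto.const_mul ?_ (Or.inl (ENNReal.inv_ne_zero.2 hR))
    refine tendsto_inv_iff.2 ?_
    have h1 : Filter.Tendsto (fun k : ℕ => ((k:ℝ≥0∞) + 1)⁻¹) Filter.atTop (nhds 0) := by
      have := (ENNReal.tendsto_inv_nat_nhds_zero).comp (Filter.tendsto_add_atTop_nat 1)
      refine this.congr fun k => ?_
      simp
    simpa using h1.const_add R
  calc ∫⁻ x, (f x / R) ^ s x ∂μ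
      = ∫⁻ x, Filter.liminf (fun k : ℕ => (f x / (R + ((k:ℝ≥0∞) + 1)⁻¹)) ^ s x)
          Filter.atTop ∂μ := lintegral_congr fun x => (hlim x).liminf_eq.symm
    _ ≤ Filter.liminf (fun k : ℕ => ∫⁻ x, (f x / (R + ((k:ℝ≥0∞) + 1)⁻¹)) ^ s x ∂μ)
          Filter.atTop := lintegral_liminf_le fun k => (hf.div_const _).pow hs
    _ ≤ 1 := by
        refine (Filter.liminf_le_liminf (Filter.Eventually.of_forall hk)).trans ?_
        simp

lemma luxNorm_le_of_lintegral {X : Type*} [MeasurableSpace X] {μ : Measure X}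
    {s : X → ℝ} {f : X → ℝ≥0∞} {R : ℝ≥0∞} (hR0 : 0 < R)
    (h : ∫⁻ x, (f x / R) ^ s x ∂μ ≤ 1) : luxNorm μ s f ≤ R := sInf_le ⟨hR0, h⟩

/-- Three functions of size `R / 9` add up to a function of size `R` in the modular sense. -/
lemma lintegral_add_three_le {X : Type*} [MeasurableSpace X] {μ : Measure X} {s : X → ℝ}
    (hs : ∀ x, 1 ≤ s x) {f f₁ f₂ f₃ : X → ℝ≥0∞} {R : ℝ≥0∞}
    (hsm : Measurable s)
    (hf : ∀ᵐ x ∂μ, f x ≤ f₁ x + f₂ x + f₃ x)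
    (hf₁ : Measurable f₁) (hf₂ : Measurable f₂)
    (h₁ : ∫⁻ x, (f₁ x / (R / 9)) ^ s x ∂μ ≤ 1) (h₂ : ∫⁻ x, (f₂ x / (R / 9)) ^ s x ∂μ ≤ 1)
    (h₃ : ∫⁻ x, (f₃ x / (R / 9)) ^ s x ∂μ ≤ 1) : ∫⁻ x, (f x / R) ^ s x ∂μ ≤ 1 := by
  have hsc : ∀ (g : X → ℝ≥0∞) (x : X), (9 * g x / R) ^ s x = (g x / (R / 9)) ^ s x := by
    intro g x
    congr 1
    rw [ENNReal.div_eq_inv_mul, ENNReal.div_eq_inv_mul, ENNReal.inv_div (by simp) (by simp),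
      ENNReal.div_eq_inv_mul]
    ring
  have hpt : ∀ᵐ x ∂μ, (f x / R) ^ s x ≤ 3⁻¹ * ((9 * f₁ x / R) ^ s x + (9 * f₂ x / R) ^ s x
      + (9 * f₃ x / R) ^ s x) := by
    filter_upwards [hf] with x hx
    have hs0 : 0 ≤ s x := by linarith [hs x]
    set M := max (f₁ x) (max (f₂ x) (f₃ x))
    have h0 : f x ≤ 3 * M := by
      calc f x ≤ M + M + M := hx.trans (add_le_add (add_le_add (le_max_left _ _)
            ((le_max_left _ _).trans (le_max_right _ _)))
            ((le_max_right _ _).trans (le_max_right _ _)))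
        _ = 3 * M := by ring
    have h1 : (f x / R) ^ s x ≤ 3⁻¹ * (9 * M / R) ^ s x := by
      have e : f x / R ≤ 3⁻¹ * (9 * M / R) := by
        calc f x / R ≤ 3 * M / R := by gcongr
          _ = 3⁻¹ * (9 * M / R) := by
            rw [show (9:ℝ≥0∞) * M = 3 * (3 * M) by ring, mul_div_assoc 3 (3 * M), ← mul_assoc,
              ENNReal.inv_mul_cancel (by simp) (by simp), one_mul]
      calc (f x / R) ^ s x ≤ (3⁻¹ * (9 * M / R)) ^ s x := ENNReal.rpow_le_rpow e hs0
        _ = 3⁻¹ ^ s x * (9 * M / R) ^ s x := ENNReal.mul_rpow_of_nonneg _ _ hs0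
        _ ≤ _ := by
          gcongr
          exact ENNReal.rpow_le_self_of_le_one (by simp) (hs x)
    refine h1.trans ?_
    gcongr
    rcases le_total (f₁ x) (max (f₂ x) (f₃ x)) with h | h
    · rcases le_total (f₂ x) (f₃ x) with h' | h'
      · rw [show M = f₃ x by simp only [M]; rw [max_eq_right h, max_eq_right h']]
        exact le_add_self
      · rw [show M = f₂ x by simp only [M]; rw [max_eq_right h, max_eq_left h']]
        exact le_add_self.trans le_self_add
    · rw [show M = f₁ x by simp only [M]; rw [max_eq_left h]]
      exact le_self_add.trans le_self_add
  have hm₁ : Measurable fun x => (9 * f₁ x / R) ^ s x := ((hf₁.const_mul 9).div_const R).pow hsm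
  have hm₂ : Measurable fun x => (9 * f₂ x / R) ^ s x := ((hf₂.const_mul 9).div_const R).pow hsm
  have hm12 : Measurable fun x => (9 * f₁ x / R) ^ s x + (9 * f₂ x / R) ^ s x := hm₁.add hm₂
  calc ∫⁻ x, (f x / R) ^ s x ∂μ ≤ _ := lintegral_mono_ae hpt
    _ = 3⁻¹ * ((∫⁻ x, (9 * f₁ x / R) ^ s x ∂μ) + (∫⁻ x, (9 * f₂ x / R) ^ s x ∂μ)
        + ∫⁻ x, (9 * f₃ x / R) ^ s x ∂μ) := by
        rw [lintegral_const_mul' _ _ (by simp), lintegral_add_left hm12, lintegral_add_left hm₁]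
    _ ≤ 3⁻¹ * (1 + 1 + 1) := by simp only [hsc]; gcongr
    _ = 1 := by
        rw [show (1:ℝ≥0∞) + 1 + 1 = 3 by norm_num]
        exact ENNReal.inv_mul_cancel (by simp) (by simp)

end Modular

section Hedberg
variable {n : ℕ}

@[fun_prop]
lemma measurable_ofReal_rpow (a : ℝ) : Measurable fun t : ℝ => ENNReal.ofReal (t ^ a) :=
  ENNReal.measurable_ofReal.comp (measurable_id.pow_const a)

lemma lintegral_rpow_sub_one_Ioo {q x : ℝ} (hq : 0 < q) (hx : 0 ≤ x) :
    ∫⁻ a in Ioo (0:ℝ) x, ENNReal.ofReal (a ^ (q - 1)) = ENNReal.ofReal (x ^ q / q) := by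
  have h := lintegral_rpow_Ioo hq hx
  simp only [ENNReal.ofReal_mul hq.le] at h
  rw [lintegral_const_mul _ (measurable_ofReal_rpow _)] at h
  rw [ENNReal.ofReal_div_of_pos hq, ← h, mul_comm, ENNReal.mul_div_cancel_right
    (by simpa using hq) (by simp)]

lemma lintegral_rpow_Ioi {a c : ℝ} (ha : a < -1) (hc : 0 < c) :
    ∫⁻ t in Ioi c, ENNReal.ofReal (t ^ a) = ENNReal.ofReal (-c ^ (a + 1) / (a + 1)) := by
  rw [← integral_Ioi_rpow_of_lt ha hc, ofReal_integral_eq_lintegral_ofReal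
    (integrableOn_Ioi_rpow_of_lt ha hc)]
  refine (ae_restrict_iff' measurableSet_Ioi).2 (Filter.Eventually.of_forall fun t ht => ?_)
  exact Real.rpow_nonneg (hc.trans ht).le _

/-- The Riesz potential of order `σ`. -/
def rieszPot (σ : ℝ) (f : Rn n → ℝ≥0∞) (x : Rn n) : ℝ≥0∞ :=
  ∫⁻ y, ENNReal.ofReal (‖x - y‖ ^ (σ - n)) * f y

lemma measurable_rieszPot (σ : ℝ) {f : Rn n → ℝ≥0∞} (hf : Measurable f) :
    Measurable (rieszPot σ f) := by
  suffices Measurable fun z : Rn n × Rn n => ENNReal.ofReal (‖z.1 - z.2‖ ^ (σ - n)) * f z.2 from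
    this.lintegral_prod_right'
  refine Measurable.mul (ENNReal.measurable_ofReal.comp ?_) (hf.comp measurable_snd)
  exact ((measurable_fst.sub measurable_snd).norm).pow_const _

lemma rieszPot_const_mul (σ : ℝ) {c : ℝ≥0∞} (hc : c ≠ ∞) (f : Rn n → ℝ≥0∞) (x : Rn n) :
    rieszPot σ (fun y => c * f y) x = c * rieszPot σ f x := by
  simp only [rieszPot]
  rw [← lintegral_const_mul' _ _ hc]
  exact lintegral_congr fun y => by ring

lemma rieszPot_le_lintegral_ball (hn : 1 ≤ n) {σ : ℝ} (hσn : σ < n) {f : Rn n → ℝ≥0∞}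
    (hf : Measurable f) (x : Rn n) :
    rieszPot σ f x ≤ ENNReal.ofReal (n - σ) *
      ∫⁻ ρ in Ioi (0:ℝ), ENNReal.ofReal (ρ ^ (σ - n - 1)) * ∫⁻ y in Metric.ball x ρ, f y := by
  have : Nonempty (Fin n) := ⟨⟨0, hn⟩⟩
  have hm : Measurable fun z : ℝ × Rn n =>
      {z : ℝ × Rn n | ‖x - z.2‖ < z.1}.indicator
        (fun z => ENNReal.ofReal (z.1 ^ (σ - n - 1)) * f z.2) z := by
    refine Measurable.indicator ?_ (measurableSet_lt ?_ measurable_fst)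
    · exact (ENNReal.measurable_ofReal.comp (measurable_fst.pow_const _)).mul
        (hf.comp measurable_snd)
    · exact (measurable_snd.const_sub x).norm
  have hpt : ∀ᵐ y : Rn n, ENNReal.ofReal (‖x - y‖ ^ (σ - n)) * f y = ENNReal.ofReal (n - σ) *
      ∫⁻ ρ in Ioi (0:ℝ), {z : ℝ × Rn n | ‖x - z.2‖ < z.1}.indicator
        (fun z => ENNReal.ofReal (z.1 ^ (σ - n - 1)) * f z.2) (ρ, y) := by
    have hne : ∀ᵐ y : Rn n, y ≠ x := by
      exact compl_mem_ae_iff.2 (measure_singleton x)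
    filter_upwards [hne] with y hy
    have hd : 0 < ‖x - y‖ := norm_pos_iff.2 (sub_ne_zero.2 hy.symm)
    have e : ∀ ρ, {z : ℝ × Rn n | ‖x - z.2‖ < z.1}.indicator
        (fun z => ENNReal.ofReal (z.1 ^ (σ - n - 1)) * f z.2) (ρ, y) =
        (Ioi ‖x - y‖).indicator (fun ρ => ENNReal.ofReal (ρ ^ (σ - n - 1)) * f y) ρ := by
      intro ρ
      simp only [indicator, mem_Ioi]
      rfl
    simp only [e]
    rw [setLIntegral_indicator measurableSet_Ioi,
      inter_eq_left.2 (Ioi_subset_Ioi hd.le), lintegral_mul_const _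
        (measurable_ofReal_rpow _),
      lintegral_rpow_Ioi (by linarith) hd, ← mul_assoc,
      ← ENNReal.ofReal_mul (by linarith)]
    congr 2
    rw [show σ - n - 1 + 1 = σ - n by ring]
    have : σ - n ≠ 0 := by linarith
    field_simp
    ring
  rw [rieszPot, lintegral_congr_ae hpt, lintegral_const_mul _ ?_, lintegral_lintegral_swap]
  · gcongr with ρ
    have e : ∀ y, {z : ℝ × Rn n | ‖x - z.2‖ < z.1}.indicator
        (fun z => ENNReal.ofReal (z.1 ^ (σ - n - 1)) * f z.2) (ρ, y) =
        (Metric.ball x ρ).indicator (fun y => ENNReal.ofReal (ρ ^ (σ - n - 1)) * f y) y := by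
      intro y
      simp only [indicator, Metric.mem_ball', dist_eq_norm]
      rfl
    simp only [e]
    rw [lintegral_indicator Metric.isOpen_ball.measurableSet, lintegral_const_mul _ hf]
  · exact (hm.comp measurable_swap).aemeasurable
  · exact (hm.comp measurable_swap).lintegral_prod_right'

lemma lintegral_ball_le_of_lintegral_rpow {f : Rn n → ℝ≥0∞} (hf : Measurable f) {q : ℝ}
    (hq : 1 < q) (h : ∫⁻ y, f y ^ q ≤ 1) (B : Set (Rn n)) :
    ∫⁻ y in B, f y ≤ volume B ^ (1 - 1 / q) := by
  have hpq := Real.HolderConjugate.conjExponent hq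
  have h1 := ENNReal.lintegral_mul_le_Lp_mul_Lq (volume.restrict B) hpq hf.aemeasurable
    (aemeasurable_const (b := (1:ℝ≥0∞)))
  simp only [Pi.mul_apply, mul_one, ENNReal.one_rpow, lintegral_const, Measure.restrict_apply
    MeasurableSet.univ, univ_inter, one_mul] at h1
  have h2 : 1 / q.conjExponent = 1 - 1 / q := by
    have := hpq.inv_add_inv_eq_one
    rw [one_div, one_div]; linarith
  rw [h2] at h1
  refine h1.trans (mul_le_of_le_one_left' ?_)
  refine ENNReal.rpow_le_one ((setLIntegral_le_lintegral _ _).trans h) (by positivity)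

/-- Hedberg's inequality. -/
lemma rieszPot_le_hlMax_rpow (hn : 1 ≤ n) {σ q : ℝ} (hσ : 0 < σ) (hq : 1 < q) (hσq : σ * q < n) :
    ∃ C : ℝ≥0∞, C ≠ ∞ ∧ ∀ f : Rn n → ℝ≥0∞, Measurable f → ∫⁻ y, f y ^ q ≤ 1 → ∀ x,
      rieszPot σ f x ≤ C * hlMax f x ^ (1 - σ * q / n) := by
  have hn0 : (0:ℝ) < n := by positivity
  have hσn : σ < n := by nlinarith
  set V := volume (Metric.ball (0 : Rn n) 1)
  have hVt : V ≠ ∞ := volume_ball_ne_top _ _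
  have hq1 : 0 < 1 - 1 / q := by
    rw [sub_pos, div_lt_one (by linarith)]; exact hq
  have hθ : 0 < 1 - σ * q / n := by
    rw [sub_pos, div_lt_one hn0]; exact hσq
  have hnq : 0 < n / q - σ := by
    rw [sub_pos, lt_div_iff₀ (by linarith)]; exact hσq
  set c₁ : ℝ≥0∞ := 2 ^ n * V * ENNReal.ofReal (1 / σ)
  set c₂ : ℝ≥0∞ := V ^ (1 - 1 / q) * ENNReal.ofReal (1 / (n / q - σ))
  have hc₁ : c₁ ≠ ∞ := by finiteness
  have hc₂ : c₂ ≠ ∞ := by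
    have : V ^ (1 - 1 / q) ≠ ∞ := ENNReal.rpow_ne_top_of_nonneg hq1.le hVt
    finiteness
  refine ⟨ENNReal.ofReal (n - σ) * (c₁ + c₂) + 1, by finiteness, fun f hf hint x => ?_⟩
  have hI := rieszPot_le_lintegral_ball hn hσn hf x
  rcases eq_or_ne (hlMax f x) ∞ with hM | hM
  · rw [hM, ENNReal.top_rpow_of_pos hθ, ENNReal.mul_top (by simp)]; exact le_top
  rcases eq_or_ne (hlMax f x) 0 with hM0 | hM0
  · refine hI.trans ?_
    rw [setLIntegral_congr_fun measurableSet_Ioi (g := fun _ => 0) ?_]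
    · simp
    · intro ρ hρ
      have := lintegral_ball_le_hlMax f x hρ
      rw [hM0, mul_zero, nonpos_iff_eq_zero] at this
      simp only
      rw [this, mul_zero]
  set M := (hlMax f x).toReal
  have hMp : 0 < M := ENNReal.toReal_pos hM0 hM
  have hMe : hlMax f x = ENNReal.ofReal M := (ENNReal.ofReal_toReal hM).symm
  set δ := M ^ (-(q / n))
  have hδ : 0 < δ := by positivity
  have hMθ : hlMax f x ^ (1 - σ * q / n) = ENNReal.ofReal (M ^ (1 - σ * q / n)) := by
    rw [hMe, ENNReal.ofReal_rpow_of_nonneg hMp.le hθ.le]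
  have hsplit : ∫⁻ ρ in Ioi (0:ℝ), ENNReal.ofReal (ρ ^ (σ - n - 1)) *
      ∫⁻ y in Metric.ball x ρ, f y =
      (∫⁻ ρ in Ioo 0 δ, ENNReal.ofReal (ρ ^ (σ - n - 1)) * ∫⁻ y in Metric.ball x ρ, f y) +
      ∫⁻ ρ in Ioi δ, ENNReal.ofReal (ρ ^ (σ - n - 1)) * ∫⁻ y in Metric.ball x ρ, f y := by
    rw [← Ioc_union_Ioi_eq_Ioi hδ.le, lintegral_union measurableSet_Ioi
      (Ioc_disjoint_Ioi le_rfl), setLIntegral_congr Ioo_ae_eq_Ioc]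
  have h₁ : ∫⁻ ρ in Ioo 0 δ, ENNReal.ofReal (ρ ^ (σ - n - 1)) * ∫⁻ y in Metric.ball x ρ, f y ≤
      c₁ * hlMax f x ^ (1 - σ * q / n) := by
    calc _ ≤ ∫⁻ ρ in Ioo 0 δ, (2 ^ n * V * hlMax f x) * ENNReal.ofReal (ρ ^ (σ - 1)) := by
          refine setLIntegral_mono' measurableSet_Ioo fun ρ hρ => ?_
          calc _ ≤ ENNReal.ofReal (ρ ^ (σ - n - 1)) *
                (2 ^ n * volume (Metric.ball x ρ) * hlMax f x) := by
                gcongr; exact lintegral_ball_le_hlMax f x hρ.1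
            _ = (2 ^ n * V * hlMax f x) * (ENNReal.ofReal (ρ ^ (σ - n - 1)) *
                ENNReal.ofReal (ρ ^ n)) := by
                rw [volume_ball_eq x hρ.1]; ring
            _ = _ := by
                rw [← ENNReal.ofReal_mul (Real.rpow_nonneg hρ.1.le _), ← Real.rpow_natCast,
                  ← Real.rpow_add hρ.1, show σ - n - 1 + n = σ - 1 by ring]
      _ = (2 ^ n * V * hlMax f x) * ENNReal.ofReal (δ ^ σ / σ) := by
          rw [lintegral_const_mul _
            (measurable_ofReal_rpow _),
            lintegral_rpow_sub_one_Ioo hσ hδ.le]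
      _ = c₁ * hlMax f x ^ (1 - σ * q / n) := by
          rw [hMθ, hMe, mul_assoc, mul_assoc (2 ^ n * V), ← ENNReal.ofReal_mul hMp.le,
            ← ENNReal.ofReal_mul (by positivity)]
          congr 2
          have : M * δ ^ σ = M ^ (1 - σ * q / n) := by
            rw [← Real.rpow_mul hMp.le, ← Real.rpow_one_add' hMp.le]
            · congr 1; ring
            · rw [show 1 + -(q / n) * σ = 1 - σ * q / n by ring]; exact hθ.ne'
          rw [← this]; ring
  have h₂ : ∫⁻ ρ in Ioi δ, ENNReal.ofReal (ρ ^ (σ - n - 1)) * ∫⁻ y in Metric.ball x ρ, f y ≤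
      c₂ * hlMax f x ^ (1 - σ * q / n) := by
    calc _ ≤ ∫⁻ ρ in Ioi δ, V ^ (1 - 1 / q) * ENNReal.ofReal (ρ ^ (σ - 1 - n / q)) := by
          refine setLIntegral_mono' measurableSet_Ioi fun ρ hρ => ?_
          have hρ0 : 0 < ρ := hδ.trans hρ
          calc _ ≤ ENNReal.ofReal (ρ ^ (σ - n - 1)) *
                volume (Metric.ball x ρ) ^ (1 - 1 / q) := by
                gcongr; exact lintegral_ball_le_of_lintegral_rpow hf hq hint _
            _ = V ^ (1 - 1 / q) * (ENNReal.ofReal (ρ ^ (σ - n - 1)) *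
                ENNReal.ofReal ((ρ ^ n) ^ (1 - 1 / q))) := by
                rw [volume_ball_eq x hρ0, ENNReal.mul_rpow_of_nonneg _ _ hq1.le,
                  ENNReal.ofReal_rpow_of_nonneg (by positivity) hq1.le]; ring
            _ = _ := by
                rw [← ENNReal.ofReal_mul (Real.rpow_nonneg hρ0.le _), ← Real.rpow_natCast,
                  ← Real.rpow_mul hρ0.le, ← Real.rpow_add hρ0]
                congr 3
                field_simp
                ring
      _ = V ^ (1 - 1 / q) * ENNReal.ofReal (-δ ^ (σ - n / q) / (σ - n / q)) := by
          rw [lintegral_const_mul _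
            (measurable_ofReal_rpow _),
            lintegral_rpow_Ioi (by linarith) hδ, show σ - 1 - n / q + 1 = σ - n / q by ring]
      _ = c₂ * hlMax f x ^ (1 - σ * q / n) := by
          rw [hMθ, mul_assoc, ← ENNReal.ofReal_mul (by positivity)]
          congr 2
          have h3 : δ ^ (σ - n / q) = M ^ (1 - σ * q / n) := by
            rw [← Real.rpow_mul hMp.le]
            congr 1
            field_simp
            ring
          rw [h3, show σ - n / q = -(n / q - σ) by ring, div_neg, neg_div, neg_neg]
          ring
  calc rieszPot σ f x ≤ ENNReal.ofReal (n - σ) *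
        (c₁ * hlMax f x ^ (1 - σ * q / n) + c₂ * hlMax f x ^ (1 - σ * q / n)) := by
        refine hI.trans ?_
        rw [hsplit]
        gcongr
    _ = ENNReal.ofReal (n - σ) * (c₁ + c₂) * hlMax f x ^ (1 - σ * q / n) := by ring
    _ ≤ _ := by gcongr; exact le_self_add

end Hedberg

section Stable
open Filter Topology ProbabilityTheory

lemma one_sub_exp_neg_nonneg {x : ℝ} (hx : 0 ≤ x) : 0 ≤ 1 - Real.exp (-x) := by
  have : Real.exp (-x) ≤ 1 := Real.exp_le_one_iff.2 (by linarith)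
  linarith

lemma integrableOn_levy {α lam : ℝ} (h0 : 0 < α) (h1 : α < 1) (hlam : 0 ≤ lam) :
    IntegrableOn (fun s : ℝ => (1 - Real.exp (-(s * lam))) * (α * s ^ (-(α + 1)))) (Ioi 0) := by
  have hm : Measurable fun s : ℝ => (1 - Real.exp (-(s * lam))) * (α * s ^ (-(α + 1))) := by
    fun_prop
  rw [← Ioc_union_Ioi_eq_Ioi zero_le_one]
  refine IntegrableOn.union ?_ ?_
  · have hi : IntegrableOn (fun s : ℝ => lam * α * s ^ (-α)) (Ioc 0 1) :=
      ((intervalIntegrable_iff_integrableOn_Ioc_of_le zero_le_one).1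
        (intervalIntegral.intervalIntegrable_rpow' (by linarith))).const_mul _
    refine hi.mono' hm.aestronglyMeasurable ?_
    filter_upwards [ae_restrict_mem measurableSet_Ioc] with s hs
    have hs0 : 0 < s := hs.1
    have := one_sub_exp_neg_nonneg (x := s * lam) (by positivity)
    rw [Real.norm_of_nonneg (by positivity)]
    have h2 : 1 - Real.exp (-(s * lam)) ≤ s * lam := by
      have := Real.add_one_le_exp (-(s * lam)); linarith
    calc _ ≤ s * lam * (α * s ^ (-(α + 1))) := by gcongr
      _ = lam * α * (s ^ (-(α + 1)) * s) := by ring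
      _ = _ := by
        rw [← Real.rpow_add_one hs0.ne']; congr 2; ring
  · have hi : IntegrableOn (fun s : ℝ => α * s ^ (-(α + 1))) (Ioi 1) :=
      (integrableOn_Ioi_rpow_of_lt (by linarith) one_pos).const_mul _
    refine hi.mono' hm.aestronglyMeasurable ?_
    filter_upwards [ae_restrict_mem measurableSet_Ioi] with s hs
    have hs0 : 0 < s := one_pos.trans hs
    have := one_sub_exp_neg_nonneg (x := s * lam) (by positivity)
    rw [Real.norm_of_nonneg (by positivity)]
    refine mul_le_of_le_one_left (by positivity) ?_
    linarith [Real.exp_pos (-(s * lam))]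

lemma integral_levy {α lam : ℝ} (hlam : 0 < lam) :
    ∫ s in Ioi (0:ℝ), (1 - Real.exp (-(s * lam))) * (α * s ^ (-(α + 1))) =
      lam ^ α * ∫ s in Ioi (0:ℝ), (1 - Real.exp (-s)) * (α * s ^ (-(α + 1))) := by
  have h := integral_comp_mul_right_Ioi' (fun s => (1 - Real.exp (-s)) * (α * s ^ (-(α + 1))))
    0 hlam
  rw [zero_mul] at h
  rw [← h, smul_eq_mul, ← mul_assoc, ← integral_const_mul]
  refine setIntegral_congr_fun measurableSet_Ioi fun s (hs : 0 < s) => ?_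
  rw [Real.mul_rpow hs.le hlam.le]
  have : lam ^ α * lam * lam ^ (-(α + 1)) = 1 := by
    rw [← Real.rpow_add_one hlam.ne', ← Real.rpow_add hlam, add_neg_cancel, Real.rpow_zero]
  linear_combination -((1 - Real.exp (-(s * lam))) * (α * s ^ (-(α + 1)))) * this

lemma integral_levy_pos {α : ℝ} (h0 : 0 < α) (h1 : α < 1) :
    0 < ∫ s in Ioi (0:ℝ), (1 - Real.exp (-s)) * (α * s ^ (-(α + 1))) := by
  have hi := integrableOn_levy h0 h1 zero_le_one
  simp only [mul_one] at hi
  have hpos : ∀ s ∈ Ioi (0:ℝ), 0 < (1 - Real.exp (-s)) * (α * s ^ (-(α + 1))) := by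
    intro s (hs : 0 < s)
    have : Real.exp (-s) < 1 := by rw [Real.exp_lt_one_iff]; linarith
    have : 0 < 1 - Real.exp (-s) := by linarith
    positivity
  rw [setIntegral_pos_iff_support_of_nonneg_ae _ hi]
  · rw [inter_eq_right.2 (show Ioi (0:ℝ) ⊆ Function.support _ from fun s hs => (hpos s hs).ne')]
    simp
  · filter_upwards [ae_restrict_mem measurableSet_Ioi] with s hs using (hpos s hs).le

lemma integral_exp_paretoMeasure {α ε lam : ℝ} (h0 : 0 < α) (hε : 0 < ε)
    (hlam : 0 ≤ lam) :
    ∫ s, Real.exp (-(|s| * lam)) ∂(paretoMeasure ε α) =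
      1 - ε ^ α * ∫ s in Ioi ε, (1 - Real.exp (-(s * lam))) * (α * s ^ (-(α + 1))) := by
  have := isProbabilityMeasure_paretoMeasure hε h0
  have hint : Integrable (fun s => Real.exp (-(|s| * lam))) (paretoMeasure ε α) := by
    refine Integrable.of_bound (C := 1) (by fun_prop) (Eventually.of_forall fun s => ?_)
    rw [Real.norm_of_nonneg (Real.exp_pos _).le]
    exact Real.exp_le_one_iff.2 (neg_nonpos.2 (by positivity))
  have h : ∫ s, (1 - Real.exp (-(|s| * lam))) ∂(paretoMeasure ε α) =
      ε ^ α * ∫ s in Ioi ε, (1 - Real.exp (-(s * lam))) * (α * s ^ (-(α + 1))) := by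
    have hpm : Measurable (paretoPDF ε α) := (measurable_paretoPDFReal ε α).ennreal_ofReal
    rw [paretoMeasure, integral_withDensity_eq_integral_toReal_smul hpm
      (Eventually.of_forall fun s => ENNReal.ofReal_lt_top),
      ← integral_const_mul, ← integral_Ici_eq_integral_Ioi,
      ← integral_indicator measurableSet_Ici]
    congr 1
    ext s
    by_cases hs : ε ≤ s
    · have hs0 : 0 < s := hε.trans_le hs
      rw [indicator_of_mem (show s ∈ Ici ε from hs), paretoPDF_of_le hs,
        ENNReal.toReal_ofReal (by positivity), abs_of_pos hs0, smul_eq_mul]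
      ring
    · rw [indicator_of_notMem (show s ∉ Ici ε from hs), paretoPDF_of_lt (not_le.1 hs)]
      simp
  rw [integral_sub (integrable_const _) hint] at h
  simp only [integral_const, probReal_univ, smul_eq_mul, mul_one] at h
  linarith

lemma tendsto_integral_levy {α lam : ℝ} {ε : ℕ → ℝ} (h0 : 0 < α) (h1 : α < 1)
    (hε : ∀ N, 0 < ε N) (hε0 : Tendsto ε atTop (𝓝 0)) (hlam : 0 < lam) :
    Tendsto (fun N => ∫ s in Ioi (ε N), (1 - Real.exp (-(s * lam))) * (α * s ^ (-(α + 1)))) atTop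
      (𝓝 ((∫ s in Ioi (0:ℝ), (1 - Real.exp (-s)) * (α * s ^ (-(α + 1)))) * lam ^ α)) := by
  rw [mul_comm, ← integral_levy hlam]
  simp_rw [← integral_indicator (measurableSet_Ioi (a := (_ : ℝ)))]
  refine tendsto_integral_of_dominated_convergence
    ((Ioi 0).indicator fun s => (1 - Real.exp (-(s * lam))) * (α * s ^ (-(α + 1)))) ?_ ?_ ?_ ?_
  · intro N
    refine Measurable.aestronglyMeasurable (Measurable.indicator (by fun_prop)
      measurableSet_Ioi)
  · exact (integrable_indicator_iff measurableSet_Ioi).2 (integrableOn_levy h0 h1 hlam.le)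
  · intro N
    refine Eventually.of_forall fun s => ?_
    by_cases hs : s ∈ Ioi (ε N)
    · have hs0 : 0 < s := (hε N).trans hs
      have := one_sub_exp_neg_nonneg (x := s * lam) (by positivity)
      rw [indicator_of_mem hs, indicator_of_mem (show s ∈ Ioi 0 from hs0),
        Real.norm_of_nonneg (by positivity)]
    · rw [indicator_of_notMem hs, norm_zero]
      refine indicator_nonneg (fun s (hs : 0 < s) => ?_) s
      have := one_sub_exp_neg_nonneg (x := s * lam) (by positivity)
      positivity
  · refine Eventually.of_forall fun s => ?_
    rcases le_or_gt s 0 with hs | hs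
    · refine tendsto_const_nhds.congr fun N => ?_
      rw [indicator_of_notMem (by simpa using hs), indicator_of_notMem
        (by simpa using hs.trans (hε N).le)]
    · refine tendsto_const_nhds.congr' ?_
      filter_upwards [hε0.eventually_lt_const hs] with N hN
      rw [indicator_of_mem (show s ∈ Ioi 0 from hs),
        indicator_of_mem (show s ∈ Ioi (ε N) from hN)]

/-- The compactifying map `s ↦ exp (-|s|)` into the unit interval. -/
def expUnit (s : ℝ) : unitInterval :=
  ⟨Real.exp (-|s|), (Real.exp_pos _).le, Real.exp_le_one_iff.2 (neg_nonpos.2 (abs_nonneg s))⟩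

lemma measurable_expUnit : Measurable expUnit :=
  Measurable.subtype_mk (by fun_prop)

lemma exists_unitInterval_pow (P : Measure ℝ) [IsProbabilityMeasure P] (N : ℕ) :
    ∃ M : ProbabilityMeasure unitInterval, ∀ lam : ℝ,
      ∫ z, (z : ℝ) ^ lam ∂(M : Measure unitInterval) =
        (∫ s, Real.exp (-(|s| * lam)) ∂P) ^ N := by
  have hmeas : Measurable fun s : Fin N → ℝ => expUnit (∑ i, |s i|) :=
    measurable_expUnit.comp (by fun_prop)
  have hint : ∀ lam : ℝ, ∫ z, (z : ℝ) ^ lam ∂(Measure.map (fun s => expUnit (∑ i, |s i|))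
      (Measure.pi fun _ : Fin N => P)) = (∫ s, Real.exp (-(|s| * lam)) ∂P) ^ N := by
    intro lam
    rw [integral_map hmeas.aemeasurable
      (measurable_subtype_coe.pow_const lam).aestronglyMeasurable]
    have e : ∀ s : Fin N → ℝ, ((expUnit (∑ i, |s i|) : unitInterval) : ℝ) ^ lam =
        ∏ i, Real.exp (-(|s i| * lam)) := by
      intro s
      rw [← Real.exp_sum, expUnit, ← Real.exp_mul, abs_of_nonneg
        (Finset.sum_nonneg fun i _ => abs_nonneg _), Finset.sum_neg_distrib, ← Finset.sum_mul,
        neg_mul]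
    simp only [e]
    rw [integral_fintype_prod_eq_pow (fun s : ℝ => Real.exp (-(|s| * lam))), Fintype.card_fin]
  have hprob := Measure.isProbabilityMeasure_map (μ := Measure.pi fun _ : Fin N => P)
    hmeas.aemeasurable
  generalize Measure.map (fun s => expUnit (∑ i, |s i|)) (Measure.pi fun _ : Fin N => P) = m
    at hint hprob
  exact ⟨⟨m, hprob⟩, hint⟩

/-- A probability measure on the unit interval with Mellin transform `exp (-κ λ^α)`. -/
lemma exists_unitInterval_measure {α : ℝ} (h0 : 0 < α) (h1 : α < 1) :
    ∃ κ > (0:ℝ), ∃ m : ProbabilityMeasure unitInterval, ∀ lam : ℝ, 0 < lam →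
      ∫ z, (z : ℝ) ^ lam ∂(m : Measure unitInterval) = Real.exp (-(κ * lam ^ α)) := by
  set κ := ∫ s in Ioi (0:ℝ), (1 - Real.exp (-s)) * (α * s ^ (-(α + 1)))
  refine ⟨κ, integral_levy_pos h0 h1, ?_⟩
  set ε : ℕ → ℝ := fun N => ((N:ℝ) + 1) ^ (-(1 / α)) with hεd
  have hε : ∀ N, 0 < ε N := fun N => by positivity
  have hεα : ∀ N, ε N ^ α = 1 / ((N:ℝ) + 1) := fun N => by
    rw [hεd, ← Real.rpow_mul (by positivity), neg_mul, one_div_mul_cancel h0.ne',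
      Real.rpow_neg_one, one_div]
  have hP : ∀ N, IsProbabilityMeasure (paretoMeasure (ε N) α) := fun N =>
    isProbabilityMeasure_paretoMeasure (hε N) h0
  choose M hMexp using fun N : ℕ => exists_unitInterval_pow (paretoMeasure (ε N) α) (N + 1)
  have hM : ∀ N lam, 0 < lam → ∫ z, (z : ℝ) ^ lam ∂(M N : Measure unitInterval) =
      (1 + -(∫ s in Ioi (ε N), (1 - Real.exp (-(s * lam))) * (α * s ^ (-(α + 1))))
        / ((N:ℝ) + 1)) ^ (N + 1) := by
    intro N lam hlam
    rw [hMexp, integral_exp_paretoMeasure h0 (hε N) hlam.le, hεα]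
    congr 1; ring
  have hε0 : Tendsto ε atTop (𝓝 0) := by
    exact (tendsto_rpow_neg_atTop (by positivity)).comp
      (tendsto_atTop_add_const_right _ _ tendsto_natCast_atTop_atTop)
  have hlim : ∀ lam, 0 < lam → Tendsto (fun N => ∫ z, (z : ℝ) ^ lam ∂(M N : Measure unitInterval))
      atTop (𝓝 (Real.exp (-(κ * lam ^ α)))) := by
    intro lam hlam
    have hψ := tendsto_integral_levy h0 h1 hε hε0 hlam
    set g : ℕ → ℝ := fun N => -(∫ s in Ioi (ε (N - 1)),
        (1 - Real.exp (-(s * lam))) * (α * s ^ (-(α + 1)))) / N with hg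
    have h2 : Tendsto (fun N : ℕ => (1 + g N) ^ N) atTop (𝓝 (Real.exp (-(κ * lam ^ α)))) := by
      refine Real.tendsto_one_add_pow_exp_of_tendsto ?_
      refine (hψ.comp (tendsto_sub_atTop_nat 1)).neg.congr' ?_
      filter_upwards [eventually_ne_atTop 0] with N hN
      simp only [hg, Function.comp_apply]
      rw [mul_div_cancel₀ _ (by exact_mod_cast hN)]
    refine (h2.comp (tendsto_add_atTop_nat 1)).congr fun N => ?_
    rw [hM N lam hlam]
    simp [hg]
  let U : Ultrafilter ℕ := hyperfilter ℕ
  obtain ⟨m, -, hm⟩ := isCompact_univ.ultrafilter_le_nhds (U.map M) (by simp)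
  refine ⟨m, fun lam hlam => ?_⟩
  have hc : Continuous fun z : unitInterval => (z : ℝ) ^ lam :=
    continuous_subtype_val.rpow_const fun _ => Or.inr hlam.le
  have h3 := (ProbabilityMeasure.tendsto_iff_forall_integral_tendsto.1
    (show Tendsto M (U : Filter ℕ) (𝓝 m) from hm)) (BoundedContinuousFunction.mkOfCompact ⟨_, hc⟩)
  have h4 := (hlim lam hlam).mono_left (Nat.hyperfilter_le_atTop)
  exact tendsto_nhds_unique h3 h4

/-- One-sided stable laws: probability measures on `(0, ∞)` with Laplace transform
`exp (-λ^α)`. -/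
theorem exists_stable_measure {α : ℝ} (h0 : 0 < α) (h1 : α ≤ 1) :
    ∃ μ : Measure ℝ, IsProbabilityMeasure μ ∧ (∀ᵐ s ∂μ, 0 < s) ∧ ∀ lam : ℝ, 0 ≤ lam →
      ∫ s, Real.exp (-(s * lam)) ∂μ = Real.exp (-(lam ^ α)) := by
  rcases h1.eq_or_lt with rfl | h1
  · refine ⟨Measure.dirac 1, inferInstance, ?_, fun lam _ => ?_⟩
    · rw [ae_dirac_eq]; exact Filter.mem_pure.2 (one_pos (α := ℝ))
    · simp
  obtain ⟨κ, hκ, m, hm⟩ := exists_unitInterval_measure h0 h1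
  have hint : ∀ lam : ℝ, ∀ z : unitInterval, 0 < lam → ‖(z:ℝ) ^ lam‖ ≤ 1 := by
    intro lam z hlam
    rw [Real.norm_of_nonneg (Real.rpow_nonneg z.2.1 _)]
    exact Real.rpow_le_one z.2.1 z.2.2 hlam.le
  have hmeas : ∀ lam : ℝ, AEStronglyMeasurable (fun z : unitInterval => (z:ℝ) ^ lam)
      (m : Measure unitInterval) := fun lam =>
    (measurable_subtype_coe.pow_const lam).aestronglyMeasurable
  have hz0 : ∀ᵐ z ∂(m : Measure unitInterval), z ≠ 0 := by
    have ht : Tendsto (fun k : ℕ => ∫ z, (z : ℝ) ^ (1 / ((k:ℝ) + 1)) ∂(m : Measure unitInterval))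
        atTop (𝓝 (∫ z, ({0}ᶜ : Set unitInterval).indicator (fun _ => (1:ℝ)) z
          ∂(m : Measure unitInterval))) := by
      refine tendsto_integral_of_dominated_convergence (fun _ => 1) (fun k => hmeas _)
        (integrable_const _) (fun k => Eventually.of_forall fun z => hint _ z (by positivity))
        (Eventually.of_forall fun z => ?_)
      by_cases hz : z = 0
      · rw [hz, indicator_of_notMem (by simp)]
        refine tendsto_const_nhds.congr fun k => ?_
        rw [Icc.coe_zero, Real.zero_rpow (by positivity)]
      · rw [indicator_of_mem (by simpa using hz)]
        have hz' : (z:ℝ) ≠ 0 := fun h => hz (Subtype.ext h)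
        have := (Real.continuousAt_const_rpow (b := 0) hz').tendsto.comp
          (tendsto_one_div_add_atTop_nhds_zero_nat (𝕜 := ℝ))
        rw [Real.rpow_zero] at this
        exact this
    have ht' : Tendsto (fun k : ℕ => ∫ z, (z : ℝ) ^ (1 / ((k:ℝ) + 1))
        ∂(m : Measure unitInterval)) atTop (𝓝 1) := by
      have e : Tendsto (fun k : ℕ => Real.exp (-(κ * (1 / ((k:ℝ) + 1)) ^ α))) atTop
          (𝓝 (Real.exp (-(κ * 0 ^ α)))) :=
        (Real.continuous_exp.tendsto _).comp (((tendsto_one_div_add_atTop_nhds_zero_nat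
          (𝕜 := ℝ)).rpow_const (Or.inr h0.le)).const_mul κ).neg
      rw [Real.zero_rpow h0.ne', mul_zero, neg_zero, Real.exp_zero] at e
      exact e.congr fun k => (hm _ (by positivity)).symm
    have h5 := tendsto_nhds_unique ht ht'
    rw [integral_indicator_const _ (measurableSet_singleton _).compl, smul_eq_mul, mul_one] at h5
    have h6 : (m : Measure unitInterval) {0}ᶜ = 1 := by
      rw [measureReal_def, ENNReal.toReal_eq_one_iff] at h5; exact h5
    exact (mem_ae_iff_prob_eq_one (measurableSet_singleton _).compl).2 h6
  have hz1 : ∀ᵐ z ∂(m : Measure unitInterval), z ≠ 1 := by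
    have ht : Tendsto (fun k : ℕ => ∫ z, (z : ℝ) ^ ((k:ℝ) + 1) ∂(m : Measure unitInterval))
        atTop (𝓝 (∫ z, ({1} : Set unitInterval).indicator (fun _ => (1:ℝ)) z
          ∂(m : Measure unitInterval))) := by
      refine tendsto_integral_of_dominated_convergence (fun _ => 1) (fun k => hmeas _)
        (integrable_const _) (fun k => Eventually.of_forall fun z => hint _ z (by positivity))
        (Eventually.of_forall fun z => ?_)
      by_cases hz : z = 1
      · rw [hz, indicator_of_mem (by simp)]
        refine tendsto_const_nhds.congr fun k => ?_
        rw [Icc.coe_one, Real.one_rpow]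
      · rw [indicator_of_notMem (by simpa using hz)]
        have hz' : (z:ℝ) < 1 := lt_of_le_of_ne z.2.2 fun h => hz (Subtype.ext h)
        have := (tendsto_pow_atTop_nhds_zero_of_lt_one z.2.1 hz').comp (tendsto_add_atTop_nat 1)
        refine this.congr fun k => ?_
        rw [Function.comp_apply, ← Real.rpow_natCast]; push_cast; rfl
    have ht' : Tendsto (fun k : ℕ => ∫ z, (z : ℝ) ^ ((k:ℝ) + 1)
        ∂(m : Measure unitInterval)) atTop (𝓝 0) := by
      have e : Tendsto (fun k : ℕ => Real.exp (-(κ * ((k:ℝ) + 1) ^ α))) atTop (𝓝 0) :=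
        Real.tendsto_exp_neg_atTop_nhds_zero.comp (((tendsto_rpow_atTop h0).comp
          (tendsto_atTop_add_const_right _ _ tendsto_natCast_atTop_atTop)).const_mul_atTop hκ)
      exact e.congr fun k => (hm _ (by positivity)).symm
    have h5 := tendsto_nhds_unique ht ht'
    rw [integral_indicator_const _ (measurableSet_singleton _), smul_eq_mul, mul_one] at h5
    exact compl_mem_ae_iff.2 ((measureReal_eq_zero_iff).1 h5)
  have hφ : Measurable fun z : unitInterval => -Real.log (z : ℝ) * κ ^ (-(1 / α)) := by fun_prop
  refine ⟨Measure.map (fun z : unitInterval => -Real.log (z : ℝ) * κ ^ (-(1 / α))) m,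
    Measure.isProbabilityMeasure_map hφ.aemeasurable, ?_, fun lam hlam => ?_⟩
  · rw [ae_map_iff hφ.aemeasurable measurableSet_Ioi]
    filter_upwards [hz0, hz1] with z h0 h1
    have hz0 : 0 < (z:ℝ) := lt_of_le_of_ne z.2.1 fun h => h0 (Subtype.ext h.symm)
    have hz1 : (z:ℝ) < 1 := lt_of_le_of_ne z.2.2 fun h => h1 (Subtype.ext h)
    have := Real.log_neg hz0 hz1
    have : 0 < -Real.log z := by linarith
    positivity
  · rw [integral_map hφ.aemeasurable (by exact Measurable.aestronglyMeasurable (by fun_prop))]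
    rcases hlam.eq_or_lt with rfl | hlam
    · simp [Real.zero_rpow h0.ne']
    have hl : 0 < κ ^ (-(1 / α)) * lam := by positivity
    have e := hm _ hl
    rw [Real.mul_rpow (by positivity) hlam.le, ← Real.rpow_mul hκ.le, neg_mul,
      one_div_mul_cancel h0.ne', Real.rpow_neg_one, mul_inv_cancel_left₀ hκ.ne'] at e
    rw [← e]
    refine integral_congr_ae ?_
    filter_upwards [hz0] with z h0
    have hz0 : 0 < (z:ℝ) := lt_of_le_of_ne z.2.1 fun h => h0 (Subtype.ext h.symm)
    rw [Real.rpow_def_of_pos hz0]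
    congr 1; ring

end Stable

section Heat
open Filter Topology Real
variable {n : ℕ}

/-- The Gauss kernel, i.e. the inverse Fourier transform of `ξ ↦ exp (-s‖ξ‖²)`. -/
def heat (n : ℕ) (s : ℝ) (x : Rn n) : ℝ :=
  (π / s) ^ ((n:ℝ) / 2) * rexp (-(π ^ 2 / s * ‖x‖ ^ 2))

lemma heat_nonneg {s : ℝ} (hs : 0 ≤ s) (x : Rn n) : 0 ≤ heat n s x := by
  have := pi_pos
  unfold heat; positivity

@[fun_prop]
lemma measurable_uncurry_heat : Measurable fun q : ℝ × Rn n => heat n q.1 q.2 := by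
  unfold heat; fun_prop

lemma fourierInv_gaussian {s : ℝ} (hs : 0 < s) (x : Rn n) :
    𝓕⁻ (fun ξ : Rn n => (rexp (-(s * ‖ξ‖ ^ 2)) : ℂ)) x = heat n s x := by
  have h := fourier_gaussian_innerProductSpace (b := (s:ℂ)) (by simpa using hs) (-x)
  rw [fourierInv_eq_fourier_neg]
  have e : (fun ξ : Rn n => (rexp (-(s * ‖ξ‖ ^ 2)) : ℂ)) =
      fun v => Complex.exp (-(s:ℂ) * (‖v‖:ℂ) ^ 2) := by
    funext v; push_cast; ring_nf
  rw [e, h, heat, norm_neg, finrank_euclideanSpace_fin, Complex.ofReal_mul,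
    Complex.ofReal_cpow (by positivity)]
  push_cast
  congr 2
  ring

lemma integral_exp_neg_mul_norm_sq {s : ℝ} (hs : 0 < s) :
    ∫ x : Rn n, rexp (-(s * ‖x‖ ^ 2)) = (π / s) ^ ((n:ℝ) / 2) := by
  have h := GaussianFourier.integral_rexp_neg_mul_sq_norm (V := Rn n) hs
  simpa [finrank_euclideanSpace_fin] using h

lemma integrable_exp_neg_mul_norm_sq {s : ℝ} (hs : 0 < s) :
    Integrable fun x : Rn n => rexp (-(s * ‖x‖ ^ 2)) := by
  by_contra h
  have h1 := integral_exp_neg_mul_norm_sq (n := n) hs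
  rw [integral_undef h] at h1
  have : 0 < (π / s) ^ ((n:ℝ) / 2) := by positivity
  linarith

lemma lintegral_heat {s : ℝ} (hs : 0 < s) (x : Rn n) :
    ∫⁻ y, ENNReal.ofReal (heat n s (x - y)) = 1 := by
  have hs' : 0 < π ^ 2 / s := by positivity
  rw [lintegral_sub_left_eq_self (fun y => ENNReal.ofReal (heat n s y)) x]
  have hi : Integrable (heat n s) := (integrable_exp_neg_mul_norm_sq hs').const_mul _
  rw [← ofReal_integral_eq_lintegral_ofReal hi
    (Eventually.of_forall fun y => heat_nonneg hs.le y)]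
  unfold heat
  rw [integral_const_mul, integral_exp_neg_mul_norm_sq hs', ← mul_rpow (by positivity)
    (by positivity), show π / s * (π / (π ^ 2 / s)) = 1 by field_simp, one_rpow,
    ENNReal.ofReal_one]

lemma heat_eq_lintegral {s : ℝ} (hs : 0 < s) (x : Rn n) :
    ENNReal.ofReal (heat n s x) = ∫⁻ ρ in Ioi ‖x‖, ENNReal.ofReal
      ((π / s) ^ ((n:ℝ) / 2) * (2 * (π ^ 2 / s) * ρ * rexp (-(π ^ 2 / s * ρ ^ 2)))) := by
  set a := π ^ 2 / s
  have ha : 0 < a := by positivity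
  set c := (π / s) ^ ((n:ℝ) / 2)
  have hc : 0 ≤ c := by positivity
  have hd : ∀ ρ ∈ Ici ‖x‖, HasDerivAt (fun ρ => c * rexp (-(a * ρ ^ 2)))
      (-(c * (2 * a * ρ * rexp (-(a * ρ ^ 2))))) ρ := by
    intro ρ _
    have h := (((hasDerivAt_pow 2 ρ).const_mul a).neg.exp).const_mul c
    refine h.congr_deriv ?_
    simp only [Pi.neg_apply, Nat.cast_ofNat, Nat.add_one_sub_one, pow_one]
    ring
  have hneg : ∀ ρ ∈ Ioi ‖x‖, -(c * (2 * a * ρ * rexp (-(a * ρ ^ 2)))) ≤ 0 := by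
    intro ρ hρ
    have : 0 < ρ := (norm_nonneg x).trans_lt hρ
    rw [neg_nonpos]; positivity
  have hlim : Tendsto (fun ρ => c * rexp (-(a * ρ ^ 2))) atTop (𝓝 0) := by
    rw [← mul_zero c]
    refine (tendsto_exp_neg_atTop_nhds_zero.comp ?_).const_mul c
    exact (tendsto_pow_atTop two_ne_zero).const_mul_atTop ha
  have hi := integrableOn_Ioi_deriv_of_nonpos' hd hneg hlim
  have hv := integral_Ioi_of_hasDerivAt_of_nonpos' hd hneg hlim
  have hi' := hi.neg
  simp only [Pi.neg_def, neg_neg] at hi'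
  rw [integral_neg, zero_sub, neg_inj] at hv
  rw [← ofReal_integral_eq_lintegral_ofReal hi', hv, heat]
  refine (ae_restrict_iff' measurableSet_Ioi).2 (Eventually.of_forall fun ρ hρ => ?_)
  have := hneg ρ hρ
  simp only [Pi.zero_apply]; linarith

lemma lintegral_heat_mul {s : ℝ} (hs : 0 < s) {f : Rn n → ℝ≥0∞} (hf : Measurable f) (x : Rn n) :
    ∫⁻ y, ENNReal.ofReal (heat n s (x - y)) * f y = ∫⁻ ρ in Ioi (0:ℝ), ENNReal.ofReal
      ((π / s) ^ ((n:ℝ) / 2) * (2 * (π ^ 2 / s) * ρ * rexp (-(π ^ 2 / s * ρ ^ 2)))) *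
      ∫⁻ y in Metric.ball x ρ, f y := by
  set w : ℝ → ℝ≥0∞ := fun ρ => ENNReal.ofReal
      ((π / s) ^ ((n:ℝ) / 2) * (2 * (π ^ 2 / s) * ρ * rexp (-(π ^ 2 / s * ρ ^ 2)))) with hw
  have hwm : Measurable w := by fun_prop
  have hm : Measurable fun z : Rn n × ℝ =>
      {z : Rn n × ℝ | ‖x - z.1‖ < z.2}.indicator (fun z => w z.2 * f z.1) z := by
    refine Measurable.indicator ?_ (measurableSet_lt ?_ measurable_snd)
    · exact (hwm.comp measurable_snd).mul (hf.comp measurable_fst)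
    · exact (measurable_fst.const_sub x).norm
  have hpt : ∀ y : Rn n, ENNReal.ofReal (heat n s (x - y)) * f y =
      ∫⁻ ρ in Ioi (0:ℝ), {z : Rn n × ℝ | ‖x - z.1‖ < z.2}.indicator
        (fun z => w z.2 * f z.1) (y, ρ) := by
    intro y
    have e : ∀ ρ, {z : Rn n × ℝ | ‖x - z.1‖ < z.2}.indicator (fun z => w z.2 * f z.1) (y, ρ) =
        (Ioi ‖x - y‖).indicator (fun ρ => w ρ * f y) ρ := by
      intro ρ
      simp only [indicator, mem_Ioi]
      rfl
    simp only [e]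
    rw [setLIntegral_indicator measurableSet_Ioi,
      inter_eq_left.2 (Ioi_subset_Ioi (norm_nonneg _)), lintegral_mul_const _ hwm,
      heat_eq_lintegral hs]
  rw [lintegral_congr hpt, lintegral_lintegral_swap hm.aemeasurable]
  refine lintegral_congr fun ρ => ?_
  have e : ∀ y, {z : Rn n × ℝ | ‖x - z.1‖ < z.2}.indicator (fun z => w z.2 * f z.1) (y, ρ) =
      (Metric.ball x ρ).indicator (fun y => w ρ * f y) y := by
    intro y
    simp only [indicator, Metric.mem_ball', dist_eq_norm]
    rfl
  simp only [e]
  rw [lintegral_indicator Metric.isOpen_ball.measurableSet, lintegral_const_mul _ hf]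

lemma lintegral_heat_mul_le {s : ℝ} (hs : 0 < s) {f : Rn n → ℝ≥0∞} (hf : Measurable f)
    (x : Rn n) :
    ∫⁻ y, ENNReal.ofReal (heat n s (x - y)) * f y ≤ 2 ^ n * hlMax f x := by
  have h1 := lintegral_heat_mul hs (measurable_const (a := (1:ℝ≥0∞))) x
  simp only [mul_one, lintegral_heat hs, setLIntegral_one] at h1
  rw [lintegral_heat_mul hs hf]
  calc _ ≤ ∫⁻ ρ in Ioi (0:ℝ), ENNReal.ofReal ((π / s) ^ ((n:ℝ) / 2) *
        (2 * (π ^ 2 / s) * ρ * rexp (-(π ^ 2 / s * ρ ^ 2)))) * volume (Metric.ball x ρ) *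
        (2 ^ n * hlMax f x) := by
        refine setLIntegral_mono' measurableSet_Ioi fun ρ hρ => ?_
        rw [mul_assoc (ENNReal.ofReal _)]
        gcongr
        refine (lintegral_ball_le_hlMax f x hρ).trans_eq ?_
        ring
    _ ≤ (∫⁻ ρ in Ioi (0:ℝ), ENNReal.ofReal ((π / s) ^ ((n:ℝ) / 2) *
        (2 * (π ^ 2 / s) * ρ * rexp (-(π ^ 2 / s * ρ ^ 2)))) * volume (Metric.ball x ρ)) *
        (2 ^ n * hlMax f x) := by
        rw [lintegral_mul_const]
        refine Measurable.mul (by fun_prop) ?_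
        have hS : MeasurableSet {z : ℝ × Rn n | ‖x - z.2‖ < z.1} :=
          measurableSet_lt ((measurable_snd.const_sub x).norm) measurable_fst
        have e : ∀ ρ : ℝ, Metric.ball x ρ = Prod.mk ρ ⁻¹' {z : ℝ × Rn n | ‖x - z.2‖ < z.1} := by
          intro ρ
          ext y
          simp [dist_eq_norm, norm_sub_rev]
        simp only [e]
        exact measurable_measure_prodMk_left hS
    _ = _ := by rw [← h1, one_mul]

/-- The differential of the Gauss kernel. -/
def heatDeriv (n : ℕ) (s : ℝ) (x : Rn n) : Rn n →L[ℝ] ℝ :=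
  (-(2 * (π ^ 2 / s) * heat n s x)) • innerSL ℝ x

lemma hasFDerivAt_heat (s : ℝ) (x : Rn n) : HasFDerivAt (heat n s) (heatDeriv n s x) x := by
  have h := (((hasStrictFDerivAt_norm_sq x).hasFDerivAt.const_mul (π ^ 2 / s)).neg.exp).const_mul
    ((π / s) ^ ((n:ℝ) / 2))
  refine h.congr_fderiv ?_
  ext y
  simp [heatDeriv, heat]
  ring

lemma rpow_mul_exp_neg_le {k x : ℝ} (hk : 0 < k) (hx : 0 ≤ x) : x ^ k * rexp (-x) ≤ k ^ k := by
  have h1 : x / k ≤ rexp (x / k) := by have := add_one_le_exp (x / k); linarith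
  have h2 : (x / k) ^ k ≤ rexp x := by
    refine (rpow_le_rpow (by positivity) h1 hk.le).trans_eq ?_
    rw [← exp_mul, div_mul_cancel₀ _ hk.ne']
  rw [div_rpow hx hk.le, div_le_iff₀ (by positivity)] at h2
  calc x ^ k * rexp (-x) ≤ rexp x * k ^ k * rexp (-x) := by gcongr
    _ = k ^ k * (rexp x * rexp (-x)) := by ring
    _ = k ^ k := by rw [← exp_add]; simp

lemma norm_heatDeriv_eq {s : ℝ} (hs : 0 < s) (x : Rn n) :
    ‖heatDeriv n s x‖ = 2 * π * π ^ ((n:ℝ) / 2 + 1) * ‖x‖ *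
      (s ^ (-((n:ℝ) / 2 + 1)) * rexp (-(π ^ 2 / s * ‖x‖ ^ 2))) := by
  have := heat_nonneg hs.le x
  rw [heatDeriv, norm_smul, innerSL_apply_norm, norm_neg, norm_of_nonneg (by positivity), heat,
    div_rpow pi_pos.le hs.le, rpow_neg hs.le, rpow_add_one pi_pos.ne', rpow_add_one hs.ne']
  field_simp

lemma exists_norm_heatDeriv_le (n : ℕ) : ∃ C > 0, ∀ s > 0, ∀ x : Rn n,
    ‖heatDeriv n s x‖ ≤ C * ‖x‖ * s ^ (-((n:ℝ) / 2 + 1)) ∧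
    ‖heatDeriv n s x‖ ≤ C * ‖x‖ * (‖x‖ ^ 2) ^ (-((n:ℝ) / 2 + 1)) := by
  set k := (n:ℝ) / 2 + 1 with hkdef
  have hk : 0 < k := by positivity
  set c := 2 * π * π ^ k
  have hc : 0 < c := by positivity
  refine ⟨c * (1 + k ^ k), by positivity, fun s hs x => ⟨?_, ?_⟩⟩
  · rw [norm_heatDeriv_eq hs]
    have h1 : rexp (-(π ^ 2 / s * ‖x‖ ^ 2)) ≤ 1 + k ^ k := by
      have : rexp (-(π ^ 2 / s * ‖x‖ ^ 2)) ≤ 1 := exp_le_one_iff.2 (by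
        rw [neg_nonpos]; positivity)
      have : 0 < k ^ k := by positivity
      linarith
    calc _ = c * rexp (-(π ^ 2 / s * ‖x‖ ^ 2)) * ‖x‖ * s ^ (-k) := by ring
      _ ≤ _ := by gcongr
  · rcases eq_or_ne x 0 with rfl | hx
    · simp [heatDeriv]
    have hx : 0 < ‖x‖ := norm_pos_iff.2 hx
    rw [norm_heatDeriv_eq hs]
    have h1 : s ^ (-k) * rexp (-(π ^ 2 / s * ‖x‖ ^ 2)) ≤ (1 + k ^ k) * (‖x‖ ^ 2) ^ (-k) := by
      have h2 := rpow_mul_exp_neg_le hk (by positivity : 0 ≤ ‖x‖ ^ 2 / s)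
      have h3 : rexp (-(π ^ 2 / s * ‖x‖ ^ 2)) ≤ rexp (-(‖x‖ ^ 2 / s)) := by
        rw [exp_le_exp, neg_le_neg_iff, div_mul_eq_mul_div]
        gcongr
        have : 1 ≤ π ^ 2 := by nlinarith [pi_gt_three]
        nlinarith [sq_nonneg ‖x‖]
      rw [rpow_neg hs.le, rpow_neg (by positivity)]
      rw [div_rpow (by positivity) hs.le] at h2
      have h4 : 0 < (‖x‖ ^ 2) ^ k := by positivity
      have h5 : 0 < s ^ k := by positivity
      rw [← div_eq_mul_inv, le_div_iff₀ h4]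
      calc _ ≤ (s ^ k)⁻¹ * rexp (-(‖x‖ ^ 2 / s)) * (‖x‖ ^ 2) ^ k := by gcongr
        _ = (‖x‖ ^ 2) ^ k / s ^ k * rexp (-(‖x‖ ^ 2 / s)) := by field_simp
        _ ≤ _ := by linarith
    calc _ ≤ c * ‖x‖ * ((1 + k ^ k) * (‖x‖ ^ 2) ^ (-k)) := by gcongr
      _ = _ := by ring

end Heat

section Superposition
open Filter Topology Real
variable {n : ℕ} {α : ℝ} {μ : Measure ℝ}

lemma measurable_norm_heatDeriv : Measurable fun q : ℝ × Rn n => ‖heatDeriv n q.1 q.2‖ := by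
  simp only [heatDeriv, norm_smul, innerSL_apply_norm]
  fun_prop

lemma measurable_heatDeriv_apply (y : Rn n) :
    Measurable fun q : ℝ × Rn n => heatDeriv n q.1 q.2 y := by
  simp only [heatDeriv, smul_apply, innerSL_apply_apply, smul_eq_mul]
  fun_prop

lemma lintegral_rpow_neg_lt_top [IsProbabilityMeasure μ] (hα : 0 < α) (hpos : ∀ᵐ s ∂μ, 0 < s)
    (hL : ∀ lam ≥ 0, ∫ s, rexp (-(s * lam)) ∂μ = rexp (-(lam ^ α))) {k : ℝ} (hk : 0 < k) :
    ∫⁻ s, ENNReal.ofReal (s ^ (-k)) ∂μ < ∞ := by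
  have hΓ : 0 < Gamma k := Gamma_pos_of_pos hk
  have h1 : ∀ᵐ s ∂μ, ENNReal.ofReal (Gamma k) * ENNReal.ofReal (s ^ (-k)) =
      ∫⁻ lam in Ioi (0:ℝ), ENNReal.ofReal (lam ^ (k - 1) * rexp (-(s * lam))) := by
    filter_upwards [hpos] with s hs
    have e := integral_rpow_mul_exp_neg_mul_Ioi hk hs
    have hi : IntegrableOn (fun lam => lam ^ (k - 1) * rexp (-(s * lam))) (Ioi 0) := by
      by_contra h
      rw [integral_undef h] at e
      have : 0 < (1 / s) ^ k * Gamma k := by positivity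
      linarith
    rw [← ofReal_integral_eq_lintegral_ofReal hi, e, ← ENNReal.ofReal_mul hΓ.le,
      one_div, inv_rpow hs.le, rpow_neg hs.le, mul_comm]
    refine (ae_restrict_iff' measurableSet_Ioi).2 (Eventually.of_forall fun lam hlam => ?_)
    have : 0 < lam := hlam
    simp only [Pi.zero_apply]; positivity
  have h2 : ENNReal.ofReal (Gamma k) * ∫⁻ s, ENNReal.ofReal (s ^ (-k)) ∂μ < ∞ := by
    rw [← lintegral_const_mul' _ _ ENNReal.ofReal_ne_top, lintegral_congr_ae h1,
      lintegral_lintegral_swap (by fun_prop)]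
    have hi := integrableOn_rpow_mul_exp_neg_rpow (p := α) (s := k - 1) (by linarith) hα
    refine lt_of_le_of_lt (le_of_eq ?_) hi.lintegral_lt_top
    refine setLIntegral_congr_fun measurableSet_Ioi fun lam hlam => ?_
    have hlam : 0 < lam := hlam
    have hb : ∀ᵐ s ∂μ, 0 ≤ lam ^ (k - 1) * rexp (-(s * lam)) :=
      Eventually.of_forall fun s => by positivity
    have hint : Integrable (fun s => rexp (-(s * lam))) μ := by
      refine Integrable.of_bound (by fun_prop) 1 ?_
      filter_upwards [hpos] with s hs
      rw [norm_of_nonneg (exp_nonneg _), exp_le_one_iff, neg_nonpos]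
      positivity
    rw [← ofReal_integral_eq_lintegral_ofReal (hint.const_mul _) hb, integral_const_mul,
      hL _ hlam.le]
  rw [ENNReal.mul_lt_top_iff] at h2
  rcases h2 with h | h | h
  · exact h.2
  · exact absurd h (by simpa using hΓ)
  · rw [h]; simp

lemma integrable_rpow_neg [IsProbabilityMeasure μ] (hα : 0 < α) (hpos : ∀ᵐ s ∂μ, 0 < s)
    (hL : ∀ lam ≥ 0, ∫ s, rexp (-(s * lam)) ∂μ = rexp (-(lam ^ α))) {k : ℝ} (hk : 0 < k) :
    Integrable (fun s => s ^ (-k)) μ := by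
  rw [← lintegral_ofReal_ne_top_iff_integrable (by fun_prop)
    (hpos.mono fun s hs => rpow_nonneg hs.le _)]
  exact (lintegral_rpow_neg_lt_top hα hpos hL hk).ne

lemma gKer_eq_integral_heat [IsProbabilityMeasure μ] (hn : 1 ≤ n) (hα : 0 < α)
    (hpos : ∀ᵐ s ∂μ, 0 < s)
    (hL : ∀ lam ≥ 0, ∫ s, rexp (-(s * lam)) ∂μ = rexp (-(lam ^ α))) {t : ℝ} (ht : 0 < t)
    (x : Rn n) : gKer n α t x = ∫ s, heat n (t ^ (1 / α) * s) x ∂μ := by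
  set τ := t ^ (1 / α)
  have hτ : 0 < τ := by positivity
  have hn0 : (0:ℝ) < n := by positivity
  have e1 : ∀ ξ : Rn n, rexp (-t * ‖ξ‖ ^ (2 * α)) = ∫ s, rexp (-(τ * s * ‖ξ‖ ^ 2)) ∂μ := by
    intro ξ
    have h := hL (τ * ‖ξ‖ ^ 2) (by positivity)
    rw [mul_rpow hτ.le (by positivity), ← rpow_mul ht.le, one_div_mul_cancel hα.ne', rpow_one,
      ← rpow_natCast, ← rpow_mul (norm_nonneg _), Nat.cast_ofNat, rpow_two] at h
    rw [neg_mul]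
    refine Eq.trans h.symm ?_
    congr 1; funext s; ring_nf
  have hint : Integrable (fun q : Rn n × ℝ => Real.fourierChar (inner ℝ q.1 x) •
      (rexp (-(τ * q.2 * ‖q.1‖ ^ 2)) : ℂ)) (volume.prod μ) := by
    have hm : Measurable fun q : Rn n × ℝ => Real.fourierChar (inner ℝ q.1 x) •
      (rexp (-(τ * q.2 * ‖q.1‖ ^ 2)) : ℂ) := by
      simp only [Circle.smul_def, smul_eq_mul]
      refine Measurable.mul ?_ (by fun_prop)
      exact (continuous_subtype_val.comp (Real.continuous_fourierChar.comp
        (by fun_prop : Continuous fun q : Rn n × ℝ => inner ℝ q.1 x))).measurable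
    rw [integrable_prod_iff' hm.aestronglyMeasurable]
    have en : ∀ (q : Rn n) (s : ℝ), ‖Real.fourierChar (inner ℝ q x) •
        (rexp (-(τ * s * ‖q‖ ^ 2)) : ℂ)‖ = rexp (-(τ * s * ‖q‖ ^ 2)) := by
      intro q s
      rw [Circle.norm_smul, Complex.norm_real, norm_of_nonneg (exp_nonneg _)]
    constructor
    · filter_upwards [hpos] with s hs
      refine (integrable_norm_iff ?_).1 ?_
      · exact (hm.comp (measurable_id.prodMk measurable_const)).aestronglyMeasurable
      · simp only [en]
        exact integrable_exp_neg_mul_norm_sq (by positivity)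
    · simp only [en]
      refine ((integrable_rpow_neg hα hpos hL (k := n / 2) (by positivity)).const_mul
        ((π / τ) ^ ((n:ℝ) / 2))).congr ?_
      filter_upwards [hpos] with s hs
      rw [integral_exp_neg_mul_norm_sq (by positivity), rpow_neg hs.le, ← div_eq_mul_inv,
        ← div_rpow (by positivity) hs.le, div_div]
  rw [gKer, Real.fourierInv_eq]
  have e2 : ∀ ξ : Rn n, Real.fourierChar (inner ℝ ξ x) • (rexp (-t * ‖ξ‖ ^ (2 * α)) : ℂ) =
      ∫ s, Real.fourierChar (inner ℝ ξ x) • (rexp (-(τ * s * ‖ξ‖ ^ 2)) : ℂ) ∂μ := by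
    intro ξ
    simp only [Circle.smul_def, smul_eq_mul]
    rw [integral_const_mul, e1, integral_complex_ofReal]
  rw [integral_congr_ae (Eventually.of_forall e2), integral_integral_swap hint]
  have e3 : ∀ᵐ s ∂μ, ∫ ξ : Rn n, Real.fourierChar (inner ℝ ξ x) •
      (rexp (-(τ * s * ‖ξ‖ ^ 2)) : ℂ) = (heat n (τ * s) x : ℂ) := by
    filter_upwards [hpos] with s hs
    rw [← fourierInv_gaussian (by positivity), Real.fourierInv_eq]
  rw [integral_congr_ae e3, integral_complex_ofReal, Complex.ofReal_re]

lemma hasFDerivAt_gKer [IsProbabilityMeasure μ] (hn : 1 ≤ n) (hα : 0 < α)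
    (hpos : ∀ᵐ s ∂μ, 0 < s)
    (hL : ∀ lam ≥ 0, ∫ s, rexp (-(s * lam)) ∂μ = rexp (-(lam ^ α))) {t : ℝ} (ht : 0 < t)
    (x : Rn n) : Integrable (fun s => heatDeriv n (t ^ (1 / α) * s) x) μ ∧
      HasFDerivAt (gKer n α t) (∫ s, heatDeriv n (t ^ (1 / α) * s) x ∂μ) x := by
  set τ := t ^ (1 / α)
  have hτ : 0 < τ := by positivity
  have hn0 : (0:ℝ) < n := by positivity
  obtain ⟨C, hC, hB⟩ := exists_norm_heatDeriv_le n
  set k := (n:ℝ) / 2 + 1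
  have hk : 0 < k := by positivity
  have hbound : ∀ᵐ s ∂μ, ∀ z ∈ Metric.ball x 1,
      ‖heatDeriv n (τ * s) z‖ ≤ C * (‖x‖ + 1) * τ ^ (-k) * s ^ (-k) := by
    filter_upwards [hpos] with s hs z hz
    refine ((hB (τ * s) (by positivity) z).1).trans ?_
    rw [mul_rpow hτ.le hs.le, ← mul_assoc]
    have : ‖z‖ ≤ ‖x‖ + 1 := by
      have h1 := norm_le_norm_add_norm_sub' z x
      rw [Metric.mem_ball, dist_eq_norm] at hz
      linarith
    gcongr
  have hbi : Integrable (fun s => C * (‖x‖ + 1) * τ ^ (-k) * s ^ (-k)) μ :=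
    (integrable_rpow_neg hα hpos hL hk).const_mul _
  have hmd : AEStronglyMeasurable (fun s => heatDeriv n (τ * s) x) μ := by
    unfold heatDeriv
    refine AEStronglyMeasurable.smul_const ?_ _
    refine Measurable.aestronglyMeasurable ?_
    have : Measurable fun s : ℝ => heat n (τ * s) x :=
      measurable_uncurry_heat.comp (by fun_prop : Measurable fun s : ℝ => (τ * s, x))
    fun_prop
  have hmh : ∀ z : Rn n, Measurable fun s : ℝ => heat n (τ * s) z := fun z =>
    measurable_uncurry_heat.comp (by fun_prop : Measurable fun s : ℝ => (τ * s, z))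
  have hi0 : Integrable (fun s => heat n (τ * s) x) μ := by
    refine ((integrable_rpow_neg hα hpos hL (k := n / 2) (by positivity)).const_mul
        ((π / τ) ^ ((n:ℝ) / 2))).mono' (hmh x).aestronglyMeasurable ?_
    filter_upwards [hpos] with s hs
    rw [norm_of_nonneg (heat_nonneg (by positivity) x), heat, rpow_neg hs.le, ← div_eq_mul_inv,
        ← div_rpow (by positivity) hs.le, div_div]
    refine mul_le_of_le_one_right (by positivity) (exp_le_one_iff.2 ?_)
    rw [neg_nonpos]; positivity
  refine ⟨hbi.mono' hmd (hbound.mono fun s hs => hs x (Metric.mem_ball_self one_pos)), ?_⟩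
  have := hasFDerivAt_integral_of_dominated_of_fderiv_le (Metric.ball_mem_nhds x one_pos)
    (Eventually.of_forall fun z => (hmh z).aestronglyMeasurable) hi0 hmd hbound hbi
    (Eventually.of_forall fun s z _ => hasFDerivAt_heat (τ * s) z)
  refine this.congr_of_eventuallyEq (Eventually.of_forall fun z => ?_)
  exact gKer_eq_integral_heat hn hα hpos hL ht z

lemma lintegral_norm_heatDeriv_le (n : ℕ) (hα : 0 < α) (hα1 : α ≤ 1) (hn : 1 ≤ n) :
    ∃ C > 0, ∀ s > 0, ∀ z : Rn n, z ≠ 0 →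
      ∫⁻ t in Ioi (0:ℝ), ENNReal.ofReal ‖heatDeriv n (t ^ (1 / α) * s) z‖ ≤
        ENNReal.ofReal (C * ‖z‖ ^ (2 * α - 1 - n) * s ^ (-α)) := by
  obtain ⟨C, hC, hB⟩ := exists_norm_heatDeriv_le n
  set k := (n:ℝ) / 2 + 1
  have hn0 : (0:ℝ) < n := by positivity
  have hk : 1 < k := by simp only [k]; linarith [show 0 < (n:ℝ) / 2 by positivity]
  have hkα : 1 < k / α := by rw [lt_div_iff₀ hα]; linarith
  have hkα0 : 0 < k / α - 1 := by linarith
  refine ⟨C * (1 + 1 / (k / α - 1)), by positivity, fun s hs z hz => ?_⟩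
  have hz : 0 < ‖z‖ := norm_pos_iff.2 hz
  set A := ‖z‖ ^ 2 with hA
  have hA0 : 0 < A := by positivity
  set t₀ := (A / s) ^ α
  have ht₀ : 0 < t₀ := by positivity
  rw [← Ioc_union_Ioi_eq_Ioi ht₀.le, lintegral_union measurableSet_Ioi
      (Ioc_disjoint_Ioi le_rfl)]
  have h1 : ∫⁻ t in Ioc 0 t₀, ENNReal.ofReal ‖heatDeriv n (t ^ (1 / α) * s) z‖ ≤
      ENNReal.ofReal (C * ‖z‖ * A ^ (-k) * t₀) := by
    calc _ ≤ ∫⁻ t in Ioc 0 t₀, ENNReal.ofReal (C * ‖z‖ * A ^ (-k)) := by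
          refine setLIntegral_mono' measurableSet_Ioc fun t ht => ?_
          have : 0 < t := ht.1
          exact ENNReal.ofReal_le_ofReal (hB _ (by positivity) z).2
      _ = _ := by
          rw [setLIntegral_const, Real.volume_Ioc, sub_zero, ← ENNReal.ofReal_mul (by positivity)]
  have h2 : ∫⁻ t in Ioi t₀, ENNReal.ofReal ‖heatDeriv n (t ^ (1 / α) * s) z‖ ≤
      ENNReal.ofReal (C * ‖z‖ * s ^ (-k) * (t₀ ^ (1 - k / α) / (k / α - 1))) := by
    calc _ ≤ ∫⁻ t in Ioi t₀, ENNReal.ofReal (C * ‖z‖ * s ^ (-k)) *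
            ENNReal.ofReal (t ^ (-(k / α))) := by
          refine setLIntegral_mono' measurableSet_Ioi fun t ht => ?_
          have ht : 0 < t := ht₀.trans ht
          rw [← ENNReal.ofReal_mul (by positivity)]
          refine ENNReal.ofReal_le_ofReal ((hB _ (by positivity) z).1.trans_eq ?_)
          rw [mul_rpow (by positivity) hs.le, ← rpow_mul ht.le]
          rw [show 1 / α * -((n:ℝ) / 2 + 1) = -(k / α) by simp only [k]; ring]
          ring
      _ = _ := by
          rw [lintegral_const_mul _ (measurable_ofReal_rpow _),
            lintegral_rpow_Ioi (by linarith) ht₀, ← ENNReal.ofReal_mul (by positivity)]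
          congr 2
          rw [show -(k / α) + 1 = -(k / α - 1) by ring, div_neg, neg_div, neg_neg,
            show -(k / α - 1) = 1 - k / α by ring]
  refine (add_le_add h1 h2).trans ?_
  rw [← ENNReal.ofReal_add (by positivity) (by positivity)]
  refine ENNReal.ofReal_le_ofReal (le_of_eq ?_)
  have e1 : A ^ (-k) * t₀ = A ^ (α - k) * s ^ (-α) := by
    simp only [t₀]
    rw [div_rpow hA0.le hs.le, rpow_neg hs.le, rpow_sub hA0, rpow_neg hA0.le]
    field_simp
  have e2 : s ^ (-k) * t₀ ^ (1 - k / α) = A ^ (α - k) * s ^ (-α) := by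
    simp only [t₀]
    rw [← rpow_mul (by positivity), show α * (1 - k / α) = α - k by field_simp,
      div_rpow hA0.le hs.le, rpow_sub hs, rpow_neg hs.le, rpow_neg hs.le]
    field_simp
  have e3 : ‖z‖ * A ^ (α - k) = ‖z‖ ^ (2 * α - 1 - n) := by
    rw [hA, ← rpow_natCast, ← rpow_mul hz.le]
    nth_rw 1 [← rpow_one ‖z‖]
    rw [← rpow_add hz]
    congr 1
    simp only [k]; push_cast; ring
  calc _ = C * ‖z‖ * (A ^ (-k) * t₀) + C * ‖z‖ * (s ^ (-k) * t₀ ^ (1 - k / α)) / (k / α - 1) := by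
        ring
    _ = C * (1 + 1 / (k / α - 1)) * (‖z‖ * A ^ (α - k)) * s ^ (-α) := by rw [e1, e2]; ring
    _ = _ := by rw [e3]

set_option maxHeartbeats 1000000 in
/-- Measurable versions of the fractional heat kernel and of its derivatives, together with the
kernel bounds on which the mild formulation rests. -/
lemma exists_kernel_bounds (hn : 1 ≤ n) (hα : 0 < α) (hα1 : α ≤ 1) :
    ∃ (G : ℝ × Rn n → ℝ) (H : Fin n → ℝ × Rn n → ℝ) (C : ℝ≥0∞), C ≠ ∞ ∧ Measurable G ∧
      (∀ j, Measurable (H j)) ∧ (∀ t > 0, ∀ x, gKer n α t x = G (t, x)) ∧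
      (∀ t > 0, ∀ j x, dKer n α t j x = H j (t, x)) ∧
      (∀ f : Rn n → ℝ≥0∞, Measurable f → ∀ t > 0, ∀ x,
        ∫⁻ y, ENNReal.ofReal |G (t, x - y)| * f y ≤ C * hlMax f x) ∧
      ∀ j, ∀ z ≠ 0, ∫⁻ t in Ioi (0:ℝ), ENNReal.ofReal |H j (t, z)| ≤
        C * ENNReal.ofReal (‖z‖ ^ (2 * α - 1 - n)) := by
  obtain ⟨μ, hμ, hpos, hL⟩ := exists_stable_measure hα hα1
  obtain ⟨C, hC, hB⟩ := lintegral_norm_heatDeriv_le n hα hα1 hn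
  have hmG : Measurable fun q : (ℝ × Rn n) × ℝ => heat n (q.1.1 ^ (1 / α) * q.2) q.1.2 :=
    measurable_uncurry_heat.comp (by fun_prop :
      Measurable fun q : (ℝ × Rn n) × ℝ => (q.1.1 ^ (1 / α) * q.2, q.1.2))
  have hmH : ∀ y, Measurable fun q : (ℝ × Rn n) × ℝ =>
      heatDeriv n (q.1.1 ^ (1 / α) * q.2) q.1.2 y := fun y =>
    (measurable_heatDeriv_apply y).comp (by fun_prop :
      Measurable fun q : (ℝ × Rn n) × ℝ => (q.1.1 ^ (1 / α) * q.2, q.1.2))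
  set M := ∫⁻ s, ENNReal.ofReal (s ^ (-α)) ∂μ
  have hM : M ≠ ∞ := (lintegral_rpow_neg_lt_top hα hpos hL hα).ne
  refine ⟨fun q => ∫ s, heat n (q.1 ^ (1 / α) * s) q.2 ∂μ,
    fun j q => ∫ s, heatDeriv n (q.1 ^ (1 / α) * s) q.2 (EuclideanSpace.single j 1) ∂μ,
    2 ^ n + ENNReal.ofReal C * M, by finiteness, ?_, fun j => ?_, fun t ht x => ?_,
    fun t ht j x => ?_, fun f hf t ht x => ?_, fun j z hz => ?_⟩
  · exact hmG.stronglyMeasurable.integral_prod_right'.measurable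
  · exact (hmH _).stronglyMeasurable.integral_prod_right'.measurable
  · exact gKer_eq_integral_heat hn hα hpos hL ht x
  · have h := hasFDerivAt_gKer hn hα hpos hL ht x
    rw [dKer, h.2.fderiv, ContinuousLinearMap.integral_apply h.1]
  · set τ := t ^ (1 / α)
    have hτ : 0 < τ := by positivity
    have hm2 : Measurable fun q : Rn n × ℝ => heat n (τ * q.2) (x - q.1) :=
      measurable_uncurry_heat.comp (by fun_prop :
        Measurable fun q : Rn n × ℝ => (τ * q.2, x - q.1))
    have hm3 : Measurable fun q : Rn n × ℝ => ENNReal.ofReal (heat n (τ * q.2) (x - q.1)) * f q.1 :=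
      (hm2.ennreal_ofReal).mul (hf.comp measurable_fst)
    calc _ ≤ ∫⁻ y, ∫⁻ s, ENNReal.ofReal (heat n (τ * s) (x - y)) * f y ∂μ := by
          refine lintegral_mono fun y => ?_
          have hm4 : Measurable fun s => ENNReal.ofReal (heat n (τ * s) (x - y)) :=
            (hm2.comp (by fun_prop : Measurable fun s : ℝ => (y, s))).ennreal_ofReal
          rw [lintegral_mul_const _ hm4]
          gcongr
          rw [← Real.enorm_eq_ofReal_abs]
          refine (enorm_integral_le_lintegral_enorm _).trans_eq (lintegral_congr_ae ?_)
          filter_upwards [hpos] with s hs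
          exact Real.enorm_of_nonneg (heat_nonneg (by positivity) _)
      _ = ∫⁻ s, ∫⁻ y, ENNReal.ofReal (heat n (τ * s) (x - y)) * f y ∂volume ∂μ :=
          lintegral_lintegral_swap hm3.aemeasurable
      _ ≤ ∫⁻ s, 2 ^ n * hlMax f x ∂μ := by
          refine lintegral_mono_ae ?_
          filter_upwards [hpos] with s hs
          exact lintegral_heat_mul_le (by positivity) hf x
      _ = 2 ^ n * hlMax f x := by simp
      _ ≤ _ := by gcongr; exact le_self_add
  · have hm2 : Measurable fun q : ℝ × ℝ => ENNReal.ofReal ‖heatDeriv n (q.1 ^ (1 / α) * q.2) z‖ :=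
      (measurable_norm_heatDeriv.comp (by fun_prop :
        Measurable fun q : ℝ × ℝ => (q.1 ^ (1 / α) * q.2, z))).ennreal_ofReal
    calc _ ≤ ∫⁻ t in Ioi (0:ℝ), ∫⁻ s, ENNReal.ofReal ‖heatDeriv n (t ^ (1 / α) * s) z‖ ∂μ := by
          refine lintegral_mono fun t => ?_
          rw [← Real.enorm_eq_ofReal_abs]
          refine (enorm_integral_le_lintegral_enorm _).trans (lintegral_mono fun s => ?_)
          rw [Real.enorm_eq_ofReal_abs, ← Real.norm_eq_abs]
          refine ENNReal.ofReal_le_ofReal ((ContinuousLinearMap.le_opNorm _ _).trans_eq ?_)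
          simp
      _ = ∫⁻ s, (∫⁻ t in Ioi (0:ℝ), ENNReal.ofReal ‖heatDeriv n (t ^ (1 / α) * s) z‖) ∂μ :=
          lintegral_lintegral_swap hm2.aemeasurable
      _ ≤ ∫⁻ s, ENNReal.ofReal C * ENNReal.ofReal (‖z‖ ^ (2 * α - 1 - n)) *
            ENNReal.ofReal (s ^ (-α)) ∂μ := by
          refine lintegral_mono_ae ?_
          filter_upwards [hpos] with s hs
          refine (hB s hs z hz).trans_eq ?_
          rw [ENNReal.ofReal_mul (by positivity), ENNReal.ofReal_mul hC.le]
      _ = ENNReal.ofReal C * M * ENNReal.ofReal (‖z‖ ^ (2 * α - 1 - n)) := by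
          rw [lintegral_const_mul _ (measurable_ofReal_rpow _)]; ring
      _ ≤ _ := by gcongr; exact le_add_self

end Superposition

section Ball
open Filter Topology
variable {n : ℕ}

/-- The measurable functions of modular at most one at scale `R`, for all exponents in `E`. -/
def InBall (E : Set (Rn n → ℝ)) (R : ℝ≥0∞) (f : Rn n → ℝ≥0∞) : Prop :=
  Measurable f ∧ ∀ e ∈ E, ∫⁻ x, (f x / R) ^ e x ≤ 1

variable {E : Set (Rn n → ℝ)} {R τ : ℝ≥0∞} {f g f₁ f₂ f₃ : Rn n → ℝ≥0∞}

lemma InBall.mono (h : InBall E R f) (hE : ∀ e ∈ E, ∀ x, 1 ≤ e x) (hg : Measurable g)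
    (hgf : ∀ᵐ x, g x ≤ f x) (hR : R ≤ τ) : InBall E τ g := by
  refine ⟨hg, fun e he => (lintegral_mono_ae ?_).trans (h.2 e he)⟩
  filter_upwards [hgf] with x hx
  exact ENNReal.rpow_le_rpow (ENNReal.div_le_div hx hR) (by linarith [hE e he x])

lemma InBall.add_three (hE : ∀ e ∈ E, Measurable e ∧ ∀ x, 1 ≤ e x) (hf : Measurable f)
    (h : ∀ᵐ x, f x ≤ f₁ x + f₂ x + f₃ x) (h₁ : InBall E (R / 9) f₁) (h₂ : InBall E (R / 9) f₂)
    (h₃ : InBall E (R / 9) f₃) : InBall E R f :=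
  ⟨hf, fun e he => lintegral_add_three_le (hE e he).2 (hE e he).1 h h₁.1 h₂.1 (h₁.2 e he)
    (h₂.2 e he) (h₃.2 e he)⟩

lemma InBall.zero (hE : ∀ e ∈ E, ∀ x, 1 ≤ e x) : InBall E R (fun _ => 0) := by
  refine ⟨measurable_const, fun e he => ?_⟩
  rw [lintegral_congr fun x => by
    rw [ENNReal.zero_div, ENNReal.zero_rpow_of_pos (by linarith [hE e he x])]]
  simp

lemma InBall.ae_lt_top {r : ℝ} (hr : 1 ≤ r) (hrE : (fun _ => r) ∈ E) (hR : R ≠ ∞)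
    (h : InBall E R f) : ∀ᵐ x, f x < ∞ := by
  have h1 := MeasureTheory.ae_lt_top ((h.1.div_const R).pow_const r)
    ((h.2 _ hrE).trans_lt ENNReal.one_lt_top).ne
  filter_upwards [h1] with x hx
  rw [lt_top_iff_ne_top]
  intro h2
  rw [h2, ENNReal.top_div_of_ne_top hR, ENNReal.top_rpow_of_pos (by linarith)] at hx
  exact lt_irrefl _ hx

lemma InBall.lintegral_rpow_le {r : ℝ} (hr : 1 ≤ r) (hrE : (fun _ => r) ∈ E)
    {a : ℝ≥0∞} (ha : 1 ≤ a) (hat : a ≠ ∞) (h : InBall E (R / a) f) :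
    ∫⁻ x, (f x / R) ^ r ≤ a⁻¹ := by
  have ha0 : a ≠ 0 := (zero_lt_one.trans_le ha).ne'
  calc ∫⁻ x, (f x / R) ^ r ≤ ∫⁻ x, a⁻¹ * (f x / (R / a)) ^ r := by
        refine lintegral_mono fun x => ?_
        have e : f x / R = a⁻¹ * (f x / (R / a)) := by
          rw [div_eq_mul_inv, div_eq_mul_inv, div_eq_mul_inv, ENNReal.mul_inv
            (Or.inr (ENNReal.inv_ne_top.2 ha0)) (Or.inr (ENNReal.inv_ne_zero.2 hat)), inv_inv,
            mul_comm a⁻¹, mul_assoc, mul_assoc, ENNReal.mul_inv_cancel ha0 hat, mul_one]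
        rw [e, ENNReal.mul_rpow_of_nonneg _ _ (by linarith)]
        gcongr
        exact ENNReal.rpow_le_self_of_le_one (ENNReal.inv_le_one.2 ha) hr
    _ = a⁻¹ * ∫⁻ x, (f x / (R / a)) ^ r := lintegral_const_mul' _ _ (ENNReal.inv_ne_top.2 ha0)
    _ ≤ a⁻¹ * 1 := by gcongr; exact h.2 _ hrE
    _ = a⁻¹ := mul_one _

lemma InBall.ae_eq_zero {r : ℝ} (hr : 1 ≤ r) (hrE : (fun _ => r) ∈ E) (hR : R ≠ ∞)
    (h : ∀ k : ℕ, InBall E (R / 4 ^ k) f) : ∀ᵐ x, f x = 0 := by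
  have h1 : ∫⁻ x, (f x / R) ^ r = 0 := by
    have h2 : ∀ k : ℕ, ∫⁻ x, (f x / R) ^ r ≤ (4⁻¹) ^ k := fun k => by
      have := (h k).lintegral_rpow_le hr hrE (one_le_pow₀ (by norm_num)) (by finiteness)
      rwa [ENNReal.inv_pow] at this
    have h3 : Tendsto (fun k : ℕ => (4⁻¹ : ℝ≥0∞) ^ k) atTop (𝓝 0) :=
      ENNReal.tendsto_pow_atTop_nhds_zero_of_lt_one (ENNReal.inv_lt_one.2 (by norm_num))
    exact le_antisymm (ge_of_tendsto' h3 h2) (zero_le)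
  rw [lintegral_eq_zero_iff (((h 0).1.div_const R).pow_const r)] at h1
  filter_upwards [h1] with x hx
  rw [Pi.zero_apply, ENNReal.rpow_eq_zero_iff_of_pos (by linarith), ENNReal.div_eq_zero_iff] at hx
  exact hx.resolve_right hR

lemma InBall.liminf (hE : ∀ e ∈ E, Measurable e ∧ ∀ x, 1 ≤ e x) {F : ℕ → Rn n → ℝ≥0∞}
    (hR : R ≠ 0) (hF : ∀ k, InBall E R (F k)) :
    InBall E R fun x => Filter.liminf (fun k => F k x) atTop := by
  refine ⟨Measurable.liminf fun k => (hF k).1, fun e he => ?_⟩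
  have e1 : ∀ x, (Filter.liminf (fun k => F k x) atTop / R) ^ e x =
      Filter.liminf (fun k => (F k x / R) ^ e x) atTop := by
    intro x
    have hx : 0 ≤ e x := by linarith [(hE e he).2 x]
    refine Monotone.map_liminf_of_continuousAt (f := fun y => (y / R) ^ e x)
      (fun y z hyz => ENNReal.rpow_le_rpow (ENNReal.div_le_div_right hyz _) hx) _ ?_
    exact ((ENNReal.continuous_rpow_const).comp
      (ENNReal.continuous_div_const R hR)).continuousAt
  rw [lintegral_congr e1]
  refine (lintegral_liminf_le fun k => ((hF k).1.div_const R).pow (hE e he).1).trans ?_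
  refine (liminf_le_liminf (Eventually.of_forall fun k => (hF k).2 e he)).trans ?_
  simp

/-- Riesz potentials in the scale of balls, from Hedberg's inequality. -/
lemma VarExp.rieszPot_modular (hn : 1 ≤ n) {σ q c : ℝ} (hσ : 0 < σ) (hq : 1 < q)
    (hσq : σ * q < n) (hc : 0 < c) (hcq : 1 - σ * q / n = 1 / c)
    {s : Rn n → ℝ} {lo hi A κ : ℝ} (hs : VarExp n s lo hi A κ) :
    ∃ C : ℝ≥0∞, C ≠ 0 ∧ C ≠ ∞ ∧ ∀ δ : ℝ≥0∞, δ ≠ 0 → δ ≠ ∞ → ∀ W : Rn n → ℝ≥0∞, Measurable W →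
      ∫⁻ x, (W x / δ) ^ q ≤ 1 → ∫⁻ x, (W x / δ) ^ s x ≤ 1 →
      ∫⁻ x, (rieszPot σ W x / (C * δ)) ^ (c * s x) ≤ 1 := by
  obtain ⟨C₀, hC₀, h0⟩ := rieszPot_le_hlMax_rpow hn hσ hq hσq
  obtain ⟨C₁, hC₁1, hC₁, h1⟩ := hs.lintegral_hlMax_div_le
  have hC₁0 : C₁ ≠ 0 := (zero_lt_one.trans_le hC₁1).ne'
  have hs1 : ∀ x, 1 < s x := fun x => hs.one_lt.trans_le (hs.lo_le x)
  have hr0 : C₁ ^ (1 / c) ≠ 0 := by simp [hC₁0, hC₁]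
  have hrt : C₁ ^ (1 / c) ≠ ∞ := by simp [hC₁0, hC₁]
  refine ⟨(C₀ + 1) * C₁ ^ (1 / c), mul_ne_zero (by simp) hr0, by finiteness,
    fun δ hδ0 hδ W hW hWq hWs => (lintegral_mono fun x => ?_).trans (h1 δ W hW hWs)⟩
  have h2 := h0 _ (hW.div_const δ) hWq x
  rw [hlMax_div hW, hcq] at h2
  have h3 : rieszPot σ W x = δ * rieszPot σ (fun y => W y / δ) x := by
    rw [← rieszPot_const_mul σ hδ]
    congr 1; funext y
    rw [ENNReal.mul_div_cancel hδ0 hδ]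
  have h4 : rieszPot σ W x / ((C₀ + 1) * C₁ ^ (1 / c) * δ) ≤ (hlMax W x / (C₁ * δ)) ^ (1 / c) := by
    refine ENNReal.div_le_of_le_mul ?_
    rw [h3]
    calc δ * rieszPot σ (fun y => W y / δ) x ≤ δ * ((C₀ + 1) * (hlMax W x / δ) ^ (1 / c)) := by
          gcongr
          exact h2.trans (by gcongr; exact le_self_add)
      _ = (hlMax W x / (C₁ * δ) * C₁) ^ (1 / c) * ((C₀ + 1) * δ) := by
          have : hlMax W x / (C₁ * δ) * C₁ = hlMax W x / δ := by
            rw [div_eq_mul_inv, div_eq_mul_inv, ENNReal.mul_inv (Or.inl hC₁0) (Or.inl hC₁),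
              mul_assoc, mul_right_comm, ENNReal.inv_mul_cancel hC₁0 hC₁, one_mul]
          rw [this]; ring
      _ = _ := by
          rw [ENNReal.mul_rpow_of_nonneg _ _ (by positivity)]; ring
  calc _ ≤ ((hlMax W x / (C₁ * δ)) ^ (1 / c)) ^ (c * s x) :=
        ENNReal.rpow_le_rpow h4 (by have := hs1 x; positivity)
    _ = _ := by
        rw [← ENNReal.rpow_mul]
        congr 1
        field_simp

/-- The multilinear estimate behind the nonlinear term. -/
lemma InBall.lintegral_product_le {b : ℕ} (hE : ∀ e ∈ E, Measurable e ∧ ∀ x, (b:ℝ) + 1 ≤ e x)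
    (hR0 : R ≠ 0) (hR : R ≠ ∞) (hτ0 : τ ≠ 0) (hτ : τ ≠ ∞) {U V T W : Rn n → ℝ≥0∞}
    (hU : InBall E R U) (hV : InBall E R V) (hT : InBall E τ T)
    (hW : ∀ᵐ x, W x ≤ ((b:ℝ≥0∞) + 1) * (U x ^ b + V x ^ b) * T x) :
    ∀ e ∈ E, ∫⁻ x, (W x / (6 * ((b:ℝ≥0∞) + 1) * R ^ b * τ)) ^ (e x / ((b:ℝ) + 1)) ≤ 1 := by
  intro e he
  have hb : 0 < (b:ℝ) + 1 := by positivity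
  set c : ℝ≥0∞ := 2 * ((b:ℝ≥0∞) + 1) * R ^ b * τ
  have hc0 : c ≠ 0 := by simp [c, hR0, hτ0]
  have hct : c ≠ ∞ := by finiteness
  have hlow : ∀ x, 1 ≤ e x / ((b:ℝ) + 1) := fun x => by
    rw [le_div_iff₀ hb, one_mul]; exact (hE e he).2 x
  have key : ∫⁻ x, (W x / c) ^ (e x / ((b:ℝ) + 1)) ≤ 3 := by
    calc _ ≤ ∫⁻ x, ((U x / R) ^ e x + (V x / R) ^ e x + (T x / τ) ^ e x) := by
          refine lintegral_mono_ae ?_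
          filter_upwards [hW] with x hx
          set m := max (max (U x / R) (V x / R)) (T x / τ)
          have he0 : 0 ≤ e x := by linarith [(hE e he).2 x]
          have hUm : U x ≤ R * m := by
            rw [← ENNReal.div_le_iff' hR0 hR]; exact (le_max_left _ _).trans (le_max_left _ _)
          have hVm : V x ≤ R * m := by
            rw [← ENNReal.div_le_iff' hR0 hR]; exact (le_max_right _ _).trans (le_max_left _ _)
          have hTm : T x ≤ τ * m := by
            rw [← ENNReal.div_le_iff' hτ0 hτ]; exact le_max_right _ _
          have h1 : W x / c ≤ m ^ (b + 1) := by
            refine ENNReal.div_le_of_le_mul (hx.trans ?_)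
            calc _ ≤ ((b:ℝ≥0∞) + 1) * ((R * m) ^ b + (R * m) ^ b) * (τ * m) := by gcongr
              _ = _ := by simp only [c]; ring
          calc (W x / c) ^ (e x / ((b:ℝ) + 1)) ≤ (m ^ (b + 1)) ^ (e x / ((b:ℝ) + 1)) :=
                ENNReal.rpow_le_rpow h1 (by positivity)
            _ = m ^ e x := by
                rw [← ENNReal.rpow_natCast, ← ENNReal.rpow_mul]
                congr 1; push_cast; field_simp
            _ ≤ _ := by
                rcases max_cases (max (U x / R) (V x / R)) (T x / τ) with h | h
                · rcases max_cases (U x / R) (V x / R) with h' | h'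
                  · simp only [m, h.1, h'.1, add_assoc]; exact le_self_add
                  · simp only [m, h.1, h'.1]; exact le_add_right le_add_self
                · simp only [m, h.1]; exact le_add_self
      _ ≤ 1 + 1 + 1 := by
          have hm : ∀ {g : Rn n → ℝ≥0∞} (_ : Measurable g) (a : ℝ≥0∞),
              Measurable fun x => (g x / a) ^ e x := fun hg a => (hg.div_const a).pow (hE e he).1
          have hs : ∀ f₁ f₂ f₃ : Rn n → ℝ≥0∞, Measurable f₁ → Measurable f₂ →
              ∫⁻ x, (f₁ x + f₂ x + f₃ x) = (∫⁻ x, f₁ x) + (∫⁻ x, f₂ x) + ∫⁻ x, f₃ x := by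
            intro f₁ f₂ f₃ h1 h2
            rw [← lintegral_add_left h1, ← lintegral_add_left (by fun_prop)]
          rw [hs _ _ _ (hm hU.1 R) (hm hV.1 R)]
          gcongr
          exacts [hU.2 e he, hV.2 e he, hT.2 e he]
      _ = 3 := by norm_num
  have h2 := lintegral_div_rpow_le_one (by norm_num) (by norm_num) hlow key
  refine le_trans (le_of_eq (lintegral_congr fun x => ?_)) h2
  congr 1
  rw [div_eq_mul_inv, div_eq_mul_inv, div_eq_mul_inv, mul_assoc (W x),
    ← ENNReal.mul_inv (Or.inl hc0) (Or.inl hct)]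
  congr 2
  simp only [c]; ring

end Ball

section Duhamel
open Filter Topology
variable {n : ℕ}

lemma ae_ae_swap {P : ℝ × Rn n → Prop} {ν : Measure ℝ} [SFinite ν]
    (h : ∀ᵐ z ∂ν.prod (volume : Measure (Rn n)), P z) : ∀ᵐ x : Rn n, ∀ᵐ t ∂ν, P (t, x) :=
  Measure.ae_ae_of_ae_prod
    ((Measure.measurePreserving_swap
      (μ := (volume : Measure (Rn n))) (ν := ν)).quasiMeasurePreserving.ae h)

lemma timeSup_le_iff {u : ℝ → Rn n → ℝ} {x : Rn n} {a : ℝ≥0∞} :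
    timeSup n u x ≤ a ↔ ∀ᵐ t ∂volume.restrict (Ioi (0:ℝ)), ENNReal.ofReal |u t x| ≤ a :=
  ⟨fun h => (ENNReal.ae_le_essSup _).mono fun _ ht => ht.trans h, fun h => essSup_le_of_ae_le a h⟩

lemma ae_le_timeSup (u : ℝ → Rn n → ℝ) (x : Rn n) :
    ∀ᵐ t ∂volume.restrict (Ioi (0:ℝ)), ENNReal.ofReal |u t x| ≤ timeSup n u x :=
  timeSup_le_iff.1 le_rfl

lemma measurable_timeSup {u : ℝ → Rn n → ℝ} (hu : Measurable (Function.uncurry u)) :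
    Measurable (timeSup n u) := by
  refine measurable_of_Iic fun a => ?_
  have h1 : MeasurableSet {z : ℝ × Rn n | a < ENNReal.ofReal |u z.1 z.2|} :=
    measurableSet_lt measurable_const (hu.norm.ennreal_ofReal)
  have h2 := measurable_measure_prodMk_right (μ := volume.restrict (Ioi (0:ℝ))) h1
  convert h2 (measurableSet_singleton (0:ℝ≥0∞)) using 1
  ext x
  rw [mem_preimage, mem_Iic, timeSup_le_iff, ae_iff]
  simp [preimage]

lemma timeSup_le_of_ae {u : ℝ → Rn n → ℝ} {g : Rn n → ℝ≥0∞}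
    (h : ∀ᵐ z ∂(volume.restrict (Ioi (0:ℝ))).prod (volume : Measure (Rn n)),
      ENNReal.ofReal |u z.1 z.2| ≤ g z.2) : ∀ᵐ x, timeSup n u x ≤ g x := by
  filter_upwards [ae_ae_swap h] with x hx
  exact timeSup_le_iff.2 hx

/-- The Duhamel integral of `w` against the kernels `H j`. -/
def duhamel (H : Fin n → ℝ × Rn n → ℝ) (w : ℝ → Rn n → ℝ) (t : ℝ) (x : Rn n) : ℝ :=
  ∑ j, ∫ z in Ioc 0 t ×ˢ univ, H j (t - z.1, x - z.2) * w z.1 z.2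

variable {H : Fin n → ℝ × Rn n → ℝ} {C : ℝ≥0∞} {σ : ℝ} {w w' : ℝ → Rn n → ℝ}

lemma lintegral_duhamel_le (hn : 1 ≤ n) (hH : ∀ j, Measurable (H j))
    (hHC : ∀ j, ∀ z ≠ 0, ∫⁻ t in Ioi 0, ENNReal.ofReal |H j (t, z)| ≤
      C * ENNReal.ofReal (‖z‖ ^ (σ - n))) (hC : C ≠ ∞)
    (hw : Measurable (Function.uncurry w)) (j : Fin n) (t : ℝ) (x : Rn n) :
    ∫⁻ z in Ioc 0 t ×ˢ univ, ENNReal.ofReal |H j (t - z.1, x - z.2) * w z.1 z.2| ≤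
      C * rieszPot σ (timeSup n w) x := by
  have : Nonempty (Fin n) := ⟨⟨0, hn⟩⟩
  have hm : Measurable fun z : ℝ × Rn n =>
      ENNReal.ofReal |H j (t - z.1, x - z.2) * w z.1 z.2| := by
    have h1 := hw.comp (measurable_id (α := ℝ × Rn n))
    have h2 := (hH j).comp (g := H j) (f := fun z : ℝ × Rn n => (t - z.1, x - z.2)) (by fun_prop)
    exact (h2.mul h1).norm.ennreal_ofReal
  rw [Measure.volume_eq_prod, ← Measure.prod_restrict, Measure.restrict_univ,
    lintegral_prod_symm _ hm.aemeasurable, rieszPot, ← lintegral_const_mul' _ _ hC]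
  refine lintegral_mono_ae ?_
  filter_upwards [Measure.ae_ne volume x] with y hy
  have h1 : ∀ᵐ s ∂volume.restrict (Ioc 0 t), ENNReal.ofReal |w s y| ≤ timeSup n w y :=
    ae_restrict_of_ae_restrict_of_subset Ioc_subset_Ioi_self (ae_le_timeSup w y)
  calc ∫⁻ s in Ioc 0 t, ENNReal.ofReal |H j (t - s, x - y) * w s y|
      ≤ ∫⁻ s in Ioc 0 t, ENNReal.ofReal |H j (t - s, x - y)| * timeSup n w y := by
        refine lintegral_mono_ae ?_
        filter_upwards [h1] with s hs
        rw [abs_mul, ENNReal.ofReal_mul (abs_nonneg _)]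
        gcongr
    _ = (∫⁻ s in Ioc 0 t, ENNReal.ofReal |H j (t - s, x - y)|) * timeSup n w y := by
        refine lintegral_mul_const _ ?_
        have := (hH j).comp (g := H j) (f := fun s : ℝ => (t - s, x - y)) (by fun_prop)
        exact this.norm.ennreal_ofReal
    _ ≤ (∫⁻ s in Ioi 0, ENNReal.ofReal |H j (s, x - y)|) * timeSup n w y := by
        refine mul_le_mul_left ?_ _
        rw [← lintegral_indicator measurableSet_Ioi,
          ← lintegral_sub_left_eq_self (μ := volume) _ t, setLIntegral_congr Ioo_ae_eq_Ioc.symm,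
          ← lintegral_indicator measurableSet_Ioo]
        refine lintegral_mono fun s => ?_
        by_cases hs : s ∈ Ioo 0 t
        · rw [indicator_of_mem hs, indicator_of_mem (by simpa using hs.2)]
        · rw [indicator_of_notMem hs]; exact zero_le
    _ ≤ (C * ENNReal.ofReal (‖x - y‖ ^ (σ - n))) * timeSup n w y := by
        gcongr
        exact hHC j _ (sub_ne_zero.2 hy.symm)
    _ = _ := mul_assoc _ _ _

lemma integrableOn_duhamel (hn : 1 ≤ n) (hH : ∀ j, Measurable (H j))
    (hHC : ∀ j, ∀ z ≠ 0, ∫⁻ t in Ioi 0, ENNReal.ofReal |H j (t, z)| ≤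
      C * ENNReal.ofReal (‖z‖ ^ (σ - n))) (hC : C ≠ ∞)
    (hw : Measurable (Function.uncurry w)) (j : Fin n) (t : ℝ) {x : Rn n}
    (hx : rieszPot σ (timeSup n w) x < ∞) :
    IntegrableOn (fun z : ℝ × Rn n => H j (t - z.1, x - z.2) * w z.1 z.2) (Ioc 0 t ×ˢ univ) := by
  have h2 := (hH j).comp (g := H j) (f := fun z : ℝ × Rn n => (t - z.1, x - z.2)) (by fun_prop)
  refine ⟨(h2.mul hw).aestronglyMeasurable, ?_⟩
  rw [hasFiniteIntegral_iff_norm]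
  exact (lintegral_duhamel_le hn hH hHC hC hw j t x).trans_lt (ENNReal.mul_lt_top hC.lt_top hx)

lemma ofReal_abs_duhamel_le (hn : 1 ≤ n) (hH : ∀ j, Measurable (H j))
    (hHC : ∀ j, ∀ z ≠ 0, ∫⁻ t in Ioi 0, ENNReal.ofReal |H j (t, z)| ≤
      C * ENNReal.ofReal (‖z‖ ^ (σ - n))) (hC : C ≠ ∞)
    (hw : Measurable (Function.uncurry w)) (t : ℝ) (x : Rn n) :
    ENNReal.ofReal |duhamel H w t x| ≤ n * C * rieszPot σ (timeSup n w) x := by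
  rw [← Real.enorm_eq_ofReal_abs, duhamel]
  calc _ ≤ ∑ j, ‖∫ z in Ioc 0 t ×ˢ univ, H j (t - z.1, x - z.2) * w z.1 z.2‖ₑ := enorm_sum_le _ _
    _ ≤ ∑ _j : Fin n, C * rieszPot σ (timeSup n w) x := by
        refine Finset.sum_le_sum fun j _ => (enorm_integral_le_lintegral_enorm _).trans ?_
        simp_rw [Real.enorm_eq_ofReal_abs]
        exact lintegral_duhamel_le hn hH hHC hC hw j t x
    _ = _ := by simp [mul_assoc]

lemma duhamel_sub (hn : 1 ≤ n) (hH : ∀ j, Measurable (H j))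
    (hHC : ∀ j, ∀ z ≠ 0, ∫⁻ t in Ioi 0, ENNReal.ofReal |H j (t, z)| ≤
      C * ENNReal.ofReal (‖z‖ ^ (σ - n))) (hC : C ≠ ∞)
    (hw : Measurable (Function.uncurry w)) (hw' : Measurable (Function.uncurry w')) (t : ℝ)
    {x : Rn n} (hx : rieszPot σ (timeSup n w) x < ∞) (hx' : rieszPot σ (timeSup n w') x < ∞) :
    duhamel H w t x - duhamel H w' t x = duhamel H (fun s y => w s y - w' s y) t x := by
  simp only [duhamel, ← Finset.sum_sub_distrib]
  refine Finset.sum_congr rfl fun j _ => ?_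
  rw [← integral_sub (integrableOn_duhamel hn hH hHC hC hw j t hx)
    (integrableOn_duhamel hn hH hHC hC hw' j t hx')]
  simp_rw [mul_sub]

lemma measurable_duhamel (hH : ∀ j, Measurable (H j)) (hw : Measurable (Function.uncurry w)) :
    Measurable (Function.uncurry (duhamel H w)) := by
  change Measurable fun q : ℝ × Rn n => ∑ j, ∫ z in Ioc 0 q.1 ×ˢ univ,
    H j (q.1 - z.1, q.2 - z.2) * w z.1 z.2
  refine Finset.measurable_fun_sum _ fun j _ => ?_
  have hS : MeasurableSet {q : (ℝ × Rn n) × (ℝ × Rn n) | q.2.1 ∈ Ioc 0 q.1.1} := by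
    simp only [mem_Ioc]
    exact (measurableSet_lt measurable_const measurable_snd.fst).inter
      (measurableSet_le measurable_snd.fst measurable_fst.fst)
  have h1 : Measurable fun q : (ℝ × Rn n) × (ℝ × Rn n) =>
      H j (q.1.1 - q.2.1, q.1.2 - q.2.2) * w q.2.1 q.2.2 :=
    ((hH j).comp (by fun_prop)).mul (hw.comp measurable_snd)
  have h2 := (h1.indicator hS).stronglyMeasurable.integral_prod_right'
    (ν := (volume : Measure (ℝ × Rn n)))
  convert h2.measurable using 2 with q
  rw [← integral_indicator (measurableSet_Ioc.prod MeasurableSet.univ)]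
  congr 1; funext z
  simp [indicator]

end Duhamel

section FixedPoint
open Filter Topology
variable {n : ℕ}

lemma ae_prod_le_timeSup {u : ℝ → Rn n → ℝ} (hu : Measurable (Function.uncurry u)) :
    ∀ᵐ z ∂(volume.restrict (Ioi (0:ℝ))).prod (volume : Measure (Rn n)),
      ENNReal.ofReal |u z.1 z.2| ≤ timeSup n u z.2 := by
  have hS : MeasurableSet {z : Rn n × ℝ | ENNReal.ofReal |u z.2 z.1| ≤ timeSup n u z.1} :=
    measurableSet_le (hu.comp measurable_swap).norm.ennreal_ofReal
      ((measurable_timeSup hu).comp measurable_fst)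
  have h1 : ∀ᵐ z ∂(volume : Measure (Rn n)).prod (volume.restrict (Ioi (0:ℝ))),
      ENNReal.ofReal |u z.2 z.1| ≤ timeSup n u z.1 :=
    (Measure.ae_prod_iff_ae_ae hS).2 (ae_of_all _ fun x => ae_le_timeSup u x)
  exact Measure.measurePreserving_swap.quasiMeasurePreserving.ae h1

lemma ae_prod_of_ae_snd {P : Rn n → Prop} (h : ∀ᵐ x, P x) :
    ∀ᵐ z ∂(volume.restrict (Ioi (0:ℝ))).prod (volume : Measure (Rn n)), P z.2 :=
  Measure.quasiMeasurePreserving_snd.ae h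

lemma timeSup_sub_comm (u v : ℝ → Rn n → ℝ) : timeSup n (u - v) = timeSup n (v - u) := by
  funext x
  simp only [timeSup, Pi.sub_apply, abs_sub_comm]

variable {E : Set (Rn n → ℝ)} {R : ℝ≥0∞} {r : ℝ} {u v : ℝ → Rn n → ℝ}

lemma measurable_uncurry_sub (hu : Measurable (Function.uncurry u))
    (hv : Measurable (Function.uncurry v)) : Measurable (Function.uncurry (u - v)) := hu.sub hv

lemma ae_eq_of_timeSup_sub_eq_zero (hu : Measurable (Function.uncurry u))
    (hv : Measurable (Function.uncurry v)) (h : ∀ᵐ x, timeSup n (u - v) x = 0) :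
    ∀ᵐ z ∂(volume.restrict (Ioi (0:ℝ))).prod (volume : Measure (Rn n)), u z.1 z.2 = v z.1 z.2 := by
  filter_upwards [ae_prod_le_timeSup (measurable_uncurry_sub hu hv), ae_prod_of_ae_snd h]
    with z hz hz0
  have h1 : ENNReal.ofReal |u z.1 z.2 - v z.1 z.2| ≤ 0 := hz.trans hz0.le
  rw [nonpos_iff_eq_zero, ENNReal.ofReal_eq_zero] at h1
  exact sub_eq_zero.1 (abs_nonpos_iff.1 h1)

lemma ae_timeSup_le_add_three {u₁ u₂ u₃ : ℝ → Rn n → ℝ} (h₁ : Measurable (Function.uncurry u₁))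
    (h₂ : Measurable (Function.uncurry u₂)) (h₃ : Measurable (Function.uncurry u₃))
    (h : ∀ᵐ z ∂(volume.restrict (Ioi (0:ℝ))).prod (volume : Measure (Rn n)),
      |u z.1 z.2| ≤ |u₁ z.1 z.2| + |u₂ z.1 z.2| + |u₃ z.1 z.2|) :
    ∀ᵐ x, timeSup n u x ≤ timeSup n u₁ x + timeSup n u₂ x + timeSup n u₃ x := by
  refine timeSup_le_of_ae (g := fun x => timeSup n u₁ x + timeSup n u₂ x + timeSup n u₃ x) ?_
  filter_upwards [h, ae_prod_le_timeSup h₁, ae_prod_le_timeSup h₂, ae_prod_le_timeSup h₃]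
    with z hz hz₁ hz₂ hz₃
  refine (ENNReal.ofReal_le_ofReal hz).trans ?_
  rw [ENNReal.ofReal_add (by positivity) (by positivity),
    ENNReal.ofReal_add (by positivity) (by positivity)]
  gcongr

lemma InBall.timeSup_add_three (hE : ∀ e ∈ E, Measurable e ∧ ∀ x, 1 ≤ e x)
    {u₁ u₂ u₃ : ℝ → Rn n → ℝ} (hu : Measurable (Function.uncurry u))
    (h₁ : Measurable (Function.uncurry u₁))
    (h₂ : Measurable (Function.uncurry u₂)) (h₃ : Measurable (Function.uncurry u₃))
    (h : ∀ᵐ z ∂(volume.restrict (Ioi (0:ℝ))).prod (volume : Measure (Rn n)),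
      |u z.1 z.2| ≤ |u₁ z.1 z.2| + |u₂ z.1 z.2| + |u₃ z.1 z.2|)
    (b₁ : InBall E (R / 9) (timeSup n u₁)) (b₂ : InBall E (R / 9) (timeSup n u₂))
    (b₃ : InBall E (R / 9) (timeSup n u₃)) : InBall E R (timeSup n u) :=
  InBall.add_three hE (measurable_timeSup hu) (ae_timeSup_le_add_three h₁ h₂ h₃ h) b₁ b₂ b₃

lemma timeSup_zero : timeSup n (0 : ℝ → Rn n → ℝ) = fun _ => 0 := by
  funext x
  rw [← nonpos_iff_eq_zero, timeSup_le_iff]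
  simp

lemma ae_cauchySeq_of_inBall (hr : 1 ≤ r) (hrE : (fun _ => r) ∈ E)
    (hR0 : R ≠ 0) (hR : R ≠ ∞) {u : ℕ → ℝ → Rn n → ℝ}
    (hu : ∀ k, Measurable (Function.uncurry (u k)))
    (h : ∀ k, InBall E (R / 4 ^ k) (timeSup n (u (k + 1) - u k))) :
    ∀ᵐ z ∂(volume.restrict (Ioi (0:ℝ))).prod (volume : Measure (Rn n)),
      CauchySeq fun k => u k z.1 z.2 := by
  have hr0 : 0 < r := by linarith
  have h1 : ∀ k : ℕ, ∫⁻ x, (timeSup n (u (k + 1) - u k) x / (R / 2 ^ k)) ^ r ≤ (2⁻¹) ^ k := by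
    intro k
    rw [← ENNReal.inv_pow]
    refine InBall.lintegral_rpow_le hr hrE (one_le_pow₀ (by norm_num)) (by finiteness) ?_
    convert h k using 1
    rw [div_eq_mul_inv, div_eq_mul_inv, div_eq_mul_inv, mul_assoc,
      ← ENNReal.mul_inv (by simp) (by simp), ← mul_pow]
    norm_num
  have hm : ∀ k : ℕ, Measurable fun x => (timeSup n (u (k + 1) - u k) x / (R / 2 ^ k)) ^ r :=
    fun k => ((measurable_timeSup ((hu (k + 1)).sub (hu k))).div_const _).pow_const r
  have h2 : ∀ᵐ x, ∑' k : ℕ, (timeSup n (u (k + 1) - u k) x / (R / 2 ^ k)) ^ r < ∞ := by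
    refine ae_lt_top (Measurable.tsum hm) (ne_of_lt ?_)
    rw [lintegral_tsum fun k => (hm k).aemeasurable]
    refine (ENNReal.tsum_le_tsum h1).trans_lt ?_
    rw [ENNReal.tsum_geometric, ENNReal.inv_lt_top]
    simp
  have h3 : ∀ᵐ z ∂(volume.restrict (Ioi (0:ℝ))).prod (volume : Measure (Rn n)), ∀ k,
      ENNReal.ofReal |(u (k + 1) - u k) z.1 z.2| ≤ timeSup n (u (k + 1) - u k) z.2 :=
    ae_all_iff.2 fun k => ae_prod_le_timeSup ((hu (k + 1)).sub (hu k))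
  filter_upwards [h3, ae_prod_of_ae_snd h2] with z hz hD
  set D := ∑' k : ℕ, (timeSup n (u (k + 1) - u k) z.2 / (R / 2 ^ k)) ^ r
  have hB : R * D ^ r⁻¹ ≠ ∞ :=
    ENNReal.mul_ne_top hR (ENNReal.rpow_ne_top_of_nonneg (by positivity) hD.ne)
  refine cauchySeq_of_le_geometric (1 / 2) (R * D ^ r⁻¹).toReal (by norm_num) fun k => ?_
  have h4 : timeSup n (u (k + 1) - u k) z.2 ≤ R * D ^ r⁻¹ * (2⁻¹) ^ k := by
    have h5 : (timeSup n (u (k + 1) - u k) z.2 / (R / 2 ^ k)) ^ r ≤ D := ENNReal.le_tsum k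
    rw [← ENNReal.le_rpow_inv_iff hr0, ENNReal.div_le_iff_le_mul] at h5
    · refine h5.trans (le_of_eq ?_)
      rw [div_eq_mul_inv, ENNReal.inv_pow]; ring
    · exact Or.inl (ENNReal.div_ne_zero.2 ⟨hR0, by finiteness⟩)
    · exact Or.inl (ENNReal.div_ne_top hR (by simp))
  have h6 := (hz k).trans h4
  rw [dist_comm, Real.dist_eq]
  have h7 := (ENNReal.ofReal_le_iff_le_toReal (by finiteness)).1 h6
  refine h7.trans (le_of_eq ?_)
  simp [ENNReal.toReal_mul, ENNReal.toReal_pow]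

/-- Banach's fixed point theorem in a ball of the mixed space. -/
lemma exists_unique_fixedPoint (hE : ∀ e ∈ E, Measurable e ∧ ∀ x, 1 ≤ e x) (hr : 1 ≤ r)
    (hrE : (fun _ => r) ∈ E) (hR0 : R ≠ 0) (hR : R ≠ ∞)
    {Ψ : (ℝ → Rn n → ℝ) → ℝ → Rn n → ℝ} (hΨ0 : Ψ 0 = 0)
    (hΨm : ∀ u, Measurable (Function.uncurry u) → Measurable (Function.uncurry (Ψ u)))
    (hΨ : ∀ u v, Measurable (Function.uncurry u) → Measurable (Function.uncurry v) →
      InBall E R (timeSup n u) → InBall E R (timeSup n v) → ∀ τ : ℝ≥0∞, τ ≠ 0 → τ ≠ ∞ →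
      InBall E τ (timeSup n (u - v)) → InBall E (τ / 9) (timeSup n (Ψ u - Ψ v)))
    {a₁ a₂ : ℝ → Rn n → ℝ} (hm₁ : Measurable (Function.uncurry a₁))
    (hm₂ : Measurable (Function.uncurry a₂)) (h₁ : InBall E (R / 9) (timeSup n a₁))
    (h₂ : InBall E (R / 9) (timeSup n a₂)) :
    ∃ u, Measurable (Function.uncurry u) ∧ InBall E R (timeSup n u) ∧
      (∀ᵐ z ∂(volume.restrict (Ioi (0:ℝ))).prod (volume : Measure (Rn n)),
        u z.1 z.2 = a₁ z.1 z.2 + a₂ z.1 z.2 - Ψ u z.1 z.2) ∧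
      ∀ v, Measurable (Function.uncurry v) → InBall E R (timeSup n v) →
        (∀ᵐ z ∂(volume.restrict (Ioi (0:ℝ))).prod (volume : Measure (Rn n)),
          v z.1 z.2 = a₁ z.1 z.2 + a₂ z.1 z.2 - Ψ v z.1 z.2) →
        ∀ᵐ z ∂(volume.restrict (Ioi (0:ℝ))).prod (volume : Measure (Rn n)),
          v z.1 z.2 = u z.1 z.2 := by
  have hE1 : ∀ e ∈ E, ∀ x, 1 ≤ e x := fun e he => (hE e he).2
  have hm0 : Measurable (Function.uncurry (0 : ℝ → Rn n → ℝ)) := measurable_const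
  have b0 : ∀ {ρ : ℝ≥0∞}, InBall E ρ (timeSup n (0 : ℝ → Rn n → ℝ)) := by
    intro ρ; rw [timeSup_zero]; exact InBall.zero hE1
  have h94 : ∀ a : ℝ≥0∞, a / 9 ≤ a / 4 := fun a => ENNReal.div_le_div_left (by norm_num) a
  have hd0 : ∀ {ρ : ℝ≥0∞} (k : ℕ), ρ ≠ 0 → ρ / 4 ^ k ≠ 0 := fun k h =>
    ENNReal.div_ne_zero.2 ⟨h, by finiteness⟩
  have hdt : ∀ {ρ : ℝ≥0∞} (k : ℕ), ρ ≠ ∞ → ρ / 4 ^ k ≠ ∞ := fun k h =>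
    ENNReal.div_ne_top h (by simp)
  have hd4 : ∀ (ρ : ℝ≥0∞) (k : ℕ), ρ / 4 ^ k / 9 ≤ ρ / 4 ^ (k + 1) := fun ρ k => by
    refine (h94 _).trans (le_of_eq ?_)
    rw [div_eq_mul_inv, div_eq_mul_inv, div_eq_mul_inv, mul_assoc,
      ← ENNReal.mul_inv (by simp) (by simp), pow_succ]
  have h9 : (9 * R) / 9 = R := by
    rw [mul_comm]; exact ENNReal.mul_div_cancel_right (by norm_num) (by norm_num)
  have h9R : 9 * R ≠ ∞ := by finiteness
  have h9R0 : 9 * R ≠ 0 := by simp [hR0]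
  let Φ : (ℝ → Rn n → ℝ) → ℝ → Rn n → ℝ := fun u => a₁ + a₂ - Ψ u
  have hΦm : ∀ u, Measurable (Function.uncurry u) → Measurable (Function.uncurry (Φ u)) :=
    fun u hu => (hm₁.add hm₂).sub (hΨm u hu)
  have hΦsub : ∀ u v, Φ u - Φ v = Ψ v - Ψ u := fun u v => by simp only [Φ]; abel
  have hΦR : ∀ u, Measurable (Function.uncurry u) → InBall E R (timeSup n u) →
      InBall E R (timeSup n (Φ u)) := by
    intro u hu hb
    have h3 := hΨ u 0 hu hm0 hb b0 R hR0 hR (by rwa [sub_zero])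
    rw [hΨ0, sub_zero] at h3
    refine InBall.timeSup_add_three hE (hΦm u hu) hm₁ hm₂ (hΨm u hu) (ae_of_all _ fun z => ?_)
      h₁ h₂ h3
    exact (abs_sub _ _).trans (add_le_add_left (abs_add_le _ _) _)
  let U : ℕ → ℝ → Rn n → ℝ := fun k => Φ^[k] 0
  have hUs : ∀ k, U (k + 1) = Φ (U k) := fun k => Function.iterate_succ_apply' _ _ _
  have hU : ∀ k, Measurable (Function.uncurry (U k)) ∧ InBall E R (timeSup n (U k)) := by
    intro k
    induction k with
    | zero => exact ⟨hm0, b0⟩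
    | succ k ih => rw [hUs]; exact ⟨hΦm _ ih.1, hΦR _ ih.1 ih.2⟩
  have hUsub : ∀ k j, InBall E (R / 4 ^ k) (timeSup n (U (k + j) - U k)) := by
    intro k
    induction k with
    | zero => intro j; simpa [U] using (hU j).2
    | succ k ih =>
      intro j
      rw [add_right_comm, hUs, hUs, hΦsub, timeSup_sub_comm]
      have h3 := hΨ _ _ (hU (k + j)).1 (hU k).1 (hU _).2 (hU k).2 _ (hd0 k hR0) (hdt k hR) (ih j)
      exact h3.mono hE1 h3.1 (ae_of_all _ fun _ => le_rfl) (hd4 R k)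
  have hC := ae_cauchySeq_of_inBall hr hrE hR0 hR (fun k => (hU k).1) fun k => hUsub k 1
  obtain ⟨f, hf, hlim⟩ := measurable_limit_of_tendsto_metrizable_ae
    (fun k => (hU k).1.aemeasurable) (hC.mono fun z hz => cauchySeq_tendsto_of_complete hz)
  let u : ℝ → Rn n → ℝ := Function.curry f
  have hu : Measurable (Function.uncurry u) := hf
  have hdist : ∀ k, InBall E (R / 4 ^ k) (timeSup n (u - U k)) := by
    intro k
    refine (InBall.liminf hE (hd0 k hR0) (hUsub k)).mono hE1 (measurable_timeSup (hu.sub (hU k).1))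
      (timeSup_le_of_ae ?_) le_rfl
    have h3 : ∀ᵐ z ∂(volume.restrict (Ioi (0:ℝ))).prod (volume : Measure (Rn n)), ∀ j,
        ENNReal.ofReal |(U (k + j) - U k) z.1 z.2| ≤ timeSup n (U (k + j) - U k) z.2 :=
      ae_all_iff.2 fun j => ae_prod_le_timeSup ((hU (k + j)).1.sub (hU k).1)
    filter_upwards [h3, hlim] with z hz hl
    have h4 : Tendsto (fun j => ENNReal.ofReal |(U (k + j) - U k) z.1 z.2|) atTop
        (𝓝 (ENNReal.ofReal |(u - U k) z.1 z.2|)) := by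
      refine ENNReal.tendsto_ofReal (Tendsto.abs (Tendsto.sub_const ?_ _))
      have h5 := (tendsto_add_atTop_iff_nat k).2 hl
      exact h5.congr fun j => by rw [add_comm]; rfl
    rw [← h4.liminf_eq]
    exact liminf_le_liminf (Eventually.of_forall hz)
  have huR : InBall E R (timeSup n u) := by simpa [U] using hdist 0
  have huΦ : ∀ᵐ z ∂(volume.restrict (Ioi (0:ℝ))).prod (volume : Measure (Rn n)),
      u z.1 z.2 = a₁ z.1 z.2 + a₂ z.1 z.2 - Ψ u z.1 z.2 := by
    refine ae_eq_of_timeSup_sub_eq_zero (v := Φ u) hu (hΦm u hu)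
      (InBall.ae_eq_zero hr hrE h9R fun k => ?_)
    have h3 : (9 * R) / 4 ^ k / 9 = R / 4 ^ k := by
      rw [div_eq_mul_inv, div_eq_mul_inv, mul_right_comm, ← div_eq_mul_inv (9 * R), h9,
        div_eq_mul_inv]
    have b₁ := hdist (k + 1)
    have b₂ := hΨ _ _ hu (hU k).1 huR (hU k).2 _ (hd0 k hR0) (hdt k hR) (hdist k)
    have hle : R / 4 ^ (k + 1) ≤ R / 4 ^ k :=
      ENNReal.div_le_div_left (pow_le_pow_right₀ (by norm_num) (Nat.le_succ k)) _
    refine InBall.timeSup_add_three hE (measurable_uncurry_sub hu (hΦm u hu))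
      (measurable_uncurry_sub hu (hU (k + 1)).1)
      (measurable_uncurry_sub (hΨm u hu) (hΨm _ (hU k).1)) hm0 (ae_of_all _ fun z => ?_)
      (b₁.mono hE1 b₁.1 (ae_of_all _ fun _ => le_rfl) (by rwa [h3]))
      (b₂.mono hE1 b₂.1 (ae_of_all _ fun _ => le_rfl) (by rw [h3]; exact (hd4 R k).trans hle)) b0
    have h4 : (u - Φ u) z.1 z.2 = (u - U (k + 1)) z.1 z.2 + (Ψ u - Ψ (U k)) z.1 z.2 := by
      rw [hUs]; simp only [Φ, Pi.sub_apply, Pi.add_apply]; ring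
    rw [h4]
    exact (abs_add_le _ _).trans (le_add_of_nonneg_right (abs_nonneg _))
  refine ⟨u, hu, huR, huΦ, fun v hv hvR hvΦ => ?_⟩
  have hvu : ∀ k : ℕ, InBall E (9 * R / 4 ^ k) (timeSup n (v - u)) := by
    intro k
    induction k with
    | zero =>
      rw [pow_zero, div_one]
      refine InBall.timeSup_add_three hE (measurable_uncurry_sub hv hu) hv hu hm0
        (ae_of_all _ fun z => ?_) (by rwa [h9]) (by rwa [h9]) b0
      exact (abs_sub _ _).trans (le_add_of_nonneg_right (abs_nonneg _))
    | succ k ih =>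
      have h3 := hΨ _ _ hv hu hvR huR _ (hd0 k h9R0) (hdt k h9R) ih
      refine h3.mono hE1 (measurable_timeSup (measurable_uncurry_sub hv hu))
        (timeSup_le_of_ae ?_) (hd4 _ k)
      filter_upwards [huΦ, hvΦ,
        ae_prod_le_timeSup (measurable_uncurry_sub (hΨm v hv) (hΨm u hu))] with z hz hz' hz''
      refine le_trans (le_of_eq ?_) hz''
      simp only [Pi.sub_apply]
      rw [hz, hz', ← abs_neg]
      congr 2; ring
  exact ae_eq_of_timeSup_sub_eq_zero hv hu (InBall.ae_eq_zero hr hrE h9R hvu)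

end FixedPoint

section Mild
open Filter Topology
variable {n b : ℕ}

/-- The nonlinearity `|u|^b u`. -/
def powNl (b : ℕ) (u : ℝ → Rn n → ℝ) (t : ℝ) (x : Rn n) : ℝ := |u t x| ^ b * u t x

lemma measurable_powNl {u : ℝ → Rn n → ℝ} (hu : Measurable (Function.uncurry u)) :
    Measurable (Function.uncurry (powNl b u)) := (hu.norm.pow_const b).mul hu

lemma abs_pow_mul_sub_le (b : ℕ) (x y : ℝ) :
    |(|x| ^ b * x - |y| ^ b * y)| ≤ (b + 1) * (|x| ^ b + |y| ^ b) * |x - y| := by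
  have hpow : |(|x| ^ b - |y| ^ b)| * |y| ≤ b * (|x| ^ b + |y| ^ b) * |x - y| := by
    cases b with
    | zero => simp
    | succ k =>
      set M := max |x| |y|
      have hM : M ^ (k + 1) ≤ |x| ^ (k + 1) + |y| ^ (k + 1) := by
        have hx : 0 ≤ |x| ^ (k + 1) := by positivity
        have hy : 0 ≤ |y| ^ (k + 1) := by positivity
        rcases max_choice |x| |y| with h | h <;> simp only [M, h] <;> linarith
      have h1 := abs_pow_sub_pow_le |x| |y| (k + 1)
      rw [abs_abs, abs_abs, Nat.add_sub_cancel] at h1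
      calc _ ≤ (|(|x| - |y|)| * ((k + 1 : ℕ) : ℝ) * M ^ k) * M := by
            gcongr
            exact le_max_right _ _
        _ = ((k + 1 : ℕ) : ℝ) * M ^ (k + 1) * |(|x| - |y|)| := by ring
        _ ≤ _ := by
            exact mul_le_mul (by gcongr) (abs_abs_sub_abs_le x y) (abs_nonneg _) (by positivity)
  have e : |x| ^ b * x - |y| ^ b * y = |x| ^ b * (x - y) + (|x| ^ b - |y| ^ b) * y := by ring
  rw [e]
  refine (abs_add_le _ _).trans ?_
  rw [abs_mul, abs_mul, abs_of_nonneg (by positivity : (0:ℝ) ≤ |x| ^ b)]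
  have : 0 ≤ |y| ^ b * |x - y| := by positivity
  nlinarith

lemma timeSup_powNl_sub_le (u v : ℝ → Rn n → ℝ) (x : Rn n) :
    timeSup n (powNl b u - powNl b v) x ≤
      ((b:ℝ≥0∞) + 1) * (timeSup n u x ^ b + timeSup n v x ^ b) * timeSup n (u - v) x := by
  rw [timeSup_le_iff]
  filter_upwards [ae_le_timeSup u x, ae_le_timeSup v x, ae_le_timeSup (u - v) x] with t h₁ h₂ h₃
  calc _ ≤ ENNReal.ofReal ((b + 1) * (|u t x| ^ b + |v t x| ^ b) * |(u - v) t x|) :=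
        ENNReal.ofReal_le_ofReal (abs_pow_mul_sub_le b _ _)
    _ = ((b:ℝ≥0∞) + 1) * (ENNReal.ofReal |u t x| ^ b + ENNReal.ofReal |v t x| ^ b) *
          ENNReal.ofReal |(u - v) t x| := by
        rw [ENNReal.ofReal_mul (by positivity), ENNReal.ofReal_mul (by positivity),
          ENNReal.ofReal_add (by positivity) (by positivity),
          ENNReal.ofReal_add (by positivity) (by positivity),
          ENNReal.ofReal_pow (abs_nonneg _), ENNReal.ofReal_pow (abs_nonneg _)]
        simp
    _ ≤ _ := by gcongr

lemma powNl_zero : powNl b (0 : ℝ → Rn n → ℝ) = 0 := by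
  funext t x
  simp [powNl]

/-- The free evolution of `u₀` under the kernel `G`. -/
def freeEvol (G : ℝ × Rn n → ℝ) (u₀ : Rn n → ℝ) (t : ℝ) (x : Rn n) : ℝ :=
  ∫ y, G (t, x - y) * u₀ y

variable {G : ℝ × Rn n → ℝ} {H : Fin n → ℝ × Rn n → ℝ} {C : ℝ≥0∞} {σ : ℝ} {u₀ : Rn n → ℝ}

lemma measurable_freeEvol (hG : Measurable G) (hu₀ : Measurable u₀) :
    Measurable (Function.uncurry (freeEvol G u₀)) := by
  have h1 : Measurable fun q : (ℝ × Rn n) × Rn n => G (q.1.1, q.1.2 - q.2) * u₀ q.2 :=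
    (hG.comp (by fun_prop)).mul (hu₀.comp measurable_snd)
  exact (h1.stronglyMeasurable.integral_prod_right' (ν := (volume : Measure (Rn n)))).measurable

lemma lintegral_freeEvol_le
    (hGC : ∀ f : Rn n → ℝ≥0∞, Measurable f → ∀ t > 0, ∀ x,
      ∫⁻ y, ENNReal.ofReal |G (t, x - y)| * f y ≤ C * hlMax f x)
    (hu₀ : Measurable u₀) {t : ℝ} (ht : 0 < t) (x : Rn n) :
    ∫⁻ y, ‖G (t, x - y) * u₀ y‖ₑ ≤ C * hlMax (fun y => ENNReal.ofReal |u₀ y|) x := by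
  refine le_trans (le_of_eq (lintegral_congr fun y => ?_)) (hGC _ hu₀.norm.ennreal_ofReal t ht x)
  rw [enorm_mul, Real.enorm_eq_ofReal_abs, Real.enorm_eq_ofReal_abs, Real.norm_eq_abs]

lemma timeSup_freeEvol_le
    (hGC : ∀ f : Rn n → ℝ≥0∞, Measurable f → ∀ t > 0, ∀ x,
      ∫⁻ y, ENNReal.ofReal |G (t, x - y)| * f y ≤ C * hlMax f x)
    (hu₀ : Measurable u₀) (x : Rn n) :
    timeSup n (freeEvol G u₀) x ≤ C * hlMax (fun y => ENNReal.ofReal |u₀ y|) x := by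
  rw [timeSup_le_iff]
  filter_upwards [ae_restrict_mem measurableSet_Ioi] with t ht
  rw [← Real.enorm_eq_ofReal_abs]
  exact (enorm_integral_le_lintegral_enorm _).trans (lintegral_freeEvol_le hGC hu₀ ht x)

variable {α : ℝ}

lemma dKer_ae_eq (hHd : ∀ t > 0, ∀ j x, dKer n α t j x = H j (t, x)) (j : Fin n) (t : ℝ)
    (x : Rn n) (w : ℝ → Rn n → ℝ) :
    (fun z : ℝ × Rn n => dKer n α (t - z.1) j (x - z.2) * w z.1 z.2)
      =ᵐ[volume.restrict (Ioc 0 t ×ˢ univ)]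
      fun z => H j (t - z.1, x - z.2) * w z.1 z.2 := by
  have h1 : ∀ᵐ z : ℝ × Rn n, z.1 ≠ t := by
    rw [Measure.volume_eq_prod]
    exact Measure.quasiMeasurePreserving_fst.ae (Measure.ae_ne volume t)
  filter_upwards [ae_restrict_of_ae h1,
    ae_restrict_mem (measurableSet_Ioc.prod MeasurableSet.univ)] with z hz hz'
  rw [hHd _ (sub_pos.2 (lt_of_le_of_ne hz'.1.2 hz))]

lemma sum_integral_conv_eq_duhamel (hHd : ∀ t > 0, ∀ j x, dKer n α t j x = H j (t, x)) {t : ℝ}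
    {x : Rn n} {w : ℝ → Rn n → ℝ}
    (hI : ∀ j, IntegrableOn (fun z : ℝ × Rn n => dKer n α (t - z.1) j (x - z.2) * w z.1 z.2)
      (Ioc 0 t ×ˢ univ) (volume.prod volume)) :
    ∑ j, ∫ s in Ioc 0 t, conv n (dKer n α (t - s) j) (w s) x = duhamel H w t x := by
  refine Finset.sum_congr rfl fun j _ => ?_
  rw [← integral_congr_ae (dKer_ae_eq hHd j t x w), Measure.volume_eq_prod,
    setIntegral_prod _ (hI j)]
  simp only [conv, setIntegral_univ]

lemma isMildSol1_iff (hn : 1 ≤ n) (hGd : ∀ t > 0, ∀ x, gKer n α t x = G (t, x))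
    (hHd : ∀ t > 0, ∀ j x, dKer n α t j x = H j (t, x)) (hG : Measurable G)
    (hH : ∀ j, Measurable (H j))
    (hGC : ∀ f : Rn n → ℝ≥0∞, Measurable f → ∀ t > 0, ∀ x,
      ∫⁻ y, ENNReal.ofReal |G (t, x - y)| * f y ≤ C * hlMax f x)
    (hHC : ∀ j, ∀ z ≠ 0, ∫⁻ t in Ioi 0, ENNReal.ofReal |H j (t, z)| ≤
      C * ENNReal.ofReal (‖z‖ ^ (σ - n))) (hC : C ≠ ∞) {F u : ℝ → Rn n → ℝ}
    (hu₀ : Measurable u₀) (hF : Measurable (Function.uncurry F))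
    (hu : Measurable (Function.uncurry u))
    (fu₀ : ∀ᵐ x, hlMax (fun y => ENNReal.ofReal |u₀ y|) x < ∞)
    (fF : ∀ᵐ x, rieszPot σ (timeSup n F) x < ∞)
    (fu : ∀ᵐ x, rieszPot σ (timeSup n (powNl b u)) x < ∞) :
    IsMildSol1 n α b (Ioi 0) F u₀ u ↔
      ∀ᵐ z ∂(volume.restrict (Ioi (0:ℝ))).prod (volume : Measure (Rn n)),
        u z.1 z.2 = freeEvol G u₀ z.1 z.2 + duhamel H F z.1 z.2
          - duhamel H (powNl b u) z.1 z.2 := by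
  have hpos : ∀ᵐ z ∂(volume.restrict (Ioi (0:ℝ))).prod (volume : Measure (Rn n)), 0 < z.1 :=
    Measure.quasiMeasurePreserving_fst.ae (ae_restrict_mem measurableSet_Ioi)
  refine eventually_congr ?_
  filter_upwards [hpos, ae_prod_of_ae_snd fu₀, ae_prod_of_ae_snd fF, ae_prod_of_ae_snd fu]
    with z hz h₀ h₁ h₂
  have i₀ : Integrable fun y => gKer n α z.1 (z.2 - y) * u₀ y := by
    simp_rw [hGd _ hz]
    refine ⟨((hG.comp (by fun_prop)).mul hu₀).aestronglyMeasurable, ?_⟩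
    exact (lintegral_freeEvol_le hGC hu₀ hz z.2).trans_lt (ENNReal.mul_lt_top hC.lt_top h₀)
  have i₁ : ∀ {w : ℝ → Rn n → ℝ}, Measurable (Function.uncurry w) →
      rieszPot σ (timeSup n w) z.2 < ∞ → ∀ j, IntegrableOn
        (fun q : ℝ × Rn n => dKer n α (z.1 - q.1) j (z.2 - q.2) * w q.1 q.2)
        (Ioc 0 z.1 ×ˢ univ) (volume.prod volume) := fun hw hfw j =>
    (integrable_congr (dKer_ae_eq hHd j z.1 z.2 _)).2
      (integrableOn_duhamel hn hH hHC hC hw j z.1 hfw)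
  have e₀ : conv n (gKer n α z.1) u₀ z.2 = freeEvol G u₀ z.1 z.2 := by
    simp only [conv, freeEvol, hGd _ hz]
  have j₁ := i₁ hF h₁
  have j₂ := i₁ (measurable_powNl (b := b) hu) h₂
  rw [e₀, sum_integral_conv_eq_duhamel hHd j₁, ← sum_integral_conv_eq_duhamel hHd j₂]
  exact ⟨fun h => h.2.2.2, fun h => ⟨i₀, j₁, j₂, h⟩⟩

end Mild

section WellPosed
open Filter Topology
variable {n b : ℕ} {E : Set (Rn n → ℝ)} {R M C δ : ℝ≥0∞} {f g : Rn n → ℝ≥0∞}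

lemma InBall.const_mul (h : InBall E R f) (hE : ∀ e ∈ E, ∀ x, 1 ≤ e x) (hg : Measurable g)
    {c : ℝ≥0∞} (hc0 : c ≠ 0) (hc : c ≠ ∞) (hgf : ∀ᵐ x, g x ≤ c * f x) : InBall E (c * R) g := by
  refine ⟨hg, fun e he => (lintegral_mono_ae ?_).trans (h.2 e he)⟩
  filter_upwards [hgf] with x hx
  refine ENNReal.rpow_le_rpow ?_ (by linarith [hE e he x])
  rw [← ENNReal.mul_div_mul_left (f x) R hc0 hc]
  exact ENNReal.div_le_div_right hx _

lemma inBall_pair {e₁ e₂ : Rn n → ℝ} {C₁ C₂ : ℝ≥0∞} (h₁ : ∀ x, 0 ≤ e₁ x) (h₂ : ∀ x, 0 ≤ e₂ x)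
    (hf : Measurable f) (hf₁ : ∫⁻ x, (f x / (C₁ * δ)) ^ e₁ x ≤ 1)
    (hf₂ : ∫⁻ x, (f x / (C₂ * δ)) ^ e₂ x ≤ 1) : InBall {e₁, e₂} (max C₁ C₂ * δ) f := by
  refine ⟨hf, ?_⟩
  rintro e (rfl | rfl)
  · refine (lintegral_mono fun x =>
      ENNReal.rpow_le_rpow (ENNReal.div_le_div_left ?_ _) (h₁ x)).trans hf₁
    gcongr; exact le_max_left _ _
  · refine (lintegral_mono fun x =>
      ENNReal.rpow_le_rpow (ENNReal.div_le_div_left ?_ _) (h₂ x)).trans hf₂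
    gcongr; exact le_max_right _ _

lemma exists_inBall_hlMax {e₁ e₂ : Rn n → ℝ} {lo₁ hi₁ A₁ κ₁ lo₂ hi₂ A₂ κ₂ : ℝ}
    (h₁ : VarExp n e₁ lo₁ hi₁ A₁ κ₁) (h₂ : VarExp n e₂ lo₂ hi₂ A₂ κ₂) :
    ∃ M : ℝ≥0∞, M ≠ 0 ∧ M ≠ ∞ ∧ ∀ (δ : ℝ≥0∞) (f : Rn n → ℝ≥0∞),
      InBall {e₁, e₂} δ f → InBall {e₁, e₂} (M * δ) (hlMax f) := by
  obtain ⟨C₁, h11, h1t, H₁⟩ := h₁.lintegral_hlMax_div_le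
  obtain ⟨C₂, -, h2t, H₂⟩ := h₂.lintegral_hlMax_div_le
  refine ⟨max C₁ C₂, (zero_lt_one.trans_le (h11.trans (le_max_left _ _))).ne',
    (max_lt h1t.lt_top h2t.lt_top).ne, fun δ f hf => ?_⟩
  exact inBall_pair (fun x => by linarith [h₁.one_lt, h₁.lo_le x])
    (fun x => by linarith [h₂.one_lt, h₂.lo_le x]) (measurable_hlMax hf.1)
    (H₁ δ f hf.1 (hf.2 _ (Or.inl rfl))) (H₂ δ f hf.1 (hf.2 _ (Or.inr rfl)))

lemma exists_inBall_rieszPot (hn : 1 ≤ n) {σ q c : ℝ} (hσ : 0 < σ) (hq : 1 < q)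
    (hσq : σ * q < n) (hc : 0 < c) (hcq : 1 - σ * q / n = 1 / c) {p : Rn n → ℝ} {lo hi A κ : ℝ}
    (hs : VarExp n (fun x => p x / c) lo hi A κ) :
    ∃ M : ℝ≥0∞, M ≠ 0 ∧ M ≠ ∞ ∧ ∀ (δ : ℝ≥0∞), δ ≠ 0 → δ ≠ ∞ → ∀ (W : Rn n → ℝ≥0∞),
      Measurable W →
      (∀ e ∈ ({p, fun _ => c * q} : Set (Rn n → ℝ)), ∫⁻ x, (W x / δ) ^ (e x / c) ≤ 1) →
      InBall {p, fun _ => c * q} (M * δ) (rieszPot σ W) := by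
  obtain ⟨C₁, h10, h1t, H₁⟩ := hs.rieszPot_modular hn hσ hq hσq hc hcq
  obtain ⟨C₂, -, h2t, H₂⟩ := (varExp_const n hq).rieszPot_modular hn hσ hq hσq hc hcq
  refine ⟨max C₁ C₂, ((pos_iff_ne_zero.2 h10).trans_le (le_max_left _ _)).ne',
    (max_lt h1t.lt_top h2t.lt_top).ne, fun δ hδ0 hδ W hW h => ?_⟩
  have hp : ∫⁻ x, (W x / δ) ^ (p x / c) ≤ 1 := h _ (Or.inl rfl)
  have hr : ∫⁻ x, (W x / δ) ^ q ≤ 1 := by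
    have := h _ (Or.inr rfl)
    rwa [mul_div_cancel_left₀ _ hc.ne'] at this
  have hpp : ∀ x, 0 ≤ p x := fun x => by
    have h1 := hs.one_lt.trans_le (hs.lo_le x)
    have h2 : p x = c * (p x / c) := by field_simp
    rw [h2]; positivity
  refine inBall_pair hpp (fun _ => by positivity) (measurable_rieszPot σ hW) ?_
    (H₂ δ hδ0 hδ W hW hr hr)
  have := H₁ δ hδ0 hδ W hW hr hp
  simp_rw [mul_div_cancel₀ _ hc.ne'] at this
  exact this

variable {H : Fin n → ℝ × Rn n → ℝ} {σ : ℝ}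

lemma inBall_timeSup_duhamel (hn : 1 ≤ n) (hE : ∀ e ∈ E, ∀ x, 1 ≤ e x)
    (hH : ∀ j, Measurable (H j))
    (hHC : ∀ j, ∀ z ≠ 0, ∫⁻ t in Ioi 0, ENNReal.ofReal |H j (t, z)| ≤
      C * ENNReal.ofReal (‖z‖ ^ (σ - n))) (hC : C ≠ ∞) {w : ℝ → Rn n → ℝ}
    (hw : Measurable (Function.uncurry w)) (h : InBall E δ (rieszPot σ (timeSup n w))) :
    InBall E ((n * C + 1) * δ) (timeSup n (duhamel H w)) := by
  refine h.const_mul hE (measurable_timeSup (measurable_duhamel hH hw)) (by simp) (by finiteness)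
    (ae_of_all _ fun x => timeSup_le_iff.2 (ae_of_all _ fun t => ?_))
  exact (ofReal_abs_duhamel_le hn hH hHC hC hw t x).trans (mul_le_mul_left le_self_add _)

lemma inBall_rieszPot_powNl_sub (hE : ∀ e ∈ E, Measurable e ∧ ∀ x, (b:ℝ) + 1 ≤ e x)
    (hM : ∀ (δ : ℝ≥0∞), δ ≠ 0 → δ ≠ ∞ → ∀ (W : Rn n → ℝ≥0∞), Measurable W →
      (∀ e ∈ E, ∫⁻ x, (W x / δ) ^ (e x / ((b:ℝ) + 1)) ≤ 1) → InBall E (M * δ) (rieszPot σ W))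
    (hR0 : R ≠ 0) (hR : R ≠ ∞) {u v : ℝ → Rn n → ℝ} (hu : Measurable (Function.uncurry u))
    (hv : Measurable (Function.uncurry v)) (hu' : InBall E R (timeSup n u))
    (hv' : InBall E R (timeSup n v)) {τ : ℝ≥0∞} (hτ0 : τ ≠ 0) (hτ : τ ≠ ∞)
    (h : InBall E τ (timeSup n (u - v))) :
    InBall E (M * (6 * ((b:ℝ≥0∞) + 1) * R ^ b * τ))
      (rieszPot σ (timeSup n (powNl b u - powNl b v))) := by
  refine hM _ (by simp [hR0, hτ0]) (by finiteness) _
    (measurable_timeSup (measurable_uncurry_sub (measurable_powNl hu) (measurable_powNl hv))) ?_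
  exact InBall.lintegral_product_le hE hR0 hR hτ0 hτ hu' hv' h
    (ae_of_all _ fun x => timeSup_powNl_sub_le u v x)

end WellPosed

/-- Contraction of the nonlinear Duhamel term in a small ball, together with the finiteness of the
potentials involved. -/
lemma exists_ball_contraction {n b : ℕ} (hn : 1 ≤ n) (hb : 1 ≤ b) {E : Set (Rn n → ℝ)}
    (hE : ∀ e ∈ E, Measurable e ∧ ∀ x, (b:ℝ) + 1 ≤ e x) {r σ : ℝ} (hr : 1 ≤ r)
    (hrE : (fun _ => r) ∈ E) {H : Fin n → ℝ × Rn n → ℝ} {C M : ℝ≥0∞}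
    (hH : ∀ j, Measurable (H j))
    (hHC : ∀ j, ∀ z ≠ 0, ∫⁻ t in Ioi 0, ENNReal.ofReal |H j (t, z)| ≤
      C * ENNReal.ofReal (‖z‖ ^ (σ - n))) (hC : C ≠ ∞) (hM0 : M ≠ 0) (hMt : M ≠ ∞)
    (hM : ∀ (δ : ℝ≥0∞), δ ≠ 0 → δ ≠ ∞ → ∀ (W : Rn n → ℝ≥0∞), Measurable W →
      (∀ e ∈ E, ∫⁻ x, (W x / δ) ^ (e x / ((b:ℝ) + 1)) ≤ 1) → InBall E (M * δ) (rieszPot σ W)) :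
    ∃ R : ℝ≥0∞, R ≠ 0 ∧ R ≠ ∞ ∧
      (∀ u, Measurable (Function.uncurry u) → InBall E R (timeSup n u) →
        ∀ᵐ x, rieszPot σ (timeSup n (powNl b u)) x < ∞) ∧
      ∀ u v, Measurable (Function.uncurry u) → Measurable (Function.uncurry v) →
        InBall E R (timeSup n u) → InBall E R (timeSup n v) → ∀ τ : ℝ≥0∞, τ ≠ 0 → τ ≠ ∞ →
        InBall E τ (timeSup n (u - v)) →
        InBall E (τ / 9) (timeSup n (duhamel H (powNl b u) - duhamel H (powNl b v))) := by
  have hE1 : ∀ e ∈ E, ∀ x, 1 ≤ e x := fun e he x =>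
    le_trans (by linarith [(Nat.cast_nonneg b : (0:ℝ) ≤ b)]) ((hE e he).2 x)
  have hm0 : Measurable (Function.uncurry (0 : ℝ → Rn n → ℝ)) := measurable_const
  set K : ℝ≥0∞ := (n * C + 1) * (M * (6 * ((b:ℝ≥0∞) + 1)))
  have hK0 : K ≠ 0 := by simp [K, hM0]
  have hKt : K ≠ ∞ := by finiteness
  set R : ℝ≥0∞ := min 1 (K * 9)⁻¹
  have hR0 : R ≠ 0 := (lt_min one_pos (ENNReal.inv_pos.2 (by finiteness))).ne'
  have hR1 : R ≤ 1 := min_le_left _ _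
  have hRt : R ≠ ∞ := ne_top_of_le_ne_top ENNReal.one_ne_top hR1
  have hKR : K * R ^ b ≤ 9⁻¹ := by
    calc K * R ^ b ≤ K * R := by gcongr; exact pow_le_of_le_one zero_le hR1 (by omega)
      _ ≤ K * (K * 9)⁻¹ := by gcongr; exact min_le_right _ _
      _ = 9⁻¹ := by
        rw [ENNReal.mul_inv (Or.inl hK0) (Or.inl hKt), ← mul_assoc, ENNReal.mul_inv_cancel hK0 hKt,
          one_mul]
  have hfin : ∀ u, Measurable (Function.uncurry u) → InBall E R (timeSup n u) →
      ∀ᵐ x, rieszPot σ (timeSup n (powNl b u)) x < ∞ := by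
    intro u hu hu'
    have h0 : InBall E R (timeSup n (0 : ℝ → Rn n → ℝ)) := by
      rw [timeSup_zero]; exact InBall.zero hE1
    have h1 := inBall_rieszPot_powNl_sub hE hM hR0 hRt hu hm0 hu' h0 hR0 hRt (by rwa [sub_zero])
    rw [powNl_zero, sub_zero] at h1
    exact h1.ae_lt_top hr hrE (by finiteness)
  refine ⟨R, hR0, hRt, hfin, fun u v hu hv hu' hv' τ hτ0 hτ h => ?_⟩
  have hpu := measurable_powNl (b := b) hu
  have hpv := measurable_powNl (b := b) hv
  have h1 := inBall_timeSup_duhamel hn hE1 hH hHC hC (measurable_uncurry_sub hpu hpv)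
    (inBall_rieszPot_powNl_sub hE hM hR0 hRt hu hv hu' hv' hτ0 hτ h)
  refine h1.mono hE1 (measurable_timeSup
    (measurable_uncurry_sub (measurable_duhamel hH hpu) (measurable_duhamel hH hpv))) ?_ ?_
  · filter_upwards [hfin u hu hu', hfin v hv hv'] with x hx hx'
    refine timeSup_le_iff.2 ((ae_le_timeSup _ x).mono fun t ht => le_trans (le_of_eq ?_) ht)
    congr 2
    exact duhamel_sub hn hH hHC hC hpu hpv t hx hx'
  · calc _ = K * R ^ b * τ := by simp only [K]; ring
      _ ≤ 9⁻¹ * τ := by gcongr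
      _ = τ / 9 := by rw [mul_comm, div_eq_mul_inv]

/-- Global well-posedness (γ = 1) for small data in mixed variable Lebesgue spaces. -/
theorem stmt1 (n b : ℕ) (hn : 1 ≤ n) (hb : 1 ≤ b) (α : ℝ) (hα : 1/2 < α ∧ α ≤ 1)
    (h2α : 2 * α - 1 < n) (hnb : (2 * α - 1) * ((b:ℝ) + 1) < (n:ℝ) * b)
    (p : Rn n → ℝ) (hplog : IsPLog univ p)
    (hpminus : ∃ pm : ℝ, (b:ℝ) + 1 < pm ∧ ∀ᵐ x ∂(volume : Measure (Rn n)), pm ≤ p x)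
    (hpplus : ∃ P : ℝ, (∀ᵐ x ∂(volume : Measure (Rn n)), p x ≤ P) ∧
      (2 * α - 1) * P < (n:ℝ) * ((b:ℝ) + 1)) :
    ∃ ε > (0:ℝ), ∀ (u₀ : Rn n → ℝ) (F : ℝ → Rn n → ℝ),
      Measurable u₀ → Measurable (Function.uncurry F) →
      mixedNorm n p ((n:ℝ) * b / (2 * α - 1)) u₀
        + mixedN n (fun x => p x / ((b:ℝ) + 1)) ((n:ℝ) * b / (((b:ℝ) + 1) * (2 * α - 1))) F
        < ENNReal.ofReal ε →
      ∃ R > (0:ℝ), ∃ u : ℝ → Rn n → ℝ, Measurable (Function.uncurry u) ∧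
        mixedN n p ((n:ℝ) * b / (2 * α - 1)) u ≤ ENNReal.ofReal R ∧
        IsMildSol1 n α b (Ioi 0) F u₀ u ∧
        ∀ v : ℝ → Rn n → ℝ, Measurable (Function.uncurry v) →
          mixedN n p ((n:ℝ) * b / (2 * α - 1)) v ≤ ENNReal.ofReal R →
          IsMildSol1 n α b (Ioi 0) F u₀ v →
          ∀ᵐ tx : ℝ × Rn n ∂((volume.restrict (Ioi (0:ℝ))).prod volume),
            v tx.1 tx.2 = u tx.1 tx.2 := by
  obtain ⟨pm, hpm, hpm'⟩ := hpminus
  obtain ⟨P, hP, -⟩ := hpplus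
  have hσ : 0 < 2 * α - 1 := by linarith [hα.1]
  have hn0 : (0:ℝ) < n := by exact_mod_cast hn
  have hb0 : (0:ℝ) < b := by exact_mod_cast hb
  have hc : 0 < (b:ℝ) + 1 := by positivity
  have hr : (b:ℝ) + 1 ≤ n * b / (2 * α - 1) := by
    rw [le_div_iff₀ hσ]; linarith
  have hr1 : 1 ≤ (n:ℝ) * b / (2 * α - 1) := by linarith
  have hq : 1 < (n:ℝ) * b / ((b + 1) * (2 * α - 1)) := by
    rw [one_lt_div (by positivity)]; linarith
  have hσq : (2 * α - 1) * ((n:ℝ) * b / ((b + 1) * (2 * α - 1))) = n * (b / (b + 1)) := by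
    field_simp
  have hcqr : ((b:ℝ) + 1) * ((n:ℝ) * b / ((b + 1) * (2 * α - 1))) = n * b / (2 * α - 1) := by
    field_simp
  obtain ⟨A, κ, hp1⟩ := hplog.exists_varExp hn one_pos (by linarith) hpm' hP
  simp only [div_one] at hp1
  obtain ⟨A', κ', hp2⟩ := hplog.exists_varExp hn hc hpm hpm' hP
  obtain ⟨G, H, C, hC, hG, hH, hGd, hHd, hGC, hHC⟩ :=
    exists_kernel_bounds (n := n) hn (by linarith [hα.1]) hα.2
  obtain ⟨M₁, hM₁0, hM₁, hmax⟩ := exists_inBall_hlMax hp1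
    (varExp_const n (show 1 < (n:ℝ) * b / (2 * α - 1) by linarith))
  obtain ⟨M₂, hM₂0, hM₂, hriesz⟩ := exists_inBall_rieszPot hn hσ hq
    (by rw [hσq]; exact mul_lt_of_lt_one_right hn0 ((div_lt_one hc).2 (by linarith))) hc
    (by rw [hσq]; field_simp; ring) hp2
  rw [hcqr] at hriesz
  set r := (n:ℝ) * b / (2 * α - 1)
  set E : Set (Rn n → ℝ) := {p, fun _ => r}
  have hpE : p ∈ E := Or.inl rfl
  have hrE : (fun _ => r) ∈ E := Or.inr rfl
  have hE : ∀ e ∈ E, Measurable e ∧ ∀ x, (b:ℝ) + 1 ≤ e x := by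
    rintro e (rfl | rfl)
    · exact ⟨hp1.meas, fun x => hpm.le.trans (hp1.lo_le x)⟩
    · exact ⟨measurable_const, fun _ => hr⟩
  have hE1 : ∀ e ∈ E, Measurable e ∧ ∀ x, 1 ≤ e x := fun e he =>
    ⟨(hE e he).1, fun x => by linarith [(hE e he).2 x]⟩
  obtain ⟨R, hR0, hRt, hfin, hΨ⟩ :=
    exists_ball_contraction hn hb hE hr1 hrE hH hHC hC hM₂0 hM₂ hriesz
  have hRR : ENNReal.ofReal R.toReal = R := ENNReal.ofReal_toReal hRt
  set K : ℝ≥0∞ := (C + 1) * M₁ + (n * C + 1) * M₂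
  have hK0 : K ≠ 0 := by simp [K, hM₁0]
  have hKt : K ≠ ∞ := by finiteness
  set ε : ℝ≥0∞ := R / 9 / K
  have hε0 : ε ≠ 0 := ENNReal.div_ne_zero.2 ⟨ENNReal.div_ne_zero.2 ⟨hR0, by finiteness⟩, hKt⟩
  have hεt : ε ≠ ∞ := ENNReal.div_ne_top (ENNReal.div_ne_top hRt (by norm_num)) hK0
  have hKε : K * ε = R / 9 := ENNReal.mul_div_cancel hK0 hKt
  have hball : ∀ {w : Rn n → ℝ≥0∞} {ρ : ℝ≥0∞}, Measurable w → ρ ≠ ∞ → luxNorm volume p w ≤ ρ →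
      luxNorm volume (fun _ => r) w ≤ ρ → InBall E ρ w := by
    intro w ρ hw hρ h₁ h₂
    refine ⟨hw, ?_⟩
    rintro e (rfl | rfl)
    · exact lintegral_div_rpow_le_one_of_luxNorm_le hp1.meas
        (fun x => one_pos.trans_le ((hE1 _ hpE).2 x)) hw hρ h₁
    · exact lintegral_div_rpow_le_one_of_luxNorm_le measurable_const
        (fun _ => by linarith) hw hρ h₂
  refine ⟨ε.toReal, ENNReal.toReal_pos hε0 hεt, fun u₀ F hu₀ hF hsmall => ?_⟩
  rw [ENNReal.ofReal_toReal hεt] at hsmall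
  have hsu := le_self_add.trans hsmall.le
  have hsF := le_add_self.trans hsmall.le
  have bu₀ : InBall E ε (fun x => ENNReal.ofReal |u₀ x|) :=
    hball hu₀.norm.ennreal_ofReal hεt ((le_max_left _ _).trans hsu) ((le_max_right _ _).trans hsu)
  have bmax := hmax _ _ bu₀
  have bF : InBall E (M₂ * ε) (rieszPot (2 * α - 1) (timeSup n F)) := by
    refine hriesz ε hε0 hεt _ (measurable_timeSup hF) ?_
    rintro e (rfl | rfl)
    · exact lintegral_div_rpow_le_one_of_luxNorm_le (hp1.meas.div_const _)
        (fun x => div_pos (one_pos.trans_le ((hE1 _ hpE).2 x)) hc) (measurable_timeSup hF) hεt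
        ((le_max_left _ _).trans hsF)
    · refine lintegral_div_rpow_le_one_of_luxNorm_le measurable_const
        (fun _ => by positivity) (measurable_timeSup hF) hεt ?_
      rw [← hcqr, mul_div_cancel_left₀ _ hc.ne']
      exact (le_max_right _ _).trans hsF
  have b₁ : InBall E (R / 9) (timeSup n (freeEvol G u₀)) := by
    refine (bmax.const_mul (fun e he => (hE1 e he).2)
      (measurable_timeSup (measurable_freeEvol hG hu₀)) (c := C + 1) (by simp) (by finiteness)
      (ae_of_all _ fun x => (timeSup_freeEvol_le hGC hu₀ x).trans
        (mul_le_mul_left le_self_add _))).mono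
      (fun e he => (hE1 e he).2) (measurable_timeSup (measurable_freeEvol hG hu₀))
      (ae_of_all _ fun _ => le_rfl) ?_
    rw [← hKε, ← mul_assoc]
    gcongr
    exact le_self_add
  have b₂ : InBall E (R / 9) (timeSup n (duhamel H F)) := by
    refine (inBall_timeSup_duhamel hn (fun e he => (hE1 e he).2) hH hHC hC hF bF).mono
      (fun e he => (hE1 e he).2) (measurable_timeSup (measurable_duhamel hH hF))
      (ae_of_all _ fun _ => le_rfl) ?_
    rw [← hKε, ← mul_assoc]
    gcongr
    exact le_add_self
  have hiff : ∀ u, Measurable (Function.uncurry u) → InBall E R (timeSup n u) → _ := fun u hu hu' =>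
    isMildSol1_iff (b := b) hn hGd hHd hG hH hGC hHC hC hu₀ hF hu
      (bmax.ae_lt_top hr1 hrE (by finiteness)) (bF.ae_lt_top hr1 hrE (by finiteness))
      (hfin u hu hu')
  obtain ⟨u, hu, huR, hsol, huniq⟩ := exists_unique_fixedPoint hE1 hr1 hrE hR0 hRt
    (Ψ := fun u => duhamel H (powNl b u))
    (by rw [powNl_zero]; funext t x; simp [duhamel])
    (fun u hu => measurable_duhamel hH (measurable_powNl hu)) hΨ
    (measurable_freeEvol hG hu₀) (measurable_duhamel hH hF) b₁ b₂
  refine ⟨R.toReal, ENNReal.toReal_pos hR0 hRt, u, hu, ?_, (hiff u hu huR).2 hsol,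
    fun v hv hvR hvsol => ?_⟩
  · rw [hRR]
    exact max_le (luxNorm_le_of_lintegral (pos_iff_ne_zero.2 hR0) (huR.2 _ hpE))
      (luxNorm_le_of_lintegral (pos_iff_ne_zero.2 hR0) (huR.2 _ hrE))
  · rw [hRR] at hvR
    have bv : InBall E R (timeSup n v) := hball (measurable_timeSup hv) hRt
      ((le_max_left _ _).trans hvR) ((le_max_right _ _).trans hvR)
    exact huniq v hv bv ((hiff v hv bv).1 hvsol)
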